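/- arXiv:1001.0432 — 7 statements merged into one kernel-verified Lean document; each statement's English description precedes it below -/
import Mathlib

section
/- Let G be a finite subgroup of GL_n(ℂ), let S be its set of reflections, and let c : S → ℂ be a conjugation-invariant function. Then the Dunkl operators commute pairwise: for all a, b ∈ ℂ^n one has D_a ∘ D_b = D_b ∘ D_a as ℂ-linear endomorphisms of the field ℂ(x_1,…,x_n) of rational functions. -/
open MvPolynomial

noncomputable section

/-- The matrix underlying an element of a subgroup of `GL_n(ℂ)`. -/
def matOf {n : ℕ} {G : Subgroup (Matrix.GeneralLinearGroup (Fin n) ℂ)} (g : G) :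
    Matrix (Fin n) (Fin n) ℂ :=
  ((g : Matrix.GeneralLinearGroup (Fin n) ℂ) : Matrix (Fin n) (Fin n) ℂ)

/-- The linear polynomial `Σᵢ aᵢ xᵢ` with coefficient vector `a`. -/
def linForm {n : ℕ} (a : Fin n → ℂ) : MvPolynomial (Fin n) ℂ :=
  ∑ i, MvPolynomial.C (a i) * MvPolynomial.X i

/-- The Dunkl operator `D_a` on the field `K = ℂ(x₁,…,xₙ)`:
`D_a f = ∂_a f − Σ_{s ∈ S} (2 c_s α_s(a)/(1 − λ_s)) · (f − s·f)/α_s`,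
assembled from the derivations `pd i` extending `∂/∂xᵢ`, the action `ρ` of `G` on `K`, and
the reflection data `(S, c, λ, α)`. -/
def dunklOp (n : ℕ) (K : Type) [Field K] [Algebra ℂ K]
    [Algebra (MvPolynomial (Fin n) ℂ) K] [IsScalarTower ℂ (MvPolynomial (Fin n) ℂ) K]
    {G : Subgroup (Matrix.GeneralLinearGroup (Fin n) ℂ)}
    (S : Finset G) (c lam : G → ℂ) (α : G → Fin n → ℂ)
    (ρ : G →* (K ≃ₐ[ℂ] K)) (pd : Fin n → Derivation ℂ K K)
    (a : Fin n → ℂ) : K →ₗ[ℂ] K :=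
  (∑ i, a i • (pd i).toLinearMap)
    - ∑ s ∈ S, (2 * c s * (∑ i, α s i * a i) / (1 - lam s)) •
        ((LinearMap.mulLeft ℂ
            ((algebraMap (MvPolynomial (Fin n) ℂ) K (linForm (α s)))⁻¹)).comp
          (LinearMap.id - (ρ s).toLinearMap))

theorem dunkl_aux_rank {n : ℕ} (A B : Matrix (Fin n) (Fin n) ℂ) (hAB : A * B = 1)
    (hr : Matrix.rank (1 - A) = 1) (u : Fin n → ℂ) (l : ℂ) (hl : l ≠ 1) (hu : u ≠ 0)
    (he : Matrix.vecMul u B = l • u) :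
    ∃ w : Fin n → ℂ, B = 1 - Matrix.vecMulVec w u := by
  have hBA : B * A = 1 := mul_eq_one_comm.mp hAB
  have hr2 : Matrix.rank (Matrix.transpose ((1 : Matrix (Fin n) (Fin n) ℂ) - B)) = 1 := by
    rw [Matrix.rank_transpose]
    have : (1 : Matrix (Fin n) (Fin n) ℂ) - B = (1 - A) * (-B) := by
      rw [mul_neg, sub_mul, hAB]; simp
    have hB' : IsUnit (-B).det := by
      rw [← Matrix.isUnit_iff_isUnit_det]
      exact ⟨⟨-B, -A, by simp [hBA], by simp [hAB]⟩, rfl⟩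
    rw [this, Matrix.rank_mul_eq_left_of_isUnit_det _ _ hB', hr]
  have hmem : u ∈ LinearMap.range (Matrix.transpose (1 - B)).mulVecLin := by
    refine ⟨(1 - l)⁻¹ • u, ?_⟩
    have hl' : (1 - l) ≠ 0 := sub_ne_zero.mpr (Ne.symm hl)
    rw [Matrix.mulVecLin_apply, Matrix.mulVec_transpose, Matrix.smul_vecMul, Matrix.vecMul_sub,
      he, Matrix.vecMul_one]
    rw [show u - l • u = (1 - l) • u by rw [sub_smul, one_smul], smul_smul, inv_mul_cancel₀ hl',
      one_smul]
  have key : ∀ i, ∃ c : ℂ, c • u = Matrix.vecMul (Pi.single i 1) (1 - B) := by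
    intro i
    have h1 : Matrix.vecMul (Pi.single i 1) (1 - B) ∈ LinearMap.range (Matrix.transpose (1 - B)).mulVecLin :=
      ⟨Pi.single i 1, by rw [Matrix.mulVecLin_apply, Matrix.mulVec_transpose]⟩
    have hf : Module.finrank ℂ (LinearMap.range (Matrix.transpose (1 - B)).mulVecLin) = 1 := hr2
    obtain ⟨c, hc⟩ := exists_smul_eq_of_finrank_eq_one hf (x := ⟨u, hmem⟩)
      (by simpa [Subtype.ext_iff] using hu) ⟨_, h1⟩
    exact ⟨c, congrArg Subtype.val hc⟩
  choose w hw using key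
  refine ⟨w, ?_⟩
  have : Matrix.vecMulVec w u = 1 - B := by
    ext i j
    have := congrFun (hw i) j
    simpa [Matrix.vecMulVec_apply, Matrix.single_one_vecMul] using this
  rw [this]; abel

theorem dunkl_aux_apply (n : ℕ) (K : Type) [Field K] [Algebra ℂ K]
    [Algebra (MvPolynomial (Fin n) ℂ) K] [IsScalarTower ℂ (MvPolynomial (Fin n) ℂ) K]
    {G : Subgroup (Matrix.GeneralLinearGroup (Fin n) ℂ)}
    (S : Finset G) (c lam : G → ℂ) (α : G → Fin n → ℂ)
    (ρ : G →* (K ≃ₐ[ℂ] K)) (pd : Fin n → Derivation ℂ K K)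
    (a : Fin n → ℂ) (f : K) :
    dunklOp n K S c lam α ρ pd a f = (∑ i, a i • pd i f)
      - ∑ s ∈ S, (2 * c s * (α s ⬝ᵥ a) / (1 - lam s)) •
        ((algebraMap (MvPolynomial (Fin n) ℂ) K (linForm (α s)))⁻¹ * (f - ρ s f)) := by
  simp [dunklOp, LinearMap.sum_apply, dotProduct]

theorem dunkl_aux_linForm_ne {n : ℕ} (u : Fin n → ℂ) (hu : u ≠ 0) : linForm u ≠ 0 := by
  intro h
  apply hu
  ext i
  have := congrArg (MvPolynomial.coeff (Finsupp.single i 1)) h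
  simpa [linForm, MvPolynomial.coeff_sum, MvPolynomial.coeff_C_mul, MvPolynomial.coeff_X,
    Finsupp.single_left_inj] using this

theorem dunkl_aux_linForm_smul {n : ℕ} (m : ℂ) (u : Fin n → ℂ) :
    linForm (m • u) = MvPolynomial.C m * linForm u := by
  simp [linForm, Finset.mul_sum, mul_assoc]

theorem dunkl_aux_linForm_sub {n : ℕ} (u v : Fin n → ℂ) :
    linForm (u - v) = linForm u - linForm v := by
  simp [linForm, sub_mul]

theorem dunkl_aux_pderiv {n : ℕ} (u : Fin n → ℂ) (i : Fin n) :
    MvPolynomial.pderiv i (linForm u) = MvPolynomial.C (u i) := by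
  simp [linForm, MvPolynomial.pderiv_X, Pi.single_apply]

section
variable {n : ℕ} {K : Type} [Field K] [Algebra ℂ K]
    [Algebra (MvPolynomial (Fin n) ℂ) K] [IsScalarTower ℂ (MvPolynomial (Fin n) ℂ) K]
    {G : Subgroup (Matrix.GeneralLinearGroup (Fin n) ℂ)}

theorem dunkl_aux_algC (z : ℂ) :
    algebraMap (MvPolynomial (Fin n) ℂ) K (MvPolynomial.C z) = algebraMap ℂ K z := by
  rw [IsScalarTower.algebraMap_apply ℂ (MvPolynomial (Fin n) ℂ) K, MvPolynomial.algebraMap_eq]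

theorem dunkl_aux_rho (ρ : G →* (K ≃ₐ[ℂ] K))
    (hρ : ∀ (g : G) (i : Fin n),
      ρ g (algebraMap (MvPolynomial (Fin n) ℂ) K (MvPolynomial.X i)) =
        algebraMap (MvPolynomial (Fin n) ℂ) K
          (∑ j, MvPolynomial.C (matOf g⁻¹ i j) * MvPolynomial.X j)) (g : G) (u : Fin n → ℂ) :
    ρ g (algebraMap (MvPolynomial (Fin n) ℂ) K (linForm u)) =
      algebraMap (MvPolynomial (Fin n) ℂ) K (linForm (Matrix.vecMul u (matOf g⁻¹))) := by
  have h : linForm (Matrix.vecMul u (matOf g⁻¹)) =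
      ∑ i, MvPolynomial.C (u i) * (∑ j, MvPolynomial.C (matOf g⁻¹ i j) * MvPolynomial.X j) := by
    simp only [linForm, Matrix.vecMul, dotProduct, map_sum, map_mul, Finset.sum_mul,
      Finset.mul_sum]
    rw [Finset.sum_comm]
    simp [mul_assoc]
  rw [h, linForm, map_sum, map_sum, map_sum]
  refine Finset.sum_congr rfl fun i _ => ?_
  rw [map_mul, map_mul, map_mul, hρ, dunkl_aux_algC, AlgEquiv.commutes]

theorem dunkl_aux_pd [IsFractionRing (MvPolynomial (Fin n) ℂ) K] (ρ : G →* (K ≃ₐ[ℂ] K))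
    (hρ : ∀ (g : G) (i : Fin n),
      ρ g (algebraMap (MvPolynomial (Fin n) ℂ) K (MvPolynomial.X i)) =
        algebraMap (MvPolynomial (Fin n) ℂ) K
          (∑ j, MvPolynomial.C (matOf g⁻¹ i j) * MvPolynomial.X j))
    (pd : Fin n → Derivation ℂ K K)
    (hpd : ∀ (i : Fin n) (q : MvPolynomial (Fin n) ℂ),
      pd i (algebraMap (MvPolynomial (Fin n) ℂ) K q)
        = algebraMap (MvPolynomial (Fin n) ℂ) K (MvPolynomial.pderiv i q))
    (g : G) (a : Fin n → ℂ) (f : K) :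
    ρ g (∑ i, (Matrix.mulVec (matOf g⁻¹) a) i • pd i f) = ∑ i, a i • pd i (ρ g f) := by
  set a' := Matrix.mulVec (matOf g⁻¹) a with ha'
  let E : Derivation ℂ K K := ∑ i, a' i • pd i
  let F : Derivation ℂ K K := ∑ i, a i • pd i
  have hE : ∀ f, E f = ∑ i, a' i • pd i f := by
    intro f
    rw [← Derivation.coeFnAddMonoidHom_apply E, map_sum, Finset.sum_apply]; rfl
  have hF : ∀ f, F f = ∑ i, a i • pd i f := by
    intro f
    rw [← Derivation.coeFnAddMonoidHom_apply F, map_sum, Finset.sum_apply]; rfl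
  rw [← hE, ← hF]
  have hpoly : ∀ p : MvPolynomial (Fin n) ℂ,
      ρ g (E (algebraMap (MvPolynomial (Fin n) ℂ) K p)) = F (ρ g (algebraMap (MvPolynomial (Fin n) ℂ) K p)) := by
    intro p
    induction p using MvPolynomial.induction_on with
    | C z => rw [dunkl_aux_algC]; simp
    | add p q hp hq => simp only [map_add, hp, hq]
    | mul_X p i hp =>
      have hX : ρ g (E (algebraMap (MvPolynomial (Fin n) ℂ) K (MvPolynomial.X i))) =
          F (ρ g (algebraMap (MvPolynomial (Fin n) ℂ) K (MvPolynomial.X i))) := by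
        have h1 : (∑ j, MvPolynomial.C (matOf g⁻¹ i j) * (MvPolynomial.X j : MvPolynomial (Fin n) ℂ)) =
          linForm (fun j => matOf g⁻¹ i j) := rfl
        rw [hρ, hE, hF, h1]
        simp only [hpd, dunkl_aux_pderiv, dunkl_aux_algC]
        simp [MvPolynomial.pderiv_X, Pi.single_apply, ha', Matrix.mulVec, dotProduct,
          apply_ite, Algebra.smul_def, mul_comm]
      rw [map_mul, Derivation.leibniz, map_mul, Derivation.leibniz]
      simp only [smul_eq_mul, map_add, map_mul, hp, hX]
  obtain ⟨p, q, hq, rfl⟩ := IsFractionRing.div_surjective (A := MvPolynomial (Fin n) ℂ) f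
  rw [map_div₀ (ρ g), Derivation.leibniz_div, Derivation.leibniz_div]
  simp only [smul_eq_mul, map_mul, map_sub, map_pow, map_inv₀, hpoly]
end

/-- **Dunkl's theorem: Dunkl operators commute.**  Let `G ⊆ GL_n(ℂ)` be a finite subgroup,
`S` its set of reflections (elements with `rank(1 − s) = 1`), and for each `s ∈ S` let
`α_s ∈ (ℂⁿ)*` be a nonzero eigenvector of `s` (acting on covectors by `α ↦ α ∘ s⁻¹`) with
eigenvalue `λ_s ≠ 1`.  Let `c : S → ℂ` be conjugation-invariant.  Let `K = ℂ(x₁,…,xₙ)` be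
the field of rational functions (a fraction field of `ℂ[x₁,…,xₙ]`), with `G` acting by
`(g·f)(x) = f(g⁻¹x)` (the action `ρ` determined on the variables) and `pd i` the partial
derivatives (the derivations extending `pderiv i`).  Then for all `a, b ∈ ℂⁿ`,
`D_a ∘ D_b = D_b ∘ D_a` as `ℂ`-linear endomorphisms of `K`. -/
theorem dunkl_operators_commute (n : ℕ) (hn : 1 ≤ n)
    (K : Type) [Field K] [Algebra ℂ K]
    [Algebra (MvPolynomial (Fin n) ℂ) K] [IsScalarTower ℂ (MvPolynomial (Fin n) ℂ) K]
    [IsFractionRing (MvPolynomial (Fin n) ℂ) K]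
    (G : Subgroup (Matrix.GeneralLinearGroup (Fin n) ℂ)) [Finite G]
    (S : Finset G)
    (hS : ∀ s : G, s ∈ S ↔
      Matrix.rank ((1 : Matrix (Fin n) (Fin n) ℂ) - matOf s) = 1)
    (c lam : G → ℂ) (α : G → Fin n → ℂ)
    (hc : ∀ (g s : G), s ∈ S → c (g * s * g⁻¹) = c s)
    (hlam : ∀ s ∈ S, lam s ≠ 1)
    (hα : ∀ s ∈ S, α s ≠ 0)
    (heig : ∀ s ∈ S, Matrix.vecMul (α s) (matOf s⁻¹) = lam s • α s)
    (ρ : G →* (K ≃ₐ[ℂ] K))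
    (hρ : ∀ (g : G) (i : Fin n),
      ρ g (algebraMap (MvPolynomial (Fin n) ℂ) K (MvPolynomial.X i)) =
        algebraMap (MvPolynomial (Fin n) ℂ) K
          (∑ j, MvPolynomial.C (matOf g⁻¹ i j) * MvPolynomial.X j))
    (pd : Fin n → Derivation ℂ K K)
    (hpd : ∀ (i : Fin n) (q : MvPolynomial (Fin n) ℂ),
      pd i (algebraMap (MvPolynomial (Fin n) ℂ) K q)
        = algebraMap (MvPolynomial (Fin n) ℂ) K (MvPolynomial.pderiv i q)) :
    ∀ a b : Fin n → ℂ,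
      (dunklOp n K S c lam α ρ pd a).comp (dunklOp n K S c lam α ρ pd b)
        = (dunklOp n K S c lam α ρ pd b).comp (dunklOp n K S c lam α ρ pd a) := by
  classical
  have hwex : ∀ s : G, ∃ w : Fin n → ℂ, s ∈ S → matOf s⁻¹ = 1 - Matrix.vecMulVec w (α s) := by
    intro s
    by_cases hs : s ∈ S
    · obtain ⟨w, hw⟩ := dunkl_aux_rank (matOf s) (matOf s⁻¹) (by simp [matOf])
        ((hS s).1 hs) (α s) (lam s) (hlam s hs) (hα s hs) (heig s hs)
      exact ⟨w, fun _ => hw⟩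
    · exact ⟨0, fun h => absurd h hs⟩
  choose w hw using hwex
  set D := dunklOp n K S c lam α ρ pd with hD
  have hDa : ∀ a f, D a f = (∑ i, a i • pd i f)
      - ∑ s ∈ S, (2 * c s * (α s ⬝ᵥ a) / (1 - lam s)) •
        ((algebraMap (MvPolynomial (Fin n) ℂ) K (linForm (α s)))⁻¹ * (f - ρ s f)) :=
    fun a f => dunkl_aux_apply n K S c lam α ρ pd a f
  have hφ : ∀ s ∈ S, algebraMap (MvPolynomial (Fin n) ℂ) K (linForm (α s)) ≠ 0 := by
    intro s hs h
    exact dunkl_aux_linForm_ne _ (hα s hs)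
      ((map_eq_zero_iff _ (IsFractionRing.injective (MvPolynomial (Fin n) ℂ) K)).1 h)
  have hvec : ∀ s ∈ S, ∀ v : Fin n → ℂ,
      Matrix.vecMul v (matOf s⁻¹) = v - (v ⬝ᵥ w s) • α s := by
    intro s hs v
    rw [hw s hs, Matrix.vecMul_sub, Matrix.vecMul_one, Matrix.vecMul_vecMulVec]
  have hmv : ∀ s ∈ S, ∀ v : Fin n → ℂ,
      Matrix.mulVec (matOf s⁻¹) v = v - (α s ⬝ᵥ v) • w s := by
    intro s hs v
    rw [hw s hs, Matrix.sub_mulVec, Matrix.one_mulVec, Matrix.vecMulVec_mulVec]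
    simp
  -- commutator with linear forms
  have hcomm : ∀ a v f, D a (algebraMap (MvPolynomial (Fin n) ℂ) K (linForm v) * f) =
      algebraMap (MvPolynomial (Fin n) ℂ) K (linForm v) * D a f + (v ⬝ᵥ a) • f
        - ∑ s ∈ S, (2 * c s * (α s ⬝ᵥ a) / (1 - lam s) * (v ⬝ᵥ w s)) • ρ s f := by
    intro a v f
    rw [hDa, hDa]
    have h1 : ∑ i, a i • pd i (algebraMap (MvPolynomial (Fin n) ℂ) K (linForm v) * f) =
        algebraMap (MvPolynomial (Fin n) ℂ) K (linForm v) * (∑ i, a i • pd i f) + (v ⬝ᵥ a) • f := by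
      simp only [Derivation.leibniz, hpd, dunkl_aux_pderiv, dunkl_aux_algC, dotProduct,
        Finset.sum_smul, Finset.mul_sum, ← Finset.sum_add_distrib]
      refine Finset.sum_congr rfl fun i _ => ?_
      simp only [Algebra.smul_def, map_mul, Algebra.algebraMap_self, RingHom.id_apply]
      ring
    have h2 : ∑ s ∈ S, (2 * c s * (α s ⬝ᵥ a) / (1 - lam s)) •
        ((algebraMap (MvPolynomial (Fin n) ℂ) K (linForm (α s)))⁻¹ *
          (algebraMap (MvPolynomial (Fin n) ℂ) K (linForm v) * f - ρ s (algebraMap (MvPolynomial (Fin n) ℂ) K (linForm v) * f))) =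
        algebraMap (MvPolynomial (Fin n) ℂ) K (linForm v) * (∑ s ∈ S, (2 * c s * (α s ⬝ᵥ a) / (1 - lam s)) •
        ((algebraMap (MvPolynomial (Fin n) ℂ) K (linForm (α s)))⁻¹ * (f - ρ s f)))
        + ∑ s ∈ S, (2 * c s * (α s ⬝ᵥ a) / (1 - lam s) * (v ⬝ᵥ w s)) • ρ s f := by
      rw [Finset.mul_sum, ← Finset.sum_add_distrib]
      refine Finset.sum_congr rfl fun s hs => ?_
      have h0 := hφ s hs
      rw [map_mul, dunkl_aux_rho ρ hρ, hvec s hs, dunkl_aux_linForm_sub, dunkl_aux_linForm_smul,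
        map_sub, map_mul, dunkl_aux_algC, mul_smul]
      rw [mul_smul_comm, ← smul_add]
      congr 1
      rw [Algebra.smul_def]
      field_simp
      ring
    rw [h1, h2]
    ring
  -- equivariance
  have hequi : ∀ (g : G) a f, ρ g (D (Matrix.mulVec (matOf g⁻¹) a) f) = D a (ρ g f) := by
    intro g a f
    rw [hDa, hDa, map_sub, dunkl_aux_pd ρ hρ pd hpd, map_sum]
    congr 1
    have hgg : matOf g⁻¹ * matOf g = 1 := by simp [matOf]
    have hgg' : matOf g * matOf g⁻¹ = 1 := by simp [matOf]
    have hmm : ∀ x y : G, matOf (x * y) = matOf x * matOf y := by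
      intro x y; simp [matOf]
    have hconj : ∀ (x s : G), s ∈ S → x * s * x⁻¹ ∈ S := by
      intro x s hs
      rw [hS] at hs ⊢
      have hxx : matOf x * matOf x⁻¹ = 1 := by simp [matOf]
      have hxx' : matOf x⁻¹ * matOf x = 1 := by simp [matOf]
      have : (1 : Matrix (Fin n) (Fin n) ℂ) - matOf (x * s * x⁻¹) =
          matOf x * (1 - matOf s) * matOf x⁻¹ := by
        rw [hmm, hmm, mul_sub, sub_mul, mul_one, hxx]
      rw [this, Matrix.rank_mul_eq_left_of_isUnit_det, Matrix.rank_mul_eq_right_of_isUnit_det, hs]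
      · rw [← Matrix.isUnit_iff_isUnit_det]; exact ⟨⟨_, _, hxx, hxx'⟩, rfl⟩
      · rw [← Matrix.isUnit_iff_isUnit_det]; exact ⟨⟨_, _, hxx', hxx⟩, rfl⟩
    refine Finset.sum_bij (fun s _ => g * s * g⁻¹) (fun s hs => hconj g s hs) ?_ ?_ ?_
    · intro s _ t _ h
      simpa using h
    · intro t ht
      refine ⟨g⁻¹ * t * g, ?_, ?_⟩
      · simpa using hconj g⁻¹ t ht
      · group
    · intro s hs
      have ht := hconj g s hs
      have hct := hc g s hs
      have hρt : ρ (g * s * g⁻¹) (ρ g f) = ρ g (ρ s f) := by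
        rw [← AlgEquiv.mul_apply, ← AlgEquiv.mul_apply, ← map_mul, ← map_mul]
        congr 2
        group
      have hmt : matOf (g * s * g⁻¹)⁻¹ = matOf g * matOf s⁻¹ * matOf g⁻¹ := by
        rw [← hmm, ← hmm]; congr 1; group
      generalize g * s * g⁻¹ = t at ht hct hρt hmt
      set u := Matrix.vecMul (α s) (matOf g⁻¹) with hu
      have hug : Matrix.vecMul u (matOf g) = α s := by
        rw [hu, Matrix.vecMul_vecMul, hgg, Matrix.vecMul_one]
      have hu0 : u ≠ 0 := by
        intro h
        apply hα s hs
        rw [← hug, h, Matrix.zero_vecMul]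
      have hut : Matrix.vecMul u (matOf t⁻¹) = lam s • u := by
        rw [hmt, ← Matrix.vecMul_vecMul, ← Matrix.vecMul_vecMul, hug, heig s hs,
          Matrix.smul_vecMul]
      have hls : (1 - lam s) ≠ 0 := sub_ne_zero.mpr (hlam s hs).symm
      obtain ⟨m, hm⟩ : ∃ m : ℂ, u = m • α t := by
        refine ⟨(1 - lam s)⁻¹ * (u ⬝ᵥ w t), ?_⟩
        have h1 := hvec t ht u
        rw [hut] at h1
        have h2 : (u ⬝ᵥ w t) • α t = (1 - lam s) • u := by
          rw [sub_smul, one_smul, h1]; abel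
        rw [mul_smul, h2, smul_smul, inv_mul_cancel₀ hls, one_smul]
      have hm0 : m ≠ 0 := by
        rintro rfl
        exact hu0 (by rw [hm, zero_smul])
      have hlt : lam t = lam s := by
        have h1 := hut
        rw [hm, Matrix.smul_vecMul, heig t ht, smul_comm (lam s)] at h1
        have h2 := smul_right_injective _ hm0 h1
        exact smul_left_injective _ (hα t ht) h2
      have hdot : α s ⬝ᵥ Matrix.mulVec (matOf g⁻¹) a = m * (α t ⬝ᵥ a) := by
        rw [Matrix.dotProduct_mulVec, ← hu, hm, smul_dotProduct, smul_eq_mul]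
      have h0 := hφ t ht
      have hmK : algebraMap ℂ K m ≠ 0 := by simpa using hm0
      rw [hdot, hct, hlt, hρt, map_smul, map_mul, map_inv₀, dunkl_aux_rho ρ hρ, ← hu, hm,
        dunkl_aux_linForm_smul, map_mul, dunkl_aux_algC, map_sub,
        show 2 * c s * (m * (α t ⬝ᵥ a)) / (1 - lam s) =
          (2 * c s * (α t ⬝ᵥ a) / (1 - lam s)) * m by ring, mul_smul]
      congr 1
      rw [Algebra.smul_def]
      field_simp
  have hDlin : ∀ a b (z : ℂ) f, D (a - z • b) f = D a f - z • D b f := by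
    intro a b z f
    simp only [hDa, dotProduct_sub, dotProduct_smul, smul_sub, Finset.smul_sum, smul_smul,
      Pi.sub_apply, Pi.smul_apply, sub_smul, Finset.sum_sub_distrib, smul_eq_mul]
    have : ∀ s, (2 * c s * (α s ⬝ᵥ a - z * (α s ⬝ᵥ b)) / (1 - lam s)) =
      (2 * c s * (α s ⬝ᵥ a) / (1 - lam s)) - z * (2 * c s * (α s ⬝ᵥ b) / (1 - lam s)) := by
      intro s; ring
    simp only [this, sub_smul, Finset.sum_sub_distrib]
    abel
  have hbr : ∀ s ∈ S, ∀ a f, D a (ρ s f) = ρ s (D a f) - (α s ⬝ᵥ a) • ρ s (D (w s) f) := by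
    intro s hs a f
    rw [← hequi s a f, hmv s hs, hDlin, map_sub, map_smul]
  have hD1 : ∀ a, D a 1 = 0 := by
    intro a
    rw [hDa]
    simp
  intro a b
  have hlin : ∀ v f, D a (D b (algebraMap (MvPolynomial (Fin n) ℂ) K (linForm v) * f)) -
      D b (D a (algebraMap (MvPolynomial (Fin n) ℂ) K (linForm v) * f)) =
      algebraMap (MvPolynomial (Fin n) ℂ) K (linForm v) * (D a (D b f) - D b (D a f)) := by
    intro v f
    have hh : ∀ a b, D a (D b (algebraMap (MvPolynomial (Fin n) ℂ) K (linForm v) * f)) =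
        algebraMap (MvPolynomial (Fin n) ℂ) K (linForm v) * D a (D b f) + ((v ⬝ᵥ a) • D b f + (v ⬝ᵥ b) • D a f)
        - ∑ s ∈ S, (2 * c s / (1 - lam s) * (v ⬝ᵥ w s)) •
          ((α s ⬝ᵥ a) • ρ s (D b f) + (α s ⬝ᵥ b) • ρ s (D a f)
            - ((α s ⬝ᵥ a) * (α s ⬝ᵥ b)) • ρ s (D (w s) f)) := by
      intro a b
      rw [hcomm b, map_sub, map_add, hcomm a, map_smul, map_sum]
      have : ∑ s ∈ S, (2 * c s / (1 - lam s) * (v ⬝ᵥ w s)) •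
          ((α s ⬝ᵥ a) • ρ s (D b f) + (α s ⬝ᵥ b) • ρ s (D a f)
            - ((α s ⬝ᵥ a) * (α s ⬝ᵥ b)) • ρ s (D (w s) f)) =
          (∑ s ∈ S, (2 * c s * (α s ⬝ᵥ a) / (1 - lam s) * (v ⬝ᵥ w s)) • ρ s (D b f)) +
          ∑ s ∈ S, D a ((2 * c s * (α s ⬝ᵥ b) / (1 - lam s) * (v ⬝ᵥ w s)) • ρ s f) := by
        rw [← Finset.sum_add_distrib]
        refine Finset.sum_congr rfl fun s hs => ?_
        rw [map_smul, hbr s hs]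
        module
      rw [this]
      abel
    rw [hh a b, hh b a]
    have : ∀ s, (α s ⬝ᵥ b) • ρ s (D a f) + (α s ⬝ᵥ a) • ρ s (D b f)
            - ((α s ⬝ᵥ b) * (α s ⬝ᵥ a)) • ρ s (D (w s) f) =
          ((α s ⬝ᵥ a) • ρ s (D b f) + (α s ⬝ᵥ b) • ρ s (D a f)
            - ((α s ⬝ᵥ a) * (α s ⬝ᵥ b)) • ρ s (D (w s) f)) := by
      intro s; module
    simp only [this]
    ring
  have hpoly : ∀ (p : MvPolynomial (Fin n) ℂ) (f : K), D a (D b (algebraMap (MvPolynomial (Fin n) ℂ) K p * f)) -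
      D b (D a (algebraMap (MvPolynomial (Fin n) ℂ) K p * f)) =
      algebraMap (MvPolynomial (Fin n) ℂ) K p * (D a (D b f) - D b (D a f)) := by
    intro p
    induction p using MvPolynomial.induction_on with
    | C z =>
      intro f
      rw [dunkl_aux_algC]
      simp only [← Algebra.smul_def, map_smul, smul_sub]
    | add p q hp hq =>
      intro f
      simp only [map_add, add_mul, ← hp f, ← hq f]
      ring
    | mul_X p i hp =>
      intro f
      have hX : (MvPolynomial.X i : MvPolynomial (Fin n) ℂ) = linForm (Pi.single i 1) := by
        simp [linForm, Pi.single_apply]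
      rw [RingHom.map_mul, mul_assoc, hp, hX, hlin, mul_assoc]
  ext f
  rw [LinearMap.comp_apply, LinearMap.comp_apply, ← sub_eq_zero]
  obtain ⟨p, q, hq, rfl⟩ := IsFractionRing.div_surjective (A := MvPolynomial (Fin n) ℂ) f
  have hq0 : algebraMap (MvPolynomial (Fin n) ℂ) K q ≠ 0 :=
    IsFractionRing.to_map_ne_zero_of_mem_nonZeroDivisors hq
  have h1 := hpoly q (algebraMap (MvPolynomial (Fin n) ℂ) K p / algebraMap (MvPolynomial (Fin n) ℂ) K q)
  have h2 := hpoly p 1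
  rw [mul_div_cancel₀ _ hq0] at h1
  rw [mul_one, hD1, hD1, map_zero, map_zero, sub_zero, mul_zero] at h2
  rw [h2] at h1
  exact (mul_eq_zero.1 h1.symm).resolve_left hq0

end
end

section
/- (PBW theorem for rational Cherednik algebras, in the faithful Dunkl representation.) Let G be a finite subgroup of GL_n(ℂ), S its set of reflections, c : S → ℂ conjugation-invariant. Let y_1,…,y_n be a basis of ℂ^n and x_1,…,x_n the dual basis of (ℂ^n)*. Then the family of ℂ-linear endomorphisms of ℂ(x_1,…,x_n) given by ρ(g) ∘ D_{y_1}^{m_1} ∘ ⋯ ∘ D_{y_n}^{m_n} ∘ M_{x_1}^{k_1} ∘ ⋯ ∘ M_{x_n}^{k_n}, indexed by g ∈ G and (m_1,…,m_n), (k_1,…,k_n) ∈ ℕ^n, is linearly independent over ℂ (here ρ(g) is the action of g on rational functions and M_{x_i} is multiplication by x_i; the Dunkl operators commute, so the product is well defined). -/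
open MvPolynomial

noncomputable section

/-- Multiplication by the linear form with coefficient vector `ξ`. -/
def mulLinForm (n : ℕ) (K : Type) [Field K] [Algebra ℂ K]
    [Algebra (MvPolynomial (Fin n) ℂ) K] [IsScalarTower ℂ (MvPolynomial (Fin n) ℂ) K]
    (ξ : Fin n → ℂ) : K →ₗ[ℂ] K :=
  LinearMap.mulLeft ℂ (algebraMap (MvPolynomial (Fin n) ℂ) K (linForm ξ))

namespace PBW
variable {K : Type} [Field K] [Algebra ℂ K]

/-- multiplication operator -/
def M (f : K) : Module.End ℂ K := LinearMap.mulLeft ℂ f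

lemma M_apply (f x : K) : M f x = f * x := rfl
lemma M_mul (f g : K) : M (f * g) = M f * M g := by ext x; simp [M_apply, mul_assoc]
lemma M_comm (f g : K) : M f * M g = M g * M f := by rw [← M_mul, ← M_mul, mul_comm]
lemma M_add (f g : K) : M (f + g) = M f + M g := by ext x; simp [M_apply, add_mul]
lemma M_sub (f g : K) : M (f - g) = M f - M g := by ext x; simp [M_apply, sub_mul]
lemma M_zero : M (0 : K) = 0 := by ext x; simp [M_apply]
lemma M_one : M (1 : K) = 1 := by ext x; simp [M_apply]
lemma M_smul (a : ℂ) (f : K) : M (a • f) = a • M f := by ext x; simp [M_apply]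
lemma M_inj {f : K} (h : M f = 0) : f = 0 := by
  have := congrArg (fun T : Module.End ℂ K => T 1) h
  simpa [M_apply] using this

/-- differential operators of order `< d` -/
def F (K : Type) [Field K] [Algebra ℂ K] : ℕ → Submodule ℂ (Module.End ℂ K)
  | 0 => ⊥
  | d + 1 =>
    { carrier := {P | ∀ h : K, P * M h - M h * P ∈ F K d}
      add_mem' := by
        intro P Q hP hQ h
        have := (F K d).add_mem (hP h) (hQ h)
        convert this using 1
        noncomm_ring
      zero_mem' := by intro h; simp
      smul_mem' := by
        intro a P hP h
        have := (F K d).smul_mem a (hP h)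
        convert this using 1
        rw [smul_sub, smul_mul_assoc, mul_smul_comm] }

lemma mem_F_succ {d : ℕ} {P : Module.End ℂ K} :
    P ∈ F K (d + 1) ↔ ∀ h : K, P * M h - M h * P ∈ F K d := Iff.rfl

lemma mem_F_zero {P : Module.End ℂ K} : P ∈ F K 0 ↔ P = 0 := Submodule.mem_bot ℂ

lemma F_le_succ (d : ℕ) : F K d ≤ F K (d + 1) := by
  induction d with
  | zero => intro P hP; rw [mem_F_zero.1 hP]; exact Submodule.zero_mem _
  | succ d ih => intro P hP h; exact ih (hP h)

lemma F_mono : Monotone (F K) := monotone_nat_of_le_succ F_le_succ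

lemma F_left (f : K) {d : ℕ} {P : Module.End ℂ K} (hP : P ∈ F K d) : M f * P ∈ F K d := by
  induction d generalizing P with
  | zero => rw [mem_F_zero.1 hP]; simp
  | succ d ih =>
    intro h
    have := ih (hP h)
    convert this using 1
    rw [mul_sub, mul_assoc, ← mul_assoc (M h), M_comm h f, mul_assoc]

lemma F_right (f : K) {d : ℕ} {P : Module.End ℂ K} (hP : P ∈ F K d) : P * M f ∈ F K d := by
  induction d generalizing P with
  | zero => rw [mem_F_zero.1 hP]; simp
  | succ d ih =>
    intro h
    have := ih (hP h)
    convert this using 1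
    rw [sub_mul, mul_assoc, mul_assoc, mul_assoc, M_comm h f]

lemma one_mem_F : (1 : Module.End ℂ K) ∈ F K 1 := by
  intro h; simp

/-- abstract derivation property -/
def IsDer (A : Module.End ℂ K) : Prop := ∀ h : K, ∃ u : K, A * M h = M h * A + M u

lemma F_der {A : Module.End ℂ K} (hA : IsDer A) {d : ℕ} {P : Module.End ℂ K}
    (hP : P ∈ F K d) : A * P ∈ F K (d + 1) := by
  induction d generalizing P with
  | zero => rw [mem_F_zero.1 hP]; simp
  | succ d ih =>
    intro h
    obtain ⟨u, hu⟩ := hA h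
    have h1 := (F K (d+1)).add_mem (ih (hP h)) (F_left u hP)
    convert h1 using 1
    have : M u = A * M h - M h * A := by rw [hu]; abel
    rw [this]; simp only [mul_sub, sub_mul, mul_assoc]; abel

lemma twist_inj {d : ℕ} {P : Module.End ℂ K} (hP : P ∈ F K d) {f f' : K} (hf : f ≠ f')
    (h : P * M f = M f' * P) : P = 0 := by
  induction d generalizing P with
  | zero => exact mem_F_zero.1 hP
  | succ d ih =>
    have e : P * M f - M f * P = M (f' - f) * P := by rw [h, M_sub, sub_mul]
    have h0 := ih (hP f) (by rw [e, mul_assoc, h, ← mul_assoc, ← mul_assoc, M_comm])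
    rw [e] at h0
    have : M (f' - f)⁻¹ * (M (f' - f) * P) = P := by
      rw [← mul_assoc, ← M_mul, inv_mul_cancel₀ (sub_ne_zero.2 hf.symm), M_one, one_mul]
    rw [← this, h0, mul_zero]

variable {Γ : Type} [Group Γ] (ρ : Γ →* (K ≃ₐ[ℂ] K))

def U (g : Γ) : Module.End ℂ K := (ρ g).toLinearMap

lemma U_apply (g : Γ) (x : K) : U ρ g x = ρ g x := rfl
lemma U_mul (g h : Γ) : U ρ (g * h) = U ρ g * U ρ h := by ext x; simp [U_apply]
lemma U_one : U ρ 1 = 1 := by ext x; simp [U_apply]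
lemma U_M (g : Γ) (f : K) : U ρ g * M f = M (ρ g f) * U ρ g := by
  ext x; simp [U_apply, M_apply]
lemma M_U (g : Γ) (f : K) : M f * U ρ g = U ρ g * M (ρ g⁻¹ f) := by
  rw [U_M, ← AlgEquiv.mul_apply, ← map_mul]; simp
lemma U_inv (g : Γ) : U ρ g * U ρ g⁻¹ = 1 := by rw [← U_mul, mul_inv_cancel, U_one]
lemma U_inv' (g : Γ) : U ρ g⁻¹ * U ρ g = 1 := by rw [← U_mul, inv_mul_cancel, U_one]

lemma IsDer_conj {A : Module.End ℂ K} (hA : IsDer A) (g : Γ) :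
    IsDer (U ρ g⁻¹ * A * U ρ g) := by
  intro h
  obtain ⟨u, hu⟩ := hA (ρ g h)
  refine ⟨ρ g⁻¹ u, ?_⟩
  have e : ρ g⁻¹ (ρ g h) = h := by rw [← AlgEquiv.mul_apply, ← map_mul]; simp
  calc U ρ g⁻¹ * A * U ρ g * M h = U ρ g⁻¹ * (A * M (ρ g h)) * U ρ g := by
        rw [mul_assoc, U_M]; simp only [mul_assoc]
    _ = (U ρ g⁻¹ * M (ρ g h)) * A * U ρ g + (U ρ g⁻¹ * M u) * U ρ g := by
        rw [hu]; noncomm_ring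
    _ = _ := by
        rw [U_M, U_M, e, mul_assoc (M (ρ g⁻¹ u)), U_inv', mul_one]
        simp only [mul_assoc]

theorem indep (hρ : Function.Injective ρ) (d : ℕ) (B : Finset Γ) :
    ∀ (P : Γ → Module.End ℂ K), (∀ g, P g ∈ F K d) → ∑ g ∈ B, U ρ g * P g = 0 →
      ∀ g ∈ B, P g = 0 := by
  classical
  induction B using Finset.induction_on with
  | empty => simp
  | insert b B hb ih =>
    have key : ∀ e ≤ d, ∀ (P : Γ → Module.End ℂ K), (∀ g, P g ∈ F K d) → P b ∈ F K e →
        ∑ g ∈ insert b B, U ρ g * P g = 0 → ∀ g ∈ insert b B, P g = 0 := by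
      intro e
      induction e with
      | zero =>
        intro _ P hP hPb hs g hg
        have h0 := mem_F_zero.1 hPb
        rw [Finset.sum_insert hb, h0, mul_zero, zero_add] at hs
        rcases Finset.mem_insert.1 hg with rfl | hg
        · exact h0
        · exact ih P hP hs g hg
      | succ e ihe =>
        intro hed P hP hPb hs
        have hB : ∀ g ∈ B, P g = 0 := by
          intro g hg
          have hgb : g ≠ b := by rintro rfl; exact hb hg
          have : ∃ h : K, ρ g h ≠ ρ b h := by
            by_contra hcon
            push Not at hcon
            exact hgb (hρ (AlgEquiv.ext hcon))
          obtain ⟨h, hh⟩ := this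
          have := ihe (by omega) (fun g => P g * M h - M (ρ g⁻¹ (ρ b h)) * P g)
            (fun g => (F K d).sub_mem (F_right _ (hP g)) (F_left _ (hP g)))
            (by
              have e : ρ b⁻¹ (ρ b h) = h := by rw [← AlgEquiv.mul_apply, ← map_mul]; simp
              simp only [e]; exact hPb h)
            (by
              have : ∀ g, U ρ g * (P g * M h - M (ρ g⁻¹ (ρ b h)) * P g)
                  = (U ρ g * P g) * M h - M (ρ b h) * (U ρ g * P g) := by
                intro g
                rw [mul_sub, ← mul_assoc, ← mul_assoc, ← M_U, mul_assoc (M _)]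
              simp only [this]
              rw [Finset.sum_sub_distrib, ← Finset.sum_mul, ← Finset.mul_sum, hs]
              simp)
            g (Finset.mem_insert_of_mem hg)
          refine twist_inj (hP g) ?_ (sub_eq_zero.1 this)
          intro e
          apply hh
          conv_lhs => rw [e]
          rw [← AlgEquiv.mul_apply, ← map_mul]; simp
        have hb0 : P b = 0 := by
          rw [Finset.sum_insert hb, Finset.sum_eq_zero (fun g hg => by rw [hB g hg, mul_zero]),
            add_zero] at hs
          rw [← one_mul (P b), ← U_inv' ρ b, mul_assoc, hs, mul_zero]
        intro g hg
        rcases Finset.mem_insert.1 hg with rfl | hg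
        · exact hb0
        · exact hB g hg
    intro P hP hs
    exact key d le_rfl P hP (hP b) hs

def W (d : ℕ) : Submodule ℂ (Module.End ℂ K) :=
  Submodule.span ℂ {P | ∃ (g : Γ) (Q : Module.End ℂ K), Q ∈ F K d ∧ P = U ρ g * Q}

lemma mem_W {d : ℕ} (g : Γ) {Q : Module.End ℂ K} (hQ : Q ∈ F K d) : U ρ g * Q ∈ W ρ d :=
  Submodule.subset_span ⟨g, Q, hQ, rfl⟩

lemma F_le_W (d : ℕ) : F K d ≤ W ρ d := by
  intro Q hQ
  have := mem_W ρ 1 hQ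
  rwa [U_one, one_mul] at this

lemma W_ind {d e : ℕ} (L : Module.End ℂ K →ₗ[ℂ] Module.End ℂ K)
    (hL : ∀ (g : Γ), ∀ Q ∈ F K d, L (U ρ g * Q) ∈ W ρ e) {P : Module.End ℂ K}
    (hP : P ∈ W ρ d) : L P ∈ W ρ e := by
  have : W ρ d ≤ (W ρ e).comap L := by
    refine Submodule.span_le.2 ?_
    rintro _ ⟨g, Q, hQ, rfl⟩
    exact hL g Q hQ
  exact this hP

lemma W_mono {d e : ℕ} (h : d ≤ e) : W ρ d ≤ W ρ e := fun _ hP =>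
  W_ind ρ LinearMap.id (fun g _ hQ => mem_W ρ g (F_mono h hQ)) hP

lemma W_U (s : Γ) {d : ℕ} {P : Module.End ℂ K} (hP : P ∈ W ρ d) : U ρ s * P ∈ W ρ d :=
  W_ind ρ (LinearMap.mulLeft ℂ (U ρ s)) (fun g Q hQ => by
    rw [LinearMap.mulLeft_apply, ← mul_assoc, ← U_mul]; exact mem_W ρ _ hQ) hP

lemma W_left (f : K) {d : ℕ} {P : Module.End ℂ K} (hP : P ∈ W ρ d) : M f * P ∈ W ρ d :=
  W_ind ρ (LinearMap.mulLeft ℂ (M f)) (fun g Q hQ => by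
    rw [LinearMap.mulLeft_apply, ← mul_assoc, M_U, mul_assoc]
    exact mem_W ρ _ (F_left _ hQ)) hP

lemma W_right (f : K) {d : ℕ} {P : Module.End ℂ K} (hP : P ∈ W ρ d) : P * M f ∈ W ρ d :=
  W_ind ρ (LinearMap.mulRight ℂ (M f)) (fun g Q hQ => by
    rw [LinearMap.mulRight_apply, mul_assoc]
    exact mem_W ρ _ (F_right _ hQ)) hP

lemma W_der {A : Module.End ℂ K} (hA : IsDer A) {d : ℕ} {P : Module.End ℂ K}
    (hP : P ∈ W ρ d) : A * P ∈ W ρ (d + 1) :=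
  W_ind ρ (LinearMap.mulLeft ℂ A) (fun g Q hQ => by
    have : A * (U ρ g * Q) = U ρ g * ((U ρ g⁻¹ * A * U ρ g) * Q) := by
      rw [mul_assoc (U ρ g⁻¹), mul_assoc (U ρ g⁻¹), ← mul_assoc (U ρ g), U_inv, one_mul,
        mul_assoc]
    rw [LinearMap.mulLeft_apply, this]
    exact mem_W ρ _ (F_der (IsDer_conj ρ hA g) hQ)) hP

lemma W_exists [Fintype Γ] {d : ℕ} {P : Module.End ℂ K} (hP : P ∈ W ρ d) :
    ∃ Q : Γ → Module.End ℂ K, (∀ g, Q g ∈ F K d) ∧ P = ∑ g, U ρ g * Q g := by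
  classical
  refine Submodule.span_induction ?_ ?_ ?_ ?_ hP
  · rintro _ ⟨g, Q, hQ, rfl⟩
    refine ⟨fun x => if x = g then Q else 0, ?_, ?_⟩
    · intro x; dsimp only; split_ifs
      · exact hQ
      · exact Submodule.zero_mem _
    · simp
  · exact ⟨0, fun _ => Submodule.zero_mem _, by simp⟩
  · rintro _ _ _ _ ⟨Q, hQ, rfl⟩ ⟨R, hR, rfl⟩
    exact ⟨Q + R, fun g => Submodule.add_mem _ (hQ g) (hR g), by
      simp [mul_add, Finset.sum_add_distrib]⟩
  · rintro a _ _ ⟨Q, hQ, rfl⟩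
    exact ⟨a • Q, fun g => Submodule.smul_mem _ a (hQ g), by
      simp [Finset.smul_sum]⟩

/-- `B` is a differential operator approximating `A` modulo lower order. -/
def Pair (d : ℕ) (A B : Module.End ℂ K) : Prop := B ∈ F K (d + 1) ∧ A - B ∈ W ρ d

def Good (e : ℕ) (A B : Module.End ℂ K) : Prop :=
  ∀ d P Q, Pair ρ d P Q → Pair ρ (d + e) (A * P) (B * Q)

lemma Good_one : Good ρ 0 1 1 := by
  intro d P Q h; simpa using h

lemma Good_mul {e e' : ℕ} {A A' B B' : Module.End ℂ K} (h : Good ρ e A B)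
    (h' : Good ρ e' A' B') : Good ρ (e + e') (A * A') (B * B') := by
  intro d P Q hp
  have := h _ _ _ (h' _ _ _ hp)
  rw [mul_assoc, mul_assoc]
  convert this using 1
  omega

lemma Good_pow {A B : Module.End ℂ K} (h : Good ρ 1 A B) (m : ℕ) :
    Good ρ m (A ^ m) (B ^ m) := by
  induction m with
  | zero => simpa using Good_one ρ
  | succ m ih => rw [pow_succ, pow_succ]; exact Good_mul ρ ih h

lemma Good_ofFn {n : ℕ} {A B : Fin n → Module.End ℂ K} (h : ∀ i, Good ρ 1 (A i) (B i))
    (m : Fin n → ℕ) : Good ρ (∑ i, m i) (List.ofFn fun i => A i ^ m i).prod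
      (List.ofFn fun i => B i ^ m i).prod := by
  induction n with
  | zero => simpa using Good_one ρ
  | succ n ih =>
    rw [List.ofFn_succ, List.ofFn_succ, List.prod_cons, List.prod_cons, Fin.sum_univ_succ]
    exact Good_mul ρ (Good_pow ρ (h 0) _) (ih (fun i => h i.succ) _)

lemma Good_dunkl {A B : Module.End ℂ K} (hB : IsDer B)
    (hAB : ∀ d, ∀ P ∈ W ρ d, (A - B) * P ∈ W ρ d) : Good ρ 1 A B := by
  rintro d P Q ⟨hQ, hPQ⟩
  refine ⟨F_der hB hQ, ?_⟩
  have : A * P - B * Q = (A - B) * (P - Q) + B * (P - Q) + (A - B) * Q := by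
    simp only [mul_sub, sub_mul, mul_assoc]; abel
  rw [this]
  refine Submodule.add_mem _ (Submodule.add_mem _ ?_ (W_der ρ hB hPQ)) ?_
  · exact W_mono ρ (Nat.le_succ d) (hAB _ _ hPQ)
  · exact hAB _ _ (F_le_W ρ _ hQ)

lemma Good_dunkl2 {A B C : Module.End ℂ K} (hB : IsDer B) (hA : A = B - C)
    (hC : ∀ d, ∀ P ∈ W ρ d, C * P ∈ W ρ d) : Good ρ 1 A B := by
  refine Good_dunkl ρ hB fun d P hP => ?_
  have e : (A - B) * P = - (C * P) := by
    rw [hA]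
    ext z
    simp
  rw [e]
  exact Submodule.neg_mem _ (hC d P hP)

lemma top_diff (a : ℂ) (V D B N : Module.End ℂ K) :
    a • (V * D * N) - a • (V * (B * N)) = a • (V * ((D - B) * N)) := by
  ext z
  simp [smul_sub]

lemma top_mem {d : ℕ} (a : ℂ) (g : Γ) (f : K) {D B : Module.End ℂ K} (h : D - B ∈ W ρ d) :
    a • (U ρ g * D * M f) - a • (U ρ g * (B * M f)) ∈ W ρ d := by
  rw [top_diff]
  exact Submodule.smul_mem _ _ (W_U ρ _ (W_right ρ _ h))

/-! symbols -/
variable {n : ℕ}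

def ad (f : K) (P : Module.End ℂ K) : Module.End ℂ K := P * M f - M f * P

lemma ad_mul (f : K) (P Q : Module.End ℂ K) : ad f (P * Q) = ad f P * Q + P * ad f Q := by
  unfold ad; simp only [mul_sub, sub_mul, mul_assoc]; abel

lemma ad_M (f g : K) : ad f (M g) = 0 := by unfold ad; rw [M_comm, sub_self]

lemma ad_pow_zero {f : K} {P : Module.End ℂ K} (h : ad f P = 0) (m : ℕ) :
    ad f (P ^ m) = 0 := by
  induction m with
  | zero => simp [ad]
  | succ m ih => rw [pow_succ, ad_mul, ih, h]; simp

lemma ad_pow_one {f : K} {P : Module.End ℂ K} (h : ad f P = 1) (m : ℕ) :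
    ad f (P ^ m) = (m : ℂ) • P ^ (m - 1) := by
  induction m with
  | zero => simp [ad]
  | succ m ih =>
    rw [pow_succ, ad_mul, ih, h, mul_one]
    rcases m with _ | m
    · simp
    · simp only [Nat.add_sub_cancel, smul_mul_assoc, ← pow_succ]
      push_cast
      simp only [add_smul, one_smul]

lemma ad_ofFn_zero {n : ℕ} {f : K} {B : Fin n → Module.End ℂ K} (h : ∀ i, ad f (B i) = 0)
    (m : Fin n → ℕ) : ad f (List.ofFn fun i => B i ^ m i).prod = 0 := by
  induction n with
  | zero => simp [ad]
  | succ n ih =>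
    rw [List.ofFn_succ, List.prod_cons, ad_mul, ad_pow_zero (h 0), ih (fun i => h i.succ)]
    simp

lemma ad_ofFn {n : ℕ} {f : K} {B : Fin n → Module.End ℂ K} (i : Fin n)
    (h : ∀ j, ad f (B j) = if i = j then 1 else 0)
    (m : Fin n → ℕ) : ad f (List.ofFn fun j => B j ^ m j).prod =
      (m i : ℂ) • (List.ofFn fun j => B j ^ (m j - if j = i then 1 else 0)).prod := by
  induction n with
  | zero => exact i.elim0
  | succ n ih =>
    rw [List.ofFn_succ, List.prod_cons, ad_mul, List.ofFn_succ, List.prod_cons]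
    rcases Fin.eq_zero_or_eq_succ i with rfl | ⟨i', rfl⟩
    · rw [ad_pow_one (by simpa using h 0), ad_ofFn_zero (fun j => by
        rw [h, if_neg (Fin.succ_ne_zero j).symm])]
      simp [Fin.succ_ne_zero]
    · rw [ad_pow_zero (by simpa [Fin.succ_ne_zero] using h 0),
        ih i' (fun j => by rw [h]; simp)]
      simp [(Fin.succ_ne_zero i').symm]

theorem symbol_indep {ι : Type} (x : Fin n → K) (B : Fin n → Module.End ℂ K)
    (h : ∀ i j, ad (x i) (B j) = if i = j then 1 else 0) (d : ℕ) :
    ∀ (s : Finset ι) (m : ι → Fin n → ℕ) (N : ι → K), (∀ t ∈ s, ∑ i, m t i = d) →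
      ∑ t ∈ s, (List.ofFn fun j => B j ^ m t j).prod * M (N t) ∈ F K d →
      ∀ m0 : Fin n → ℕ, ∑ i, m0 i = d → ∑ t ∈ s with m t = m0, N t = 0 := by
  classical
  induction d with
  | zero =>
    intro s m N hm hs m0 hm0
    have z : ∀ m' : Fin n → ℕ, ∑ i, m' i = 0 → m' = 0 := by
      intro m' h'; ext i; simpa using (Finset.sum_eq_zero_iff.1 h') i (Finset.mem_univ _)
    have hs := mem_F_zero.1 hs
    rw [Finset.filter_true_of_mem (fun t ht => by rw [z _ (hm t ht), z _ hm0])]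
    apply M_inj
    rw [← hs]
    have : ∀ t ∈ s, (List.ofFn fun j => B j ^ m t j).prod * M (N t) = M (N t) := by
      intro t ht
      rw [z _ (hm t ht)]
      simp
    rw [Finset.sum_congr rfl this]
    ext y
    simp [M_apply, Finset.sum_mul]
  | succ d ih =>
    intro s m N hm hs m0 hm0
    obtain ⟨i, hi⟩ : ∃ i, m0 i ≠ 0 := by
      by_contra hcon
      push Not at hcon
      simp [hcon] at hm0
    have hsub : ∀ m' : Fin n → ℕ, m' i ≠ 0 → ∑ j, m' j = d + 1 →
        ∑ j, (m' j - if j = i then 1 else 0) = d := by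
      intro m' h1 h2
      have : ∑ j, m' j = ∑ j, (m' j - if j = i then 1 else 0) + ∑ j, if j = i then 1 else 0 := by
        rw [← Finset.sum_add_distrib]
        refine Finset.sum_congr rfl fun j _ => ?_
        split_ifs with hj
        · subst hj; omega
        · omega
      simp at this
      omega
    have key := ih (s.filter fun t => m t i ≠ 0)
      (fun t j => m t j - if j = i then 1 else 0) (fun t => (m t i : ℂ) • N t)
      (fun t ht => hsub _ (Finset.mem_filter.1 ht).2 (hm t (Finset.mem_filter.1 ht).1))
      (by
        have := hs (x i)
        rw [Finset.sum_filter_of_ne]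
        · convert this using 1
          rw [Finset.sum_mul, Finset.mul_sum, ← Finset.sum_sub_distrib]
          refine Finset.sum_congr rfl fun t _ => ?_
          change _ = ad (x i) _
          rw [ad_mul, ad_M, ad_ofFn i (h i), M_smul]
          simp
        · intro t _ hne h0
          apply hne
          rw [h0]; simp [M_zero])
      (fun j => m0 j - if j = i then 1 else 0) (hsub _ hi hm0)
    have hset : (s.filter fun t => m t i ≠ 0).filter (fun t =>
        (fun j => m t j - if j = i then 1 else 0) = (fun j => m0 j - if j = i then 1 else 0))
        = s.filter fun t => m t = m0 := by
      ext t
      simp only [Finset.mem_filter, and_assoc]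
      refine and_congr_right fun _ => ⟨?_, ?_⟩
      · rintro ⟨h1, h2⟩
        ext j
        have := congrFun h2 j
        split_ifs at this with hj
        · subst hj; omega
        · simpa using this
      · intro h1
        rw [h1]; exact ⟨hi, rfl⟩
    rw [hset] at key
    have e : ∑ t ∈ s with m t = m0, (m t i : ℂ) • N t
        = (m0 i : ℂ) • ∑ t ∈ s with m t = m0, N t := by
      rw [Finset.smul_sum]
      refine Finset.sum_congr rfl fun t ht => ?_
      rw [(Finset.mem_filter.1 ht).2]
    rw [e] at key
    exact (smul_eq_zero.1 key).resolve_left (by exact_mod_cast hi)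

end PBW

/-- **The PBW theorem for rational Cherednik algebras, in the faithful Dunkl
representation.**  Let `G ⊆ GL_n(ℂ)` be a finite subgroup with reflections `S`, reflection
data `(α_s, λ_s)`, and conjugation-invariant parameters `c`.  Let `y₁,…,yₙ` be a basis of
`ℂⁿ` with dual basis `x₁,…,xₙ` of `(ℂⁿ)*` (given by coefficient vectors `ξ i`).  Then the
endomorphisms `ρ(g) ∘ D_{y₁}^{m₁} ⋯ D_{yₙ}^{mₙ} ∘ M_{x₁}^{k₁} ⋯ M_{xₙ}^{kₙ}` of
`K = ℂ(x₁,…,xₙ)`, indexed by `(g, m, k) ∈ G × ℕⁿ × ℕⁿ`, are linearly independent over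
`ℂ`. -/
theorem cherednik_pbw_linear_independent (n : ℕ) (hn : 1 ≤ n)
    (K : Type) [Field K] [Algebra ℂ K]
    [Algebra (MvPolynomial (Fin n) ℂ) K] [IsScalarTower ℂ (MvPolynomial (Fin n) ℂ) K]
    [IsFractionRing (MvPolynomial (Fin n) ℂ) K]
    (G : Subgroup (Matrix.GeneralLinearGroup (Fin n) ℂ)) [Finite G]
    (S : Finset G)
    (hS : ∀ s : G, s ∈ S ↔
      Matrix.rank ((1 : Matrix (Fin n) (Fin n) ℂ) - matOf s) = 1)
    (c lam : G → ℂ) (α : G → Fin n → ℂ)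
    (hc : ∀ (g s : G), s ∈ S → c (g * s * g⁻¹) = c s)
    (hlam : ∀ s ∈ S, lam s ≠ 1)
    (hα : ∀ s ∈ S, α s ≠ 0)
    (heig : ∀ s ∈ S, Matrix.vecMul (α s) (matOf s⁻¹) = lam s • α s)
    (ρ : G →* (K ≃ₐ[ℂ] K))
    (hρ : ∀ (g : G) (i : Fin n),
      ρ g (algebraMap (MvPolynomial (Fin n) ℂ) K (MvPolynomial.X i)) =
        algebraMap (MvPolynomial (Fin n) ℂ) K
          (∑ j, MvPolynomial.C (matOf g⁻¹ i j) * MvPolynomial.X j))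
    (pd : Fin n → Derivation ℂ K K)
    (hpd : ∀ (i : Fin n) (q : MvPolynomial (Fin n) ℂ),
      pd i (algebraMap (MvPolynomial (Fin n) ℂ) K q)
        = algebraMap (MvPolynomial (Fin n) ℂ) K (MvPolynomial.pderiv i q))
    (y ξ : Fin n → Fin n → ℂ)
    (hdual : ∀ i k : Fin n, (∑ j, ξ i j * y k j) = if i = k then 1 else 0) :
    LinearIndependent ℂ
      (fun t : G × (Fin n → ℕ) × (Fin n → ℕ) =>
        ((ρ t.1).toLinearMap *
            (List.ofFn fun i => (dunklOp n K S c lam α ρ pd (y i)) ^ (t.2.1 i)).prod *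
            (List.ofFn fun i => (mulLinForm n K (ξ i)) ^ (t.2.2 i)).prod
          : K →ₗ[ℂ] K)) := by
  classical
  have := Fintype.ofFinite G
  set x : Fin n → K := fun i => algebraMap (MvPolynomial (Fin n) ℂ) K (linForm (ξ i)) with hx
  set B : Fin n → Module.End ℂ K := fun i => ∑ j, y i j • (pd j).toLinearMap with hB
  set D : Fin n → Module.End ℂ K := fun i => dunklOp n K S c lam α ρ pd (y i) with hD
  have hBapp : ∀ i f, B i f = ∑ j, y i j • pd j f := by
    intro i f; simp [hB]
  have hBleib : ∀ i f, B i * PBW.M f = PBW.M f * B i + PBW.M (B i f) := by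
    intro i f
    ext g
    simp only [Module.End.mul_apply, LinearMap.add_apply, PBW.M_apply, hBapp, Derivation.leibniz,
      smul_add, Finset.sum_add_distrib, Finset.mul_sum, Finset.sum_mul, smul_eq_mul,
      mul_smul_comm, smul_mul_assoc]
    congr 1
    refine Finset.sum_congr rfl fun j _ => ?_
    rw [mul_comm]
  have hder : ∀ i, PBW.IsDer (B i) := fun i f => ⟨_, hBleib i f⟩
  have hgood : ∀ i, PBW.Good ρ 1 (D i) (B i) := by
    intro i
    refine PBW.Good_dunkl2 ρ (hder i)
      (C := ∑ s ∈ S, (2 * c s * (∑ j, α s j * y i j) / (1 - lam s)) •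
        (PBW.M ((algebraMap (MvPolynomial (Fin n) ℂ) K (linForm (α s)))⁻¹) *
          (1 - PBW.U ρ s))) rfl ?_
    intro d P hP
    rw [Finset.sum_mul]
    refine Submodule.sum_mem _ fun s _ => ?_
    rw [smul_mul_assoc, mul_assoc (PBW.M _), sub_mul, one_mul]
    exact Submodule.smul_mem _ _
      (PBW.W_left ρ _ (Submodule.sub_mem _ hP (PBW.W_U ρ s hP)))
  have had : ∀ i j, PBW.ad (x i) (B j) = if i = j then 1 else 0 := by
    intro i j
    have e : B j (x i) = if i = j then 1 else 0 := by
      rw [hBapp]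
      have h1 : ∀ k, pd k (x i) = algebraMap ℂ K (ξ i k) := by
        intro k
        simp only [hx]
        rw [hpd, IsScalarTower.algebraMap_apply ℂ (MvPolynomial (Fin n) ℂ) K]
        congr 1
        simp [linForm, MvPolynomial.pderiv_X, Pi.single_apply]
      have h2 := congrArg (algebraMap ℂ K) (hdual i j)
      simp only [h1, Algebra.smul_def]
      rw [map_sum] at h2
      simp only [map_mul] at h2
      rw [Finset.sum_congr rfl (fun k _ => mul_comm _ _), h2]
      split_ifs <;> simp
    unfold PBW.ad
    rw [hBleib, add_sub_cancel_left, e]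
    split_ifs
    · exact PBW.M_one
    · exact PBW.M_zero
  have hinj : Function.Injective ρ := by
    intro g g' h
    have h1 : matOf g⁻¹ = matOf g'⁻¹ := by
      ext i j
      have h2 := hρ g i
      rw [h, hρ g' i] at h2
      have h3 := IsFractionRing.injective (MvPolynomial (Fin n) ℂ) K h2
      have h4 := congrArg (MvPolynomial.coeff (Finsupp.single j 1)) h3
      simpa [MvPolynomial.coeff_sum, MvPolynomial.coeff_C_mul, MvPolynomial.coeff_X,
        Finsupp.single_left_inj] using h4.symm
    have h2 : g⁻¹ = g'⁻¹ := Subtype.ext (Units.ext h1)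
    exact inv_injective h2
  -- monomials in the dual coordinates
  have hmon : ∀ k : Fin n → ℕ,
      (List.ofFn fun i => (mulLinForm n K (ξ i)) ^ (k i)).prod = PBW.M (∏ i, x i ^ k i) := by
    intro k
    have h1 : ∀ (f : K) (m : ℕ), PBW.M f ^ m = PBW.M (f ^ m) := by
      intro f m
      induction m with
      | zero => simp [PBW.M_one]
      | succ m ih => rw [pow_succ, pow_succ, ih, PBW.M_mul]
    have h2 : ∀ (r : ℕ) (z : Fin r → K),
        (List.ofFn fun i => PBW.M (z i)).prod = PBW.M (∏ i, z i) := by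
      intro r
      induction r with
      | zero => intro z; simp [PBW.M_one]
      | succ r ih =>
        intro z
        rw [List.ofFn_succ, List.prod_cons, ih, Fin.prod_univ_succ, PBW.M_mul]
    rw [← h2]
    simp only [← h1]
    rfl
  have halg : ∀ (s : Finset (Fin n → ℕ)) (b : (Fin n → ℕ) → ℂ),
      ∑ k ∈ s, b k • ∏ i, x i ^ k i = 0 → ∀ k ∈ s, b k = 0 := by
    intro s b hsum k hk
    let φ : MvPolynomial (Fin n) ℂ →ₐ[ℂ] MvPolynomial (Fin n) ℂ :=
      MvPolynomial.aeval fun i => linForm (ξ i)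
    let ψ : MvPolynomial (Fin n) ℂ →ₐ[ℂ] MvPolynomial (Fin n) ℂ :=
      MvPolynomial.aeval fun j => ∑ l, MvPolynomial.C (y l j) * MvPolynomial.X l
    have hψφ : ψ.comp φ = AlgHom.id ℂ _ := by
      apply MvPolynomial.algHom_ext
      intro i
      have h1 : ψ (linForm (ξ i)) = ∑ j, ∑ l, MvPolynomial.C (ξ i j * y l j) * MvPolynomial.X l := by
        simp [ψ, linForm, MvPolynomial.algebraMap_eq, Finset.mul_sum, mul_assoc]
      have h2 : φ (MvPolynomial.X i) = linForm (ξ i) := by simp [φ]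
      rw [AlgHom.comp_apply, h2, h1, Finset.sum_comm]
      simp only [← Finset.sum_mul, ← map_sum, hdual]
      simp [Finset.sum_ite_eq]
    have hφinj : Function.Injective φ := by
      intro p q hpq
      have := congrArg ψ hpq
      simpa [← AlgHom.comp_apply, hψφ] using this
    have hz : algebraMap (MvPolynomial (Fin n) ℂ) K
        (φ (∑ k ∈ s, MvPolynomial.monomial (Finsupp.equivFunOnFinite.symm k) (b k))) = 0 := by
      rw [← hsum, map_sum, map_sum]
      refine Finset.sum_congr rfl fun k _ => ?_
      simp only [φ]
      rw [MvPolynomial.aeval_monomial, map_mul, Finsupp.prod_fintype _ _ (by simp),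
        Algebra.smul_def, map_prod, ← IsScalarTower.algebraMap_apply]
      simp [hx]
    have hz2 := IsFractionRing.injective (MvPolynomial (Fin n) ℂ) K (hz.trans (map_zero _).symm)
    have hz3 := hφinj (hz2.trans (map_zero _).symm)
    have h4 := congrArg (MvPolynomial.coeff (Finsupp.equivFunOnFinite.symm k)) hz3
    simpa [MvPolynomial.coeff_sum, MvPolynomial.coeff_monomial, hk] using h4
  -- main argument
  rw [linearIndependent_iff']
  intro s a hsum
  by_contra hcon
  push Not at hcon
  obtain ⟨t0, ht0, hat0⟩ := hcon
  set s' := s.filter fun t => a t ≠ 0 with hs'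
  have hne : s'.Nonempty := ⟨t0, Finset.mem_filter.2 ⟨ht0, hat0⟩⟩
  obtain ⟨t1, ht1, hmax⟩ := Finset.exists_max_image s' (fun t => ∑ i, t.2.1 i) hne
  set d := ∑ i, t1.2.1 i with hd
  set BB : (Fin n → ℕ) → Module.End ℂ K := fun m => (List.ofFn fun i => B i ^ m i).prod with hBBdef
  set DD : (Fin n → ℕ) → Module.End ℂ K := fun m => (List.ofFn fun i => D i ^ m i).prod with hDD
  set xx : (Fin n → ℕ) → K := fun k => ∏ i, x i ^ k i with hxx
  have hsum' : ∑ t ∈ s', a t • (PBW.U ρ t.1 * DD t.2.1 * PBW.M (xx t.2.2)) = 0 := by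
    rw [hs', Finset.sum_filter_of_ne (p := fun t => a t ≠ 0)
      (fun t _ h h0 => h (by rw [h0, zero_smul])), ← hsum]
    refine Finset.sum_congr rfl fun t _ => ?_
    rw [hmon]
    rfl
  have hpair : ∀ m : Fin n → ℕ, PBW.Pair ρ (∑ i, m i) (DD m) (BB m) := by
    intro m
    have := PBW.Good_ofFn ρ hgood m 0 1 1 ⟨PBW.one_mem_F, by simp⟩
    simpa using this
  set s'' := s'.filter fun t => ∑ i, t.2.1 i = d with hs''
  have hW : ∑ t ∈ s'', a t • (PBW.U ρ t.1 * (BB t.2.1 * PBW.M (xx t.2.2))) ∈ PBW.W ρ d := by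
    have e : ∑ t ∈ s'', a t • (PBW.U ρ t.1 * (BB t.2.1 * PBW.M (xx t.2.2)))
        = - ∑ t ∈ s', (a t • (PBW.U ρ t.1 * DD t.2.1 * PBW.M (xx t.2.2)) -
          if ∑ i, t.2.1 i = d then a t • (PBW.U ρ t.1 * (BB t.2.1 * PBW.M (xx t.2.2))) else 0) := by
      rw [Finset.sum_sub_distrib, hsum', hs'', Finset.sum_filter, zero_sub, neg_neg]
    rw [e]
    refine Submodule.neg_mem _ (Submodule.sum_mem _ fun t ht => ?_)
    have hp := hpair t.2.1
    split_ifs with htd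
    · rw [htd] at hp
      exact PBW.top_mem ρ _ _ _ hp.2
    · have hlt : (∑ i, t.2.1 i) + 1 ≤ d := lt_of_le_of_ne (hmax t ht) htd
      rw [sub_zero, mul_assoc]
      refine Submodule.smul_mem _ _ (PBW.W_U ρ _ (PBW.W_right ρ _ ?_))
      have h1 := PBW.W_mono ρ ((Nat.le_succ _).trans hlt) hp.2
      have h2 := PBW.F_le_W ρ d (PBW.F_mono hlt hp.1)
      simpa using Submodule.add_mem _ h1 h2
  obtain ⟨Q, hQ, hQe⟩ := PBW.W_exists ρ hW
  set R : G → Module.End ℂ K := fun g =>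
    ∑ t ∈ s'' with t.1 = g, BB t.2.1 * PBW.M (a t • xx t.2.2) with hR
  have hRF : ∀ g, R g ∈ PBW.F K (d + 1) := by
    intro g
    refine Submodule.sum_mem _ fun t ht => PBW.F_right _ ?_
    have htd := (Finset.mem_filter.1 (Finset.mem_filter.1 ht).1).2
    have := (hpair t.2.1).1
    rwa [htd] at this
  have hzero := PBW.indep ρ hinj (d + 1) Finset.univ (fun g => R g - Q g)
    (fun g => Submodule.sub_mem _ (hRF g) (PBW.F_le_succ d (hQ g)))
    (by
      simp only [mul_sub, Finset.sum_sub_distrib]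
      rw [← hQe, sub_eq_zero, ← Finset.sum_fiberwise s'' (fun t => t.1)]
      refine Finset.sum_congr rfl fun g _ => ?_
      simp only [hR]
      rw [Finset.mul_sum]
      refine Finset.sum_congr rfl fun t ht => ?_
      rw [(Finset.mem_filter.1 ht).2, PBW.M_smul, mul_smul_comm, mul_smul_comm])
    t1.1 (Finset.mem_univ _)
  have hRQ : R t1.1 ∈ PBW.F K d := by rw [sub_eq_zero.1 hzero]; exact hQ _
  have hfin := PBW.symbol_indep x B had d (s''.filter fun t => t.1 = t1.1) (fun t => t.2.1)
    (fun t => a t • xx t.2.2)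
    (fun t ht => (Finset.mem_filter.1 (Finset.mem_filter.1 ht).1).2) hRQ t1.2.1 rfl
  have ht1' : t1 ∈ (s''.filter fun t => t.1 = t1.1).filter fun t => t.2.1 = t1.2.1 := by
    simp [hs'', ht1, hd]
  set s3 := (s''.filter fun t => t.1 = t1.1).filter fun t => t.2.1 = t1.2.1 with hs3
  have hs3m : ∀ t ∈ s3, t = (t1.1, t1.2.1, t.2.2) := by
    intro t ht
    have h1 := (Finset.mem_filter.1 ht).2
    have h2 := (Finset.mem_filter.1 (Finset.mem_filter.1 ht).1).2
    ext1
    · exact h2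
    · ext1
      · exact h1
      · rfl
  have hfin2 := halg (s3.image fun t => t.2.2) (fun k => a (t1.1, t1.2.1, k))
    (by
      rw [Finset.sum_image]
      · rw [← hfin]
        refine Finset.sum_congr rfl fun t ht => ?_
        rw [← hs3m t ht]
      · intro t ht t' ht' h
        rw [hs3m t ht, hs3m t' ht']
        simp only at h
        rw [h])
    t1.2.2 (Finset.mem_image_of_mem (fun t => t.2.2) ht1')
  exact (Finset.mem_filter.1 ht1).2 hfin2

end
end

section
/- Let W ⊂ O(ℝ^r) be a finite real reflection group with set of reflections S, roots α_s, and conjugation-invariant parameters c : S → ℂ. Then the rational function Σ_{s,u ∈ S, s ≠ u} c_s c_u (α_s,α_u) / (α_s(x) α_u(x)) is identically zero (as an element of ℂ(x_1,…,x_r)), where α_s(x) = (α_s, x). -/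
open MvPolynomial

noncomputable section

/-- The matrix underlying an element of a subgroup of `GL_r(ℝ)`. -/
def matOfR {r : ℕ} {W : Subgroup (Matrix.GeneralLinearGroup (Fin r) ℝ)} (w : W) :
    Matrix (Fin r) (Fin r) ℝ :=
  ((w : Matrix.GeneralLinearGroup (Fin r) ℝ) : Matrix (Fin r) (Fin r) ℝ)

/-- The complexified linear polynomial `Σᵢ aᵢ xᵢ` with real coefficient vector `a`. -/
def linFormR {r : ℕ} (a : Fin r → ℝ) : MvPolynomial (Fin r) ℂ :=
  ∑ i, MvPolynomial.C ((a i : ℂ)) * MvPolynomial.X i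

lemma ctv_eval {r : ℕ} (a w : Fin r → ℝ) :
    MvPolynomial.eval (fun i => ((w i : ℝ) : ℂ)) (linFormR a) = ((a ⬝ᵥ w : ℝ) : ℂ) := by
  simp [linFormR, dotProduct]

lemma ctv_lin {r : ℕ} (k m : ℝ) (a b : Fin r → ℝ) :
    linFormR (k • a + m • b) = C (k : ℂ) * linFormR a + C (m : ℂ) * linFormR b := by
  simp only [linFormR, Finset.mul_sum, ← Finset.sum_add_distrib]
  refine Finset.sum_congr rfl fun i _ => ?_
  simp only [Pi.add_apply, Pi.smul_apply, smul_eq_mul, Complex.ofReal_add, Complex.ofReal_mul,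
    map_add, map_mul]
  ring

lemma ctv_dot_pos {r : ℕ} (a : Fin r → ℝ) (h : a ≠ 0) : a ⬝ᵥ a ≠ 0 := by
  simpa [dotProduct_self_eq_zero] using h

lemma ctv_rank {r : ℕ} {W : Subgroup (Matrix.GeneralLinearGroup (Fin r) ℝ)} (g s : W) :
    Matrix.rank ((1 : Matrix (Fin r) (Fin r) ℝ) - matOfR (g * s * g⁻¹))
      = Matrix.rank ((1 : Matrix (Fin r) (Fin r) ℝ) - matOfR s) := by
  have hm : ∀ a b : W, matOfR (a * b) = matOfR a * matOfR b := fun a b => by simp [matOfR]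
  have h1 : matOfR g * matOfR g⁻¹ = 1 := by
    rw [← hm, mul_inv_cancel]; simp [matOfR]
  have h2 : matOfR g⁻¹ * matOfR g = 1 := by
    rw [← hm, inv_mul_cancel]; simp [matOfR]
  have e : (1 : Matrix (Fin r) (Fin r) ℝ) - matOfR (g * s * g⁻¹)
      = matOfR g * ((1 - matOfR s) * matOfR g⁻¹) := by
    rw [hm, hm, sub_mul, mul_sub, one_mul, h1, mul_assoc]
  have d1 : IsUnit (matOfR g).det := by
    rw [← Matrix.isUnit_iff_isUnit_det]
    exact ⟨⟨_, _, h1, h2⟩, rfl⟩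
  have d2 : IsUnit (matOfR g⁻¹).det := by
    rw [← Matrix.isUnit_iff_isUnit_det]
    exact ⟨⟨_, _, h2, h1⟩, rfl⟩
  rw [e, Matrix.rank_mul_eq_right_of_isUnit_det _ _ d1,
    Matrix.rank_mul_eq_left_of_isUnit_det _ _ d2]

lemma ctv_alg {K : Type} [Field K] (a B D l p q : K) (hp : p ≠ 0) (hq : q ≠ 0) (hD : D ≠ 0)
    (hl : l ≠ 0) (hQ : D * p ^ 2 + B * q ^ 2 - 2 * a * p * q ≠ 0) :
    a * B * q / (p * (D * p ^ 2 + B * q ^ 2 - 2 * a * p * q))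
      - (-(l * a)) * D * (l * (p - 2 * a / D * q)) /
        (q * ((l ^ 2 * B) * q ^ 2 + D * (l * (p - 2 * a / D * q)) ^ 2
          - 2 * (-(l * a)) * q * (l * (p - 2 * a / D * q)))) = a * (p * q)⁻¹ := by
  have e : (l ^ 2 * B) * q ^ 2 + D * (l * (p - 2 * a / D * q)) ^ 2
          - 2 * (-(l * a)) * q * (l * (p - 2 * a / D * q))
      = l ^ 2 * (D * p ^ 2 + B * q ^ 2 - 2 * a * p * q) := by
    field_simp
    ring
  rw [e]
  generalize hQ' : D * p ^ 2 + B * q ^ 2 - 2 * a * p * q = Q at *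
  field_simp
  rw [← hQ']
  ring

/-- For a finite real reflection group `W ⊆ O(ℝ^r)` with set of reflections `S`, roots
`α_s`, and conjugation-invariant parameters `c : S → ℂ`, the rational function
`Σ_{s ≠ u ∈ S} c_s c_u (α_s, α_u)/(α_s(x) α_u(x))` vanishes identically, as an element of
the field `K = ℂ(x₁,…,x_r)`. -/
theorem cross_terms_vanish (r : ℕ) (hr : 1 ≤ r)
    (K : Type) [Field K] [Algebra ℂ K]
    [Algebra (MvPolynomial (Fin r) ℂ) K] [IsScalarTower ℂ (MvPolynomial (Fin r) ℂ) K]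
    [IsFractionRing (MvPolynomial (Fin r) ℂ) K]
    (W : Subgroup (Matrix.GeneralLinearGroup (Fin r) ℝ)) [Finite W]
    (hOrth : ∀ w : W, (Matrix.transpose (matOfR w)) * matOfR w = 1)
    (S : Finset W)
    (hS : ∀ s : W, s ∈ S ↔
      Matrix.rank ((1 : Matrix (Fin r) (Fin r) ℝ) - matOfR s) = 1)
    (hgen : Subgroup.closure (S : Set W) = (⊤ : Subgroup W))
    (α : W → Fin r → ℝ)
    (hα : ∀ s ∈ S, α s ≠ 0)
    (hrefl : ∀ s ∈ S, ∀ v : Fin r → ℝ,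
      Matrix.mulVec (matOfR s) v
        = v - (2 * (∑ i, α s i * v i) / (∑ i, α s i * α s i)) • α s)
    (c : W → ℂ)
    (hc : ∀ (g s : W), s ∈ S → c (g * s * g⁻¹) = c s) :
    ∑ s ∈ S, ∑ u ∈ S.erase s,
        (c s * c u * (((∑ i, α s i * α u i : ℝ) : ℂ))) •
          ((algebraMap (MvPolynomial (Fin r) ℂ) K (linFormR (α s)) *
              algebraMap (MvPolynomial (Fin r) ℂ) K (linFormR (α u)))⁻¹)
      = 0 := by
  classical
  have hrefl' : ∀ s ∈ S, ∀ v : Fin r → ℝ, Matrix.mulVec (matOfR s) v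
        = v - (2 * (α s ⬝ᵥ v) / (α s ⬝ᵥ α s)) • α s := hrefl
  have hm : ∀ a b : W, matOfR (a * b) = matOfR a * matOfR b := fun a b => by simp [matOfR]
  have hconj : ∀ g s : W, s ∈ S → g * s * g⁻¹ ∈ S := fun g s h => by
    rw [hS, ctv_rank, ← hS]; exact h
  have hB : ∀ s ∈ S, α s ⬝ᵥ α s ≠ 0 := fun s h => ctv_dot_pos _ (hα s h)
  -- non-parallel roots
  have hnp : ∀ s ∈ S, ∀ u ∈ S, s ≠ u →
      (α u ⬝ᵥ α u) * (α s ⬝ᵥ α s) - (α s ⬝ᵥ α u) ^ 2 ≠ 0 := by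
    intro s hs u hu hsu h0
    apply hsu
    have hBs := hB s hs
    have hBu := hB u hu
    have ha : α s ⬝ᵥ α u ≠ 0 := by
      intro h
      rw [h] at h0
      have : (α u ⬝ᵥ α u) * (α s ⬝ᵥ α s) = 0 := by linarith
      rcases mul_eq_zero.1 this with h | h
      · exact hBu h
      · exact hBs h
    have hz : (α s ⬝ᵥ α s) • α u - (α s ⬝ᵥ α u) • α s = 0 := by
      rw [← dotProduct_self_eq_zero]
      simp only [sub_dotProduct, dotProduct_sub, smul_dotProduct, dotProduct_smul, smul_eq_mul]
      rw [dotProduct_comm (α u) (α s)]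
      linear_combination (α s ⬝ᵥ α s) * h0
    have hk : α u = ((α s ⬝ᵥ α u) / (α s ⬝ᵥ α s)) • α s := by
      rw [div_eq_inv_mul, mul_smul, ← sub_eq_zero.1 hz, smul_smul, inv_mul_cancel₀ hBs, one_smul]
    have hk0 : (α s ⬝ᵥ α u) / (α s ⬝ᵥ α s) ≠ 0 := div_ne_zero ha hBs
    generalize (α s ⬝ᵥ α u) / (α s ⬝ᵥ α s) = k at hk hk0
    apply Subtype.ext
    apply Units.ext
    change matOfR s = matOfR u
    apply Matrix.mulVec_injective
    funext v
    rw [hrefl' s hs, hrefl' u hu, hk]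
    simp only [smul_dotProduct, dotProduct_smul, smul_eq_mul, smul_smul]
    congr 2
    field_simp
  -- conjugated roots
  have hroot : ∀ s ∈ S, ∀ u ∈ S, ∃ l : ℝ, l ≠ 0 ∧
      α (u * s * u⁻¹) = l • α s + (-(l * (2 * (α s ⬝ᵥ α u) / (α u ⬝ᵥ α u)))) • α u := by
    intro s hs u hu
    have ht := hconj u s hs
    have hBs := hB s hs
    have hBu := hB u hu
    have hBt := hB _ ht
    have e1 : Matrix.mulVec (matOfR (u * s * u⁻¹)) (Matrix.mulVec (matOfR u) (α s))
        = Matrix.mulVec (matOfR u) (Matrix.mulVec (matOfR s) (α s)) := by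
      rw [Matrix.mulVec_mulVec, Matrix.mulVec_mulVec, ← hm, ← hm, inv_mul_cancel_right]
    have e2 : Matrix.mulVec (matOfR s) (α s) = - α s := by
      rw [hrefl' s hs, mul_div_assoc, div_self hBs, mul_one, two_smul]
      abel
    rw [e2, Matrix.mulVec_neg, hrefl' _ ht] at e1
    have hb := hrefl' u hu (α s)
    rw [dotProduct_comm (α u) (α s)] at hb
    have hb0 : Matrix.mulVec (matOfR u) (α s) ≠ 0 := by
      intro h
      rw [hb] at h
      apply hBs
      have h1 : (α s - (2 * (α s ⬝ᵥ α u) / (α u ⬝ᵥ α u)) • α u) ⬝ᵥ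
        (α s - (2 * (α s ⬝ᵥ α u) / (α u ⬝ᵥ α u)) • α u) = α s ⬝ᵥ α s := by
        simp only [sub_dotProduct, dotProduct_sub, smul_dotProduct, dotProduct_smul, smul_eq_mul]
        rw [dotProduct_comm (α u) (α s)]
        field_simp
        ring
      rw [← h1, h, zero_dotProduct]
    generalize Matrix.mulVec (matOfR u) (α s) = b at *
    set t := u * s * u⁻¹ with htdef
    have e3 : b = ((α t ⬝ᵥ b) / (α t ⬝ᵥ α t)) • α t := by
      have : (2 : ℝ) • b = (2 : ℝ) • (((α t ⬝ᵥ b) / (α t ⬝ᵥ α t)) • α t) := by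
        rw [smul_smul, ← mul_div_assoc, two_smul]
        have := sub_eq_iff_eq_add.1 e1
        nth_rewrite 1 [this]
        abel
      exact smul_right_injective _ (two_ne_zero) this
    have hk0 : (α t ⬝ᵥ b) / (α t ⬝ᵥ α t) ≠ 0 := by
      intro h
      rw [h, zero_smul] at e3
      exact hb0 e3
    generalize (α t ⬝ᵥ b) / (α t ⬝ᵥ α t) = k at *
    refine ⟨k⁻¹, inv_ne_zero hk0, ?_⟩
    have : α t = k⁻¹ • b := by rw [e3, smul_smul, inv_mul_cancel₀ hk0, one_smul]
    rw [this, hb, smul_sub, smul_smul, neg_smul, sub_eq_add_neg]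
  -- the embedding
  let φ : ℝ →+* K := (algebraMap ℂ K).comp Complex.ofRealHom
  let L : (Fin r → ℝ) → K := fun v => algebraMap (MvPolynomial (Fin r) ℂ) K (linFormR v)
  have hC : ∀ k : ℝ, algebraMap (MvPolynomial (Fin r) ℂ) K (C (k : ℂ)) = φ k := fun k => by
    change _ = algebraMap ℂ K (k : ℂ)
    rw [IsScalarTower.algebraMap_apply ℂ (MvPolynomial (Fin r) ℂ) K]
    rfl
  have hinj : Function.Injective (algebraMap (MvPolynomial (Fin r) ℂ) K) :=
    IsFractionRing.injective _ _
  have hL : ∀ (k m : ℝ) (a b : Fin r → ℝ), L (k • a + m • b) = φ k * L a + φ m * L b := by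
    intro k m a b
    simp only [L, ctv_lin, map_add, map_mul, hC]
  have hφ : ∀ k : ℝ, k ≠ 0 → φ k ≠ 0 := fun k hk => (map_ne_zero φ).2 hk
  have hL0 : ∀ s ∈ S, L (α s) ≠ 0 := by
    intro s hs h
    have h1 : linFormR (α s) = 0 := hinj (by rw [map_zero]; exact h)
    have h2 := ctv_eval (α s) (α s)
    rw [h1, map_zero] at h2
    exact hB s hs (by exact_mod_cast h2.symm)
  have hQ : ∀ s ∈ S, ∀ u ∈ S, s ≠ u →
      φ (α u ⬝ᵥ α u) * L (α s) ^ 2 + φ (α s ⬝ᵥ α s) * L (α u) ^ 2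
        - 2 * φ (α s ⬝ᵥ α u) * L (α s) * L (α u) ≠ 0 := by
    intro s hs u hu hsu h
    have h1 : C ((α u ⬝ᵥ α u : ℝ) : ℂ) * linFormR (α s) ^ 2
        + C ((α s ⬝ᵥ α s : ℝ) : ℂ) * linFormR (α u) ^ 2
        - 2 * C ((α s ⬝ᵥ α u : ℝ) : ℂ) * linFormR (α s) * linFormR (α u) = 0 := by
      apply hinj
      rw [map_zero, ← h]
      simp only [map_add, map_sub, map_mul, map_pow, hC, map_ofNat, L]
    have h2 := congrArg (MvPolynomial.eval (fun i => ((α s i : ℝ) : ℂ))) h1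
    simp only [map_add, map_sub, map_mul, map_pow, map_ofNat, ctv_eval, eval_C, map_zero] at h2
    have h3 : (α u ⬝ᵥ α u) * (α s ⬝ᵥ α s) ^ 2 + (α s ⬝ᵥ α s) * (α u ⬝ᵥ α s) ^ 2
        - 2 * (α s ⬝ᵥ α u) * (α s ⬝ᵥ α s) * (α u ⬝ᵥ α s) = 0 := by exact_mod_cast h2
    rw [dotProduct_comm (α u) (α s)] at h3
    apply mul_ne_zero (hB s hs) (hnp s hs u hu hsu)
    linear_combination h3
  let H : W → W → K := fun s u => φ (α s ⬝ᵥ α u) * φ (α s ⬝ᵥ α s) * L (α u) /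
    (L (α s) * (φ (α u ⬝ᵥ α u) * L (α s) ^ 2 + φ (α s ⬝ᵥ α s) * L (α u) ^ 2
        - 2 * φ (α s ⬝ᵥ α u) * L (α s) * L (α u)))
  have key : ∀ s ∈ S, ∀ u ∈ S, s ≠ u → H s u - H u (u * s * u⁻¹)
      = φ (α s ⬝ᵥ α u) * (L (α s) * L (α u))⁻¹ := by
    intro s hs u hu hsu
    obtain ⟨l, hl, e⟩ := hroot s hs u hu
    have hBu := hB u hu
    have x1 : L (α (u * s * u⁻¹)) = φ l * (L (α s) - 2 * φ (α s ⬝ᵥ α u) / φ (α u ⬝ᵥ α u) * L (α u)) := by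
      rw [e, hL]
      simp only [map_neg, map_mul, map_div₀, map_ofNat]
      ring
    have x2 : α u ⬝ᵥ α (u * s * u⁻¹) = -(l * (α s ⬝ᵥ α u)) := by
      rw [e]
      simp only [dotProduct_add, dotProduct_smul, smul_eq_mul]
      rw [dotProduct_comm (α u) (α s)]
      field_simp
      ring
    have x3 : α (u * s * u⁻¹) ⬝ᵥ α (u * s * u⁻¹) = l ^ 2 * (α s ⬝ᵥ α s) := by
      rw [e]
      simp only [dotProduct_add, add_dotProduct, smul_dotProduct, dotProduct_smul, smul_eq_mul]
      rw [dotProduct_comm (α u) (α s)]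
      field_simp
      ring
    have := ctv_alg (φ (α s ⬝ᵥ α u)) (φ (α s ⬝ᵥ α s)) (φ (α u ⬝ᵥ α u)) (φ l) (L (α s)) (L (α u))
      (hL0 s hs) (hL0 u hu) (hφ _ hBu) (hφ _ hl) (hQ s hs u hu hsu)
    rw [← this]
    simp only [H, x1, x2, x3, map_neg, map_mul, map_pow]
  have hterm : ∀ s ∈ S, ∀ u ∈ S.erase s,
      (c s * c u * (((∑ i, α s i * α u i : ℝ) : ℂ))) •
          ((algebraMap (MvPolynomial (Fin r) ℂ) K (linFormR (α s)) *
              algebraMap (MvPolynomial (Fin r) ℂ) K (linFormR (α u)))⁻¹)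
      = algebraMap ℂ K (c s * c u) * H s u
        - algebraMap ℂ K (c u * c (u * s * u⁻¹)) * H u (u * s * u⁻¹) := by
    intro s hs u hu
    obtain ⟨hne, hu⟩ := Finset.mem_erase.1 hu
    rw [hc u s hs, mul_comm (c u) (c s), ← mul_sub, key s hs u hu hne.symm, Algebra.smul_def,
      map_mul, mul_assoc]
    rfl
  rw [Finset.sum_congr rfl fun s hs => Finset.sum_congr rfl (hterm s hs)]
  simp only [Finset.sum_sub_distrib]
  rw [sub_eq_zero, Finset.sum_sigma', Finset.sum_sigma']
  symm
  refine Finset.sum_bij' (fun p _ => (⟨p.2, p.2 * p.1 * p.2⁻¹⟩ : Σ _ : W, W))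
    (fun p _ => (⟨p.1⁻¹ * p.2 * p.1, p.1⟩ : Σ _ : W, W)) ?_ ?_ ?_ ?_ ?_
  · rintro ⟨s, u⟩ h
    simp only [Finset.mem_sigma, Finset.mem_erase] at h ⊢
    refine ⟨h.2.2, ?_, hconj _ _ h.1⟩
    intro h'
    apply h.2.1
    have := mul_inv_eq_iff_eq_mul.1 h'
    exact (mul_left_cancel this).symm
  · rintro ⟨s, u⟩ h
    simp only [Finset.mem_sigma, Finset.mem_erase] at h ⊢
    refine ⟨by simpa using hconj s⁻¹ u h.2.2, ?_, h.1⟩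
    intro h'
    apply h.2.1
    have h2 : s * s = u * s := by
      nth_rewrite 2 [h']
      group
    exact (mul_right_cancel h2).symm
  · rintro ⟨s, u⟩ h
    simp [mul_assoc]
  · rintro ⟨s, u⟩ h
    simp [mul_assoc]
  · rintro ⟨s, u⟩ h
    rfl

end
end

section
/- (The sl₂-triple in the rational Cherednik algebra, in the Dunkl representation.) Let W ⊂ O(ℝ^r) be a finite real reflection group with reflections S, roots α_s, conjugation-invariant parameters c : S → ℂ, and let e_1,…,e_r be the standard orthonormal basis. Define endomorphisms of ℂ(x_1,…,x_r): H = Σ_i M_{x_i} ∘ D_{e_i} + (r/2)·Id − Σ_{s∈S} c_s ρ(s), E = −(1/2) Σ_i M_{x_i}^2, F = (1/2) Σ_i D_{e_i}^2, where M_{x_i} is multiplication by x_i and ρ(s) is the action of s. Then (i) H = (1/2) Σ_i (M_{x_i} ∘ D_{e_i} + D_{e_i} ∘ M_{x_i}); and (ii) [H, E] = 2E, [H, F] = −2F, and [E, F] = H. -/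
open MvPolynomial

noncomputable section

/-- The Dunkl operator `D_a` of a real reflection group on `K = ℂ(x₁,…,x_r)`:
`D_a f = ∂_a f − Σ_{s∈S} c_s (α_s, a) (f − s·f)/α_s`. -/
def dunklR (r : ℕ) (K : Type) [Field K] [Algebra ℂ K]
    [Algebra (MvPolynomial (Fin r) ℂ) K] [IsScalarTower ℂ (MvPolynomial (Fin r) ℂ) K]
    {W : Subgroup (Matrix.GeneralLinearGroup (Fin r) ℝ)}
    (S : Finset W) (c : W → ℂ) (α : W → Fin r → ℝ)
    (ρ : W →* (K ≃ₐ[ℂ] K)) (pd : Fin r → Derivation ℂ K K)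
    (a : Fin r → ℝ) : K →ₗ[ℂ] K :=
  (∑ i, (a i : ℂ) • (pd i).toLinearMap)
    - ∑ s ∈ S, (c s * (((∑ i, α s i * a i : ℝ) : ℂ))) •
        ((LinearMap.mulLeft ℂ
            ((algebraMap (MvPolynomial (Fin r) ℂ) K (linFormR (α s)))⁻¹)).comp
          (LinearMap.id - (ρ s).toLinearMap))

/-- Multiplication by the coordinate `xᵢ`, as a `ℂ`-linear endomorphism of `K`. -/
def coordMul (r : ℕ) (K : Type) [Field K] [Algebra ℂ K]
    [Algebra (MvPolynomial (Fin r) ℂ) K] [IsScalarTower ℂ (MvPolynomial (Fin r) ℂ) K]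
    (i : Fin r) : K →ₗ[ℂ] K :=
  LinearMap.mulLeft ℂ (algebraMap (MvPolynomial (Fin r) ℂ) K (MvPolynomial.X i))

section aux
variable {r : ℕ} {K : Type} [Field K] [Algebra ℂ K]
    [Algebra (MvPolynomial (Fin r) ℂ) K] [IsScalarTower ℂ (MvPolynomial (Fin r) ℂ) K]

/-- The coordinate in `K`. -/
def xK (r : ℕ) (K : Type) [Field K] [Algebra ℂ K]
    [Algebra (MvPolynomial (Fin r) ℂ) K] (i : Fin r) : K :=
  algebraMap (MvPolynomial (Fin r) ℂ) K (MvPolynomial.X i)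

theorem der_ext [IsFractionRing (MvPolynomial (Fin r) ℂ) K]
    (D₁ D₂ : Derivation ℂ K K) (h : ∀ i, D₁ (xK r K i) = D₂ (xK r K i)) : D₁ = D₂ := by
  have h1 : D₁.compAlgebraMap (MvPolynomial (Fin r) ℂ) =
      D₂.compAlgebraMap (MvPolynomial (Fin r) ℂ) := by
    apply MvPolynomial.derivation_ext
    intro i
    exact h i
  have h2 : ∀ p : MvPolynomial (Fin r) ℂ, D₁ (algebraMap _ K p) = D₂ (algebraMap _ K p) := by
    intro p
    exact DFunLike.congr_fun h1 p
  ext f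
  obtain ⟨p, q, hq, rfl⟩ := IsFractionRing.div_surjective (A := MvPolynomial (Fin r) ℂ) f
  rw [Derivation.leibniz_div, Derivation.leibniz_div, h2, h2]

/-- Conjugate of a derivation. -/
def conjDer (D : Derivation ℂ K K) (g : K ≃ₐ[ℂ] K) : Derivation ℂ K K :=
  Derivation.mk' (g.symm.toLinearMap ∘ₗ (D : K →ₗ[ℂ] K) ∘ₗ g.toLinearMap) (by
    intro a b
    simp)

theorem conjDer_apply (D : Derivation ℂ K K) (g : K ≃ₐ[ℂ] K) (f : K) :
    conjDer D g f = g.symm (D (g f)) := rfl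

/-- The Euler derivation. -/
def euK (pd : Fin r → Derivation ℂ K K) : Derivation ℂ K K := ∑ i, xK r K i • pd i

theorem euK_apply (pd : Fin r → Derivation ℂ K K) (f : K) :
    euK pd f = ∑ i, xK r K i * pd i f := by
  have h : euK pd f = (Derivation.coeFnAddMonoidHom (∑ i, xK r K i • pd i)) f := rfl
  rw [h, map_sum, Finset.sum_apply]
  rfl

theorem pd_xK (pd : Fin r → Derivation ℂ K K)
    (hpd : ∀ (i : Fin r) (q : MvPolynomial (Fin r) ℂ),
      pd i (algebraMap (MvPolynomial (Fin r) ℂ) K q)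
        = algebraMap (MvPolynomial (Fin r) ℂ) K (MvPolynomial.pderiv i q)) (i j : Fin r) :
    pd i (xK r K j) = if i = j then 1 else 0 := by
  rw [xK, hpd, MvPolynomial.pderiv_X, Pi.single_apply]
  split_ifs <;> simp_all

theorem euK_xK (pd : Fin r → Derivation ℂ K K)
    (hx : ∀ i j, pd i (xK r K j) = if i = j then 1 else 0) (j : Fin r) :
    euK pd (xK r K j) = xK r K j := by
  simp [euK_apply, hx]

theorem lin_eq (a : Fin r → ℝ) : algebraMap (MvPolynomial (Fin r) ℂ) K (linFormR a) =
    ∑ i, (a i : ℂ) • xK r K i := by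
  simp only [linFormR, map_sum, map_mul, xK, Algebra.smul_def]
  refine Finset.sum_congr rfl fun i _ => ?_
  rw [← MvPolynomial.algebraMap_eq, ← IsScalarTower.algebraMap_apply]

theorem euK_lin (pd : Fin r → Derivation ℂ K K)
    (hx : ∀ i j, pd i (xK r K j) = if i = j then 1 else 0) (a : Fin r → ℝ) :
    euK pd (algebraMap (MvPolynomial (Fin r) ℂ) K (linFormR a)) =
      algebraMap (MvPolynomial (Fin r) ℂ) K (linFormR a) := by
  simp [lin_eq, euK_xK pd hx]

theorem euK_pd [IsFractionRing (MvPolynomial (Fin r) ℂ) K] (pd : Fin r → Derivation ℂ K K)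
    (hx : ∀ i j, pd i (xK r K j) = if i = j then 1 else 0) (i : Fin r) (f : K) :
    euK pd (pd i f) = pd i (euK pd f) - pd i f := by
  have : ⁅euK pd, pd i⁆ = - pd i := by
    apply der_ext (r := r)
    intro j
    rw [Derivation.commutator_apply, euK_xK pd hx, Derivation.neg_apply, hx]
    split_ifs <;> simp
  have h := DFunLike.congr_fun this f
  rw [Derivation.commutator_apply, Derivation.neg_apply] at h
  linear_combination h

theorem euK_conj [IsFractionRing (MvPolynomial (Fin r) ℂ) K] (pd : Fin r → Derivation ℂ K K)
    (hx : ∀ i j, pd i (xK r K j) = if i = j then 1 else 0) (g : K ≃ₐ[ℂ] K)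
    (A : Fin r → Fin r → ℂ) (hg : ∀ i, g (xK r K i) = ∑ j, A i j • xK r K j) (f : K) :
    euK pd (g f) = g (euK pd f) := by
  have : conjDer (euK pd) g = euK pd := by
    apply der_ext (r := r)
    intro j
    rw [conjDer_apply, euK_xK pd hx, AlgEquiv.symm_apply_eq, hg]
    simp [euK_xK pd hx]
  rw [← AlgEquiv.symm_apply_eq, ← conjDer_apply, this]

theorem lin_ne [IsFractionRing (MvPolynomial (Fin r) ℂ) K] (a : Fin r → ℝ) (ha : a ≠ 0) :
    algebraMap (MvPolynomial (Fin r) ℂ) K (linFormR a) ≠ 0 := by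
  intro h
  have h0 : linFormR a = 0 := by
    apply IsFractionRing.injective (MvPolynomial (Fin r) ℂ) K
    rw [h, map_zero]
  apply ha
  ext i
  have := congrArg (MvPolynomial.eval (Pi.single i (1 : ℂ))) h0
  simpa [linFormR, Pi.single_apply] using this

theorem mat_inv {W : Subgroup (Matrix.GeneralLinearGroup (Fin r) ℝ)} (s : W)
    (hO : (Matrix.transpose (matOfR s)) * matOfR s = 1) (a : Fin r → ℝ)
    (hrefl : ∀ v : Fin r → ℝ, Matrix.mulVec (matOfR s) v
        = v - (2 * (∑ i, a i * v i) / (∑ i, a i * a i)) • a) (i j : Fin r) :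
    matOfR s⁻¹ i j = (if i = j then 1 else 0) - 2 * a i * a j / (∑ k, a k * a k) := by
  have h1 : matOfR s⁻¹ * matOfR s = 1 := by
    simp only [matOfR]
    rw [← Matrix.GeneralLinearGroup.coe_mul, ← Subgroup.coe_mul]
    simp
  have h2 : matOfR s * (matOfR s).transpose = 1 := mul_eq_one_comm.mp hO
  have h3 : matOfR s⁻¹ = (matOfR s).transpose := by
    calc matOfR s⁻¹ = matOfR s⁻¹ * (matOfR s * (matOfR s).transpose) := by rw [h2, mul_one]
      _ = _ := by rw [← mul_assoc, h1, one_mul]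
  rw [h3, Matrix.transpose_apply]
  have h4 := congrFun (hrefl (Pi.single i 1)) j
  rw [Matrix.mulVec_single_one] at h4
  simp only [Matrix.col_apply, Pi.sub_apply, Pi.smul_apply, smul_eq_mul, Pi.single_apply, mul_ite, mul_one,
    mul_zero, Finset.sum_ite_eq', Finset.mem_univ, if_true] at h4
  rw [h4]
  by_cases hij : i = j
  · subst hij; simp; ring
  · simp [hij, Ne.symm hij]; ring

theorem dunkl_single {W : Subgroup (Matrix.GeneralLinearGroup (Fin r) ℝ)}
    (S : Finset W) (c : W → ℂ) (α : W → Fin r → ℝ)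
    (ρ : W →* (K ≃ₐ[ℂ] K)) (pd : Fin r → Derivation ℂ K K) (i : Fin r) (f : K) :
    dunklR r K S c α ρ pd (Pi.single i 1) f = pd i f - ∑ s ∈ S, (c s * (α s i : ℂ)) •
      ((algebraMap (MvPolynomial (Fin r) ℂ) K (linFormR (α s)))⁻¹ * (f - ρ s f)) := by
  have h1 : ∀ s, (∑ k, α s k * (Pi.single i 1 : Fin r → ℝ) k) = α s i := by
    intro s; simp [Pi.single_apply]
  have h2 : (∑ k, (((Pi.single i 1 : Fin r → ℝ) k : ℝ) : ℂ) • (pd k).toLinearMap) =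
      (pd i).toLinearMap := by
    rw [Finset.sum_eq_single i]
    · simp
    · intro b _ hb; simp [Pi.single_apply, hb]
    · simp
  rw [dunklR, h2]
  simp only [h1, LinearMap.sub_apply, LinearMap.sum_apply, LinearMap.smul_apply,
    LinearMap.comp_apply, LinearMap.mulLeft_apply, LinearMap.id_apply]
  rfl

end aux

/-- **The `sl₂`-triple in the rational Cherednik algebra, in the Dunkl representation.**
For a finite real reflection group `W ⊆ O(ℝ^r)` with reflections `S`, roots `α_s`,
conjugation-invariant parameters `c`, set (as endomorphisms of `K = ℂ(x₁,…,x_r)`)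
`H = Σᵢ xᵢ D_{eᵢ} + (r/2)·Id − Σ_s c_s ρ(s)`, `E = −(1/2)Σᵢ xᵢ²`, `F = (1/2)Σᵢ D_{eᵢ}²`.
Then (i) `H = (1/2)Σᵢ (xᵢ D_{eᵢ} + D_{eᵢ} xᵢ)`, and (ii) `[H,E] = 2E`, `[H,F] = −2F`,
`[E,F] = H`. -/
theorem cherednik_sl2_triple (r : ℕ) (hr : 1 ≤ r)
    (K : Type) [Field K] [Algebra ℂ K]
    [Algebra (MvPolynomial (Fin r) ℂ) K] [IsScalarTower ℂ (MvPolynomial (Fin r) ℂ) K]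
    [IsFractionRing (MvPolynomial (Fin r) ℂ) K]
    (W : Subgroup (Matrix.GeneralLinearGroup (Fin r) ℝ)) [Finite W]
    (hOrth : ∀ w : W, (Matrix.transpose (matOfR w)) * matOfR w = 1)
    (S : Finset W)
    (hS : ∀ s : W, s ∈ S ↔
      Matrix.rank ((1 : Matrix (Fin r) (Fin r) ℝ) - matOfR s) = 1)
    (α : W → Fin r → ℝ)
    (hα : ∀ s ∈ S, α s ≠ 0)
    (hrefl : ∀ s ∈ S, ∀ v : Fin r → ℝ,
      Matrix.mulVec (matOfR s) v
        = v - (2 * (∑ i, α s i * v i) / (∑ i, α s i * α s i)) • α s)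
    (c : W → ℂ)
    (hc : ∀ (g s : W), s ∈ S → c (g * s * g⁻¹) = c s)
    (ρ : W →* (K ≃ₐ[ℂ] K))
    (hρ : ∀ (w : W) (i : Fin r),
      ρ w (algebraMap (MvPolynomial (Fin r) ℂ) K (MvPolynomial.X i)) =
        algebraMap (MvPolynomial (Fin r) ℂ) K
          (∑ j, MvPolynomial.C ((matOfR w⁻¹ i j : ℂ)) * MvPolynomial.X j))
    (pd : Fin r → Derivation ℂ K K)
    (hpd : ∀ (i : Fin r) (q : MvPolynomial (Fin r) ℂ),
      pd i (algebraMap (MvPolynomial (Fin r) ℂ) K q)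
        = algebraMap (MvPolynomial (Fin r) ℂ) K (MvPolynomial.pderiv i q)) :
    ∀ HH EE FF : K →ₗ[ℂ] K,
      HH = (∑ i, (coordMul r K i).comp (dunklR r K S c α ρ pd (Pi.single i 1)))
            + ((r : ℂ) / 2) • (LinearMap.id : K →ₗ[ℂ] K)
            - ∑ s ∈ S, c s • (ρ s).toLinearMap →
      EE = (-(1/2) : ℂ) • ∑ i, (coordMul r K i).comp (coordMul r K i) →
      FF = ((1/2) : ℂ) • ∑ i, (dunklR r K S c α ρ pd (Pi.single i 1)).comp
              (dunklR r K S c α ρ pd (Pi.single i 1)) →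
      (HH = ((1/2) : ℂ) •
          ∑ i, ((coordMul r K i).comp (dunklR r K S c α ρ pd (Pi.single i 1))
            + (dunklR r K S c α ρ pd (Pi.single i 1)).comp (coordMul r K i))) ∧
      HH.comp EE - EE.comp HH = (2 : ℂ) • EE ∧
      HH.comp FF - FF.comp HH = (-2 : ℂ) • FF ∧
      EE.comp FF - FF.comp EE = HH := by
  intro HH EE FF hH hE hF
  have hx := pd_xK pd hpd
  set D : Fin r → K →ₗ[ℂ] K := fun i => dunklR r K S c α ρ pd (Pi.single i 1) with hD
  set L : W → K := fun s => algebraMap (MvPolynomial (Fin r) ℂ) K (linFormR (α s)) with hL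
  have hDa : ∀ i f, D i f = pd i f - ∑ s ∈ S, (c s * (α s i : ℂ)) • ((L s)⁻¹ * (f - ρ s f)) :=
    fun i f => dunkl_single S c α ρ pd i f
  have hLs : ∀ s, L s = ∑ i, (α s i : ℂ) • xK r K i := fun s => lin_eq _
  have hL0 : ∀ s ∈ S, L s ≠ 0 := fun s hs => lin_ne _ (hα s hs)
  have hn0 : ∀ s ∈ S, (∑ k, (α s k : ℂ) * α s k) ≠ 0 := by
    intro s hs h
    apply hα s hs
    have h' : ∑ k, α s k * α s k = 0 := by exact_mod_cast h
    rw [Finset.sum_eq_zero_iff_of_nonneg (fun i _ => mul_self_nonneg _)] at h'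
    ext i
    simpa using h' i (Finset.mem_univ i)
  have hρx : ∀ (w : W) i, ρ w (xK r K i) = ∑ j, (matOfR w⁻¹ i j : ℂ) • xK r K j := by
    intro w i
    rw [xK, hρ]
    exact lin_eq _
  have hρs : ∀ s ∈ S, ∀ i, ρ s (xK r K i) = xK r K i -
      (2 * α s i / (∑ k, (α s k : ℂ) * α s k)) • L s := by
    intro s hs i
    rw [hρx, hLs, Finset.smul_sum]
    have : ∀ j, (matOfR s⁻¹ i j : ℂ) • xK r K j = (if i = j then xK r K j else 0) -
        (2 * α s i / (∑ k, (α s k : ℂ) * α s k)) • ((α s j : ℂ) • xK r K j) := by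
      intro j
      rw [mat_inv s (hOrth s) (α s) (hrefl s hs), smul_smul]
      push_cast
      rw [sub_smul]
      congr 1
      · split_ifs <;> simp
      · congr 1; ring
    simp only [this, Finset.sum_sub_distrib, Finset.sum_ite_eq, Finset.mem_univ, if_true]
  set R : K := ∑ i, xK r K i * xK r K i with hR
  have hRs : ∀ s ∈ S, ρ s R = R := by
    intro s hs
    have hn := hn0 s hs
    set n := (∑ k, (α s k : ℂ) * α s k) with hnd
    have e : ∀ i, ρ s (xK r K i * xK r K i) = xK r K i * xK r K i
        - (4 / n) • (L s * ((α s i : ℂ) • xK r K i))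
        + (4 / n ^ 2) • (((α s i : ℂ) * α s i) • (L s * L s)) := by
      intro i
      rw [map_mul, hρs s hs]
      simp only [Algebra.smul_def, map_mul, map_div₀, map_pow, map_ofNat]
      ring
    rw [hR, map_sum]
    simp only [e]
    rw [Finset.sum_add_distrib, Finset.sum_sub_distrib, ← Finset.smul_sum, ← Finset.smul_sum,
      ← Finset.mul_sum, ← hLs, ← Finset.sum_smul, ← hnd, smul_smul]
    have : 4 / n ^ 2 * n = 4 / n := by field_simp
    rw [this]; simp
  have hEuL : ∀ s, euK pd (L s) = L s := fun s => euK_lin pd hx _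
  have hEuρ : ∀ (s : W) f, euK pd (ρ s f) = ρ s (euK pd f) := fun s f =>
    euK_conj pd hx (ρ s) (fun i j => (matOfR s⁻¹ i j : ℂ)) (hρx s) f
  have hEuR : euK pd R = 2 * R := by
    rw [hR, map_sum, Finset.mul_sum]
    refine Finset.sum_congr rfl fun i _ => ?_
    rw [Derivation.leibniz, euK_xK pd hx]; simp; ring
  have hpdR : ∀ i, pd i R = 2 * xK r K i := by
    intro i
    rw [hR, map_sum, Finset.sum_eq_single i]
    · rw [Derivation.leibniz, hx]; simp; ring
    · intro j _ hj
      rw [Derivation.leibniz, hx]; simp [Ne.symm hj]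
    · simp
  -- commutators
  have hDR : ∀ i f, D i (R * f) = R * D i f + 2 * (xK r K i * f) := by
    intro i f
    rw [hDa, hDa, Derivation.leibniz, hpdR, mul_sub, Finset.mul_sum]
    have : ∑ s ∈ S, (c s * (α s i : ℂ)) • ((L s)⁻¹ * (R * f - ρ s (R * f))) =
        ∑ s ∈ S, R * ((c s * (α s i : ℂ)) • ((L s)⁻¹ * (f - ρ s f))) := by
      refine Finset.sum_congr rfl fun s hs => ?_
      rw [map_mul, hRs s hs, mul_smul_comm]
      congr 1; ring
    rw [this]; simp only [smul_eq_mul]; ring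
  have hEuD : ∀ i f, euK pd (D i f) = D i (euK pd f) - D i f := by
    intro i f
    rw [hDa, hDa, map_sub, euK_pd pd hx, map_sum]
    have : ∀ s ∈ S, euK pd ((c s * (α s i : ℂ)) • ((L s)⁻¹ * (f - ρ s f))) =
        (c s * (α s i : ℂ)) • ((L s)⁻¹ * (euK pd f - ρ s (euK pd f))) -
        (c s * (α s i : ℂ)) • ((L s)⁻¹ * (f - ρ s f)) := by
      intro s hs
      have h0 := hL0 s hs
      rw [Derivation.map_smul, Derivation.leibniz, Derivation.leibniz_inv, hEuL, map_sub, hEuρ, ← smul_sub]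
      congr 1
      simp only [smul_eq_mul]
      field_simp
      ring
    rw [Finset.sum_congr rfl this, Finset.sum_sub_distrib]
    ring
  have hxD : ∀ f, ∑ i, xK r K i * D i f = euK pd f - ∑ s ∈ S, c s • (f - ρ s f) := by
    intro f
    simp only [hDa, mul_sub, Finset.sum_sub_distrib, ← euK_apply, Finset.mul_sum]
    congr 1
    rw [Finset.sum_comm]
    refine Finset.sum_congr rfl fun s hs => ?_
    have h0 := hL0 s hs
    have : ∀ i, xK r K i * (c s * (α s i : ℂ)) • ((L s)⁻¹ * f - (L s)⁻¹ * ρ s f) =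
      ((α s i : ℂ) • xK r K i) * (c s • ((L s)⁻¹ * (f - ρ s f))) := by
      intro i; simp only [Algebra.smul_def, map_mul]; ring
    simp only [this]
    rw [← Finset.sum_mul, ← hLs, mul_smul_comm, mul_inv_cancel_left₀ h0]
  have hDx : ∀ f, ∑ i, D i (xK r K i * f) = ∑ i, xK r K i * D i f + (r : ℂ) • f
      - (2 : ℂ) • ∑ s ∈ S, c s • ρ s f := by
    intro f
    have e : ∀ i, D i (xK r K i * f) = xK r K i * D i f + f -
        ∑ s ∈ S, (2 * c s * ((α s i : ℂ) * α s i) / (∑ k, (α s k : ℂ) * α s k)) • ρ s f := by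
      intro i
      rw [hDa, hDa, Derivation.leibniz, hx, mul_sub, Finset.mul_sum]
      have : ∑ s ∈ S, (c s * (α s i : ℂ)) • ((L s)⁻¹ * (xK r K i * f - ρ s (xK r K i * f))) =
          ∑ s ∈ S, xK r K i * ((c s * (α s i : ℂ)) • ((L s)⁻¹ * (f - ρ s f))) +
          ∑ s ∈ S, (2 * c s * ((α s i : ℂ) * α s i) / (∑ k, (α s k : ℂ) * α s k)) • ρ s f := by
        rw [← Finset.sum_add_distrib]
        refine Finset.sum_congr rfl fun s hs => ?_
        have h0 := hL0 s hs
        rw [map_mul, hρs s hs]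
        simp only [Algebra.smul_def, map_mul, map_div₀, map_ofNat]
        linear_combination (algebraMap ℂ K (c s) * (algebraMap ℂ K (α s i)) * 2 *
          algebraMap ℂ K (α s i) / algebraMap ℂ K (∑ k, (α s k : ℂ) * α s k) * ρ s f) *
          (inv_mul_cancel₀ h0)
      rw [this]; simp; ring
    simp only [e]
    rw [Finset.sum_sub_distrib, Finset.sum_add_distrib, Finset.sum_comm]
    congr 1
    · simp [Algebra.smul_def]
    · rw [Finset.smul_sum]
      refine Finset.sum_congr rfl fun s hs => ?_
      rw [← Finset.sum_smul, smul_smul, ← Finset.sum_div, ← Finset.mul_sum,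
        mul_div_assoc, div_self (hn0 s hs), mul_one]
  have hM : ∀ i f, coordMul r K i f = xK r K i * f := fun i f => rfl
  have hHf : ∀ f, HH f = ∑ i, xK r K i * D i f + ((r : ℂ) / 2) • f - ∑ s ∈ S, c s • ρ s f := by
    intro f
    rw [hH]
    simp only [LinearMap.sub_apply, LinearMap.add_apply, LinearMap.sum_apply,
      LinearMap.smul_apply, LinearMap.comp_apply, LinearMap.id_apply, hM]
    rfl
  have hHe : ∀ f, HH f = euK pd f + ((r : ℂ) / 2 - ∑ s ∈ S, c s) • f := by
    intro f
    rw [hHf, hxD]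
    simp only [smul_sub, Finset.sum_sub_distrib, sub_smul, Finset.sum_smul]
    ring
  have hEf : ∀ f, EE f = (-(1/2) : ℂ) • (R * f) := by
    intro f
    rw [hE]
    simp only [LinearMap.smul_apply, LinearMap.sum_apply, LinearMap.comp_apply, hM]
    rw [hR, Finset.sum_mul]
    simp only [mul_assoc]
  have hFf : ∀ f, FF f = ((1/2) : ℂ) • ∑ i, D i (D i f) := by
    intro f
    rw [hF]
    simp only [LinearMap.smul_apply, LinearMap.sum_apply, LinearMap.comp_apply, hD]
  refine ⟨?_, ?_, ?_, ?_⟩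
  · ext f
    simp only [LinearMap.smul_apply, LinearMap.sum_apply, LinearMap.add_apply,
      LinearMap.comp_apply, hM]
    rw [Finset.sum_add_distrib, hDx, hHf]
    module
  · ext f
    simp only [LinearMap.sub_apply, LinearMap.smul_apply, LinearMap.comp_apply]
    rw [hHe, hEf, hEf, hHe, Derivation.map_smul, Derivation.leibniz, hEuR]
    simp only [Algebra.smul_def, smul_eq_mul, map_ofNat]
    simp
    ring
  · ext f
    simp only [LinearMap.sub_apply, LinearMap.smul_apply, LinearMap.comp_apply]
    have h1 : euK pd (FF f) = FF (euK pd f) - (2 : ℂ) • FF f := by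
      rw [hFf, hFf, Derivation.map_smul, map_sum]
      simp only [hEuD, map_sub, Finset.sum_sub_distrib]
      module
    rw [hHe, h1, hHe, map_add, map_smul]
    module
  · ext f
    simp only [LinearMap.sub_apply, LinearMap.comp_apply]
    have h1 : ∑ i, D i (D i (R * f)) = R * ∑ i, D i (D i f) + (4 : ℂ) • HH f := by
      have e : ∀ i, D i (D i (R * f)) = R * D i (D i f) + (2 : ℂ) • (xK r K i * D i f) +
          (2 : ℂ) • D i (xK r K i * f) := by
        intro i
        have : (2 : K) * (xK r K i * f) = (2 : ℂ) • (xK r K i * f) := by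
          rw [Algebra.smul_def, map_ofNat]
        rw [hDR, map_add, hDR, this, map_smul, Algebra.smul_def (2 : ℂ) (xK r K i * D i f),
          map_ofNat]
      simp only [e, Finset.sum_add_distrib, ← Finset.mul_sum, ← Finset.smul_sum]
      rw [hDx, hHf]
      module
    rw [hEf, hFf, hEf, map_smul, hFf, h1]
    rw [mul_smul_comm]
    module

end
end

section
/- (Uniqueness lemma; R. Raj.) Let n ≥ 1 and let ψ be a polynomial in variables p_1,…,p_n with coefficients in the field ℂ(x_1,…,x_n) of rational functions (i.e. ψ is a rational function on ℂ^n × ℂ^n that is polynomial in p). Let f ∈ ℂ[p_1,…,p_n] be a polynomial such that the gradients ∇f(p), as p ranges over ℂ^n, span ℂ^n (for example f(p) = p_1^2 + ⋯ + p_n^2). If the Poisson bracket of ψ and f vanishes, i.e. Σ_{i=1}^n (∂ψ/∂x_i)(∂f/∂p_i) = 0, then all coefficients of ψ (as a polynomial in p) are polynomials in x; that is, ψ ∈ ℂ[x_1,…,x_n,p_1,…,p_n]. -/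
open MvPolynomial

lemma raj_pderiv_zero {n : ℕ} (g : MvPolynomial (Fin n) ℂ) (hg : g ≠ 0) (j : Fin n)
    (h : g ∣ pderiv j g) : pderiv j g = 0 := by
  by_contra hne
  obtain ⟨q, hq⟩ := h
  have hq0 : q ≠ 0 := by
    rintro rfl
    exact hne (by simpa using hq)
  have h1 : degreeOf j g ≤ degreeOf j (pderiv j g) := by
    rw [hq, degreeOf_mul_eq hg hq0]
    exact Nat.le_add_right _ _
  have key : ∀ m ∈ (pderiv j g).support, m j + 1 ≤ degreeOf j g := by
    intro m hm
    rw [mem_support_iff, coeff_pderiv] at hm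
    have h2 : m + Finsupp.single j 1 ∈ g.support := by
      rw [mem_support_iff]
      exact left_ne_zero_of_mul hm
    simpa using degreeOf_le_iff.mp (le_refl (degreeOf j g)) _ h2
  obtain ⟨m, hm⟩ := support_nonempty.mpr hne
  have hpos : 0 < degreeOf j g := by have := key m hm; omega
  have := (degreeOf_lt_iff hpos).mpr (fun m hm => key m hm)
  omega

lemma raj_eval {n : ℕ} (pt : Fin n → ℂ) (p : MvPolynomial (Fin n) ℂ) :
    MvPolynomial.eval (fun i => (C (pt i) : MvPolynomial (Fin n) ℂ))
      (MvPolynomial.map (C : ℂ →+* MvPolynomial (Fin n) ℂ) p) = C (MvPolynomial.eval pt p) := by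
  induction p using MvPolynomial.induction_on with
  | C a => rw [map_C, eval_C, eval_C]
  | add p q hp hq => rw [map_add, map_add, map_add, map_add, hp, hq]
  | mul_X p j hp => rw [map_mul, map_mul, map_mul, map_mul, hp, map_X, eval_X, eval_X]

lemma raj_isUnit {n : ℕ} (g : MvPolynomial (Fin n) ℂ) (hg : g ≠ 0)
    (h : ∀ j, g ∣ pderiv j g) : IsUnit g := by
  have h0 : g = C (coeff 0 g) := by
    ext m
    rw [coeff_C]
    split_ifs with hm
    · rw [← hm]
    · obtain ⟨j, hj⟩ := Finsupp.ne_iff.mp (Ne.symm hm)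
      have h1 := congrArg (coeff (m - Finsupp.single j 1)) (raj_pderiv_zero g hg j (h j))
      have h2 : m - Finsupp.single j 1 + Finsupp.single j 1 = m := by
        apply tsub_add_cancel_of_le
        rw [Finsupp.single_le_iff]
        exact Nat.one_le_iff_ne_zero.mpr hj
      rw [coeff_pderiv, h2, coeff_zero] at h1
      refine (mul_eq_zero.mp h1).resolve_right ?_
      exact Nat.cast_add_one_ne_zero _
  have hc : coeff 0 g ≠ 0 := by
    intro hc
    rw [hc, C_0] at h0
    exact hg h0
  rw [h0]
  exact (isUnit_iff_ne_zero.mpr hc).map C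



/-- **Uniqueness lemma (R. Raj).**  Let `K = ℂ(x₁,…,xₙ)` be the field of rational functions
(formalized as an arbitrary fraction field of `ℂ[x₁,…,xₙ]`), let `∂ᵢ` be the partial
derivatives on `K` (the unique derivations extending `pderiv i` on polynomials), and let
`Dxᵢ` be the coefficientwise extensions of `∂ᵢ` to `K[p₁,…,pₙ]` (the unique derivations with
`Dxᵢ (C a) = C (∂ᵢ a)` and `Dxᵢ pⱼ = 0`).  Let `ψ ∈ K[p₁,…,pₙ]` (a rational function of `x`
polynomial in `p`), and let `f ∈ ℂ[p₁,…,pₙ]` be a polynomial whose gradients `∇f(p)`,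
`p ∈ ℂⁿ`, span `ℂⁿ`.  If the Poisson bracket `Σᵢ (∂ψ/∂xᵢ)(∂f/∂pᵢ)` vanishes, then every
coefficient of `ψ` is a polynomial, i.e. lies in the image of `ℂ[x₁,…,xₙ]` in `K`. -/
theorem raj_lemma (n : ℕ) (hn : 1 ≤ n)
    (K : Type) [Field K] [Algebra ℂ K]
    [Algebra (MvPolynomial (Fin n) ℂ) K] [IsScalarTower ℂ (MvPolynomial (Fin n) ℂ) K]
    [IsFractionRing (MvPolynomial (Fin n) ℂ) K]
    (pd : Fin n → Derivation ℂ K K)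
    (hpd : ∀ (i : Fin n) (q : MvPolynomial (Fin n) ℂ),
      pd i (algebraMap (MvPolynomial (Fin n) ℂ) K q)
        = algebraMap (MvPolynomial (Fin n) ℂ) K (MvPolynomial.pderiv i q))
    (Dx : Fin n → Derivation ℂ (MvPolynomial (Fin n) K) (MvPolynomial (Fin n) K))
    (hDxC : ∀ (i : Fin n) (a : K), Dx i (MvPolynomial.C a) = MvPolynomial.C (pd i a))
    (hDxX : ∀ i j : Fin n, Dx i (MvPolynomial.X j) = 0)
    (ψ : MvPolynomial (Fin n) K)
    (f : MvPolynomial (Fin n) ℂ)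
    (hf : Submodule.span ℂ
        (Set.range fun pt : Fin n → ℂ =>
          (fun i => MvPolynomial.eval pt (MvPolynomial.pderiv i f) : Fin n → ℂ))
      = (⊤ : Submodule ℂ (Fin n → ℂ)))
    (hPoisson : ∑ i : Fin n,
        Dx i ψ * MvPolynomial.map (algebraMap ℂ K) (MvPolynomial.pderiv i f) = 0) :
    ∀ m : Fin n →₀ ℕ,
      MvPolynomial.coeff m ψ ∈ Set.range (algebraMap (MvPolynomial (Fin n) ℂ) K) := by
  classical
  have hinj : Function.Injective (algebraMap (MvPolynomial (Fin n) ℂ) K) := IsFractionRing.injective (MvPolynomial (Fin n) ℂ) K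
  let M : MvPolynomial (Fin n) (MvPolynomial (Fin n) ℂ) →+* MvPolynomial (Fin n) K := MvPolynomial.map (algebraMap (MvPolynomial (Fin n) ℂ) K)
  have hMinj : Function.Injective M := MvPolynomial.map_injective _ hinj
  -- derivative of integral polynomials is integral
  have hD : ∀ i (φ : MvPolynomial (Fin n) (MvPolynomial (Fin n) ℂ)), ∃ θ, M θ = Dx i (M φ) := by
    intro i φ
    induction φ using MvPolynomial.induction_on with
    | C a =>
      refine ⟨C (pderiv i a), ?_⟩
      simp only [M, map_C]
      rw [hDxC, hpd]
    | add p q hp hq =>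
      obtain ⟨a, ha⟩ := hp
      obtain ⟨b, hb⟩ := hq
      exact ⟨a + b, by rw [map_add, map_add, map_add, ha, hb]⟩
    | mul_X p j hp =>
      obtain ⟨a, ha⟩ := hp
      refine ⟨X j * a, ?_⟩
      have hX : M (X j) = X j := map_X _ _
      rw [map_mul, map_mul, Derivation.leibniz, hX, hDxX, ha]
      simp
  -- a common denominator
  obtain ⟨q, Ψ₀, hq0, hqψ⟩ : ∃ (q : (MvPolynomial (Fin n) ℂ)) (Ψ₀ : MvPolynomial (Fin n) (MvPolynomial (Fin n) ℂ)), q ≠ 0 ∧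
      M (C q) * ψ = M Ψ₀ := by
    let _ : Algebra (MvPolynomial (Fin n) (MvPolynomial (Fin n) ℂ)) (MvPolynomial (Fin n) K) :=
      MvPolynomial.algebraMvPolynomial
    obtain ⟨⟨Ψ₀, s⟩, hs⟩ := IsLocalization.surj
      (M := (nonZeroDivisors (MvPolynomial (Fin n) ℂ)).map (C (σ := Fin n))) ψ
    obtain ⟨q, hq, hqs⟩ := s.2
    refine ⟨q, Ψ₀, nonZeroDivisors.ne_zero hq, ?_⟩
    have hs' : ψ * M (s : MvPolynomial (Fin n) (MvPolynomial (Fin n) ℂ)) = M Ψ₀ := hs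
    rw [← hqs] at hs'
    rw [mul_comm]
    exact hs'
  obtain ⟨a, Ψ, c, hrel, hca, hcΨ⟩ : ∃ a' b' c', IsRelPrime a' b' ∧ c' * a' = C q ∧ c' * b' = Ψ₀ := by
    obtain ⟨b', a', c', h1, h2, h3⟩ :=
      UniqueFactorizationMonoid.exists_reduced_factors' Ψ₀ (C q) (by simpa using hq0)
    exact ⟨a', b', c', h1.symm, h3, h2⟩
  have hCq : (C q : MvPolynomial (Fin n) (MvPolynomial (Fin n) ℂ)) ≠ 0 := by simpa using hq0
  have hc0 : c ≠ 0 := by rintro rfl; exact hCq (by rw [← hca]; simp)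
  obtain ⟨g, -, rfl⟩ := (dvd_C_iff_exists hq0).mp (Dvd.intro_left c hca)
  have hg0 : g ≠ 0 := by rintro rfl; exact hCq (by rw [← hca]; simp)
  have hgψ : M (C g) * ψ = M Ψ := by
    apply mul_left_cancel₀ ((map_ne_zero_iff M hMinj).mpr hc0)
    rw [← mul_assoc, ← map_mul, ← map_mul, hca, hcΨ, hqψ]
  -- key divisibility
  let F : Fin n → MvPolynomial (Fin n) (MvPolynomial (Fin n) ℂ) := fun i => MvPolynomial.map (C : ℂ →+* (MvPolynomial (Fin n) ℂ)) (pderiv i f)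
  have hF : ∀ i, M (F i) = MvPolynomial.map (algebraMap ℂ K) (pderiv i f) := by
    intro i
    simp only [M, F, MvPolynomial.map_map]
    congr 1
    rw [IsScalarTower.algebraMap_eq ℂ (MvPolynomial (Fin n) ℂ) K]
    rfl
  choose θ hθ using fun i => hD i Ψ
  have hL : ∀ i, M (θ i) = M (C g) * Dx i ψ + ψ * M (C (pderiv i g)) := by
    intro i
    have h1 : M (C g) = C (algebraMap (MvPolynomial (Fin n) ℂ) K g) := map_C _ _
    have h2 : M (C (pderiv i g)) = C (algebraMap (MvPolynomial (Fin n) ℂ) K (pderiv i g)) := map_C _ _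
    rw [hθ, ← hgψ, Derivation.leibniz, h1, hDxC, hpd, h2]
    simp only [smul_eq_mul]
  have hdvd : C g ∣ Ψ * ∑ i, C (pderiv i g) * F i := by
    refine ⟨∑ i, θ i * F i, hMinj ?_⟩
    rw [map_mul, map_mul, map_sum, map_sum, ← hgψ]
    have h3 : ∑ i, M (θ i * F i) = ψ * ∑ i, M (C (pderiv i g) * F i) := by
      have h4 : ∀ i, M (θ i * F i) =
          M (C g) * (Dx i ψ * MvPolynomial.map (algebraMap ℂ K) (pderiv i f))
            + ψ * M (C (pderiv i g) * F i) := by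
        intro i
        rw [map_mul, map_mul, hL, hF]
        ring
      rw [Finset.sum_congr rfl (fun i _ => h4 i), Finset.sum_add_distrib, ← Finset.mul_sum,
        hPoisson, mul_zero, zero_add, Finset.mul_sum]
    rw [h3, mul_assoc]
  have hdvd2 : C g ∣ ∑ i, C (pderiv i g) * F i := hrel.dvd_of_dvd_mul_left hdvd
  -- evaluate at points
  let S : Submodule ℂ (Fin n → ℂ) :=
    { carrier := {v | g ∣ ∑ i, pderiv i g * C (v i)}
      zero_mem' := by simp
      add_mem' := by
        intro v w hv hw
        have := dvd_add hv hw
        rw [← Finset.sum_add_distrib] at this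
        simpa [mul_add] using this
      smul_mem' := by
        intro r v hv
        have := Dvd.dvd.mul_left hv (C r)
        rw [Finset.mul_sum] at this
        simpa [mul_left_comm] using this }
  have hS : S = ⊤ := by
    rw [eq_top_iff, ← hf, Submodule.span_le]
    rintro _ ⟨pt, rfl⟩
    have h5 := map_dvd (MvPolynomial.eval (fun i => (C (pt i) : (MvPolynomial (Fin n) ℂ)))) hdvd2
    have h6 : ∀ i, MvPolynomial.eval (fun i => (C (pt i) : (MvPolynomial (Fin n) ℂ))) (F i)
        = C (MvPolynomial.eval pt (pderiv i f)) := by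
      intro i
      exact raj_eval pt _
    simp only [map_sum, map_mul, eval_C, h6] at h5
    exact h5
  have hunit : IsUnit g := by
    apply raj_isUnit g hg0
    intro j
    have h7 : (Pi.single j 1 : Fin n → ℂ) ∈ S := by rw [hS]; trivial
    have h8 : g ∣ ∑ i, pderiv i g * C ((Pi.single j 1 : Fin n → ℂ) i) := h7
    rw [Finset.sum_eq_single j] at h8
    · simpa using h8
    · intro b _ hb
      simp [hb]
    · simp
  obtain ⟨u, hu⟩ := hunit.exists_left_inv
  intro m
  refine ⟨coeff m (C u * Ψ), ?_⟩
  have h9 : M (C u * Ψ) = ψ := by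
    rw [map_mul, ← hgψ, ← mul_assoc, ← map_mul, ← C_mul, hu]
    simp
  rw [← h9]
  exact (coeff_map _ _ _).symm
end

section
/- (The Amitsur–Levitzki identity.) Let A be a commutative ring, N ≥ 1, and let X_1, …, X_{2N} be N×N matrices with entries in A. Then Σ_{σ ∈ S_{2N}} sgn(σ) · X_{σ(1)} X_{σ(2)} ⋯ X_{σ(2N)} = 0 in the matrix ring Mat_N(A). -/
open Polynomial in
lemma al_deriv {R : Type*} [CommRing R] {n : Type*} [Fintype n] [DecidableEq n] (M : Matrix n n R) :
    derivative M.charpoly = (M.charmatrix.adjugate).trace := by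
  have hd : ∀ A : Matrix n n R[X], A.det = ∑ σ : Equiv.Perm n, ((Equiv.Perm.sign σ : ℤ) : R[X]) * ∏ i, A i (σ i) := by
    intro A
    rw [← Matrix.det_transpose, Matrix.det_apply']
    rfl
  rw [Matrix.charpoly, Matrix.trace]
  simp only [Matrix.diag_apply, Matrix.adjugate_apply]
  simp only [hd]
  rw [derivative_sum, Finset.sum_comm]
  refine Finset.sum_congr rfl fun σ _ => ?_
  rw [derivative_intCast_mul, derivative_prod_finset, Finset.mul_sum]
  refine Finset.sum_congr rfl fun i _ => ?_
  congr 1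
  rw [← Finset.mul_prod_erase Finset.univ _ (Finset.mem_univ i), mul_comm]
  congr 1
  · simp only [Matrix.updateRow_self, Matrix.charmatrix_apply, Matrix.diagonal_apply, Pi.single_apply]
    by_cases h : i = σ i
    · simp [← h]
    · simp [h, Ne.symm h]
  · refine Finset.prod_congr rfl fun j hj => ?_
    rw [Matrix.updateRow_ne (Finset.ne_of_mem_erase hj)]

open Polynomial in
lemma al_newton {R : Type*} [CommRing R] [Algebra ℚ R] {N : ℕ} (M : Matrix (Fin N) (Fin N) R)
    (hM : ∀ k, (M ^ (k+1)).trace = 0) : M ^ N = 0 := by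
  nontriviality R
  set B := matPolyEquiv M.charmatrix.adjugate with hB
  have h1 : (X - C M) * B = matPolyEquiv (M.charpoly • 1) := by
    rw [hB, ← Matrix.matPolyEquiv_charmatrix, ← map_mul, Matrix.mul_adjugate]; rfl
  have hc : ∀ k, (matPolyEquiv (M.charpoly • (1 : Matrix (Fin N) (Fin N) R[X]))).coeff k = M.charpoly.coeff k • 1 := by
    intro k
    ext i j
    rw [matPolyEquiv_coeff_apply]
    by_cases h : i = j <;> simp [Matrix.one_apply, h]
  have h0 : - (M * B.coeff 0) = M.charpoly.coeff 0 • 1 := by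
    rw [← hc, ← h1]; simp [sub_mul, mul_coeff_zero]
  have hs : ∀ k, B.coeff k = M * B.coeff (k+1) + M.charpoly.coeff (k+1) • 1 := by
    intro k
    rw [← hc, ← h1]; simp [sub_mul, coeff_X_mul]
  have htr : ∀ d k, B.natDegree + 1 ≤ k + d → ∀ i, (M^(i+1) * B.coeff k).trace = 0 := by
    intro d
    induction d with
    | zero => intro k hk i; rw [coeff_eq_zero_of_natDegree_lt (by omega)]; simp
    | succ d ih =>
      intro k hk i
      rw [hs k, mul_add, ← mul_assoc, ← pow_succ, Matrix.trace_add, ih (k+1) (by omega) (i+1)]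
      simp [hM]
  have htr1 : ∀ k, (M * B.coeff k).trace = 0 := fun k => by
    simpa using htr (B.natDegree + 1) k (by omega) 0
  have hder : ∀ k, (B.coeff k).trace = M.charpoly.coeff (k+1) * (k+1) := by
    intro k
    rw [← coeff_derivative, al_deriv, Matrix.trace, Matrix.trace, finsetSum_coeff]
    simp [hB, matPolyEquiv_coeff_apply]
  have hz : ∀ k, k ≠ N → M.charpoly.coeff k = 0 := by
    intro k hk
    have key : M.charpoly.coeff k * ((N : R) - k) = 0 := by
      cases k with
      | zero =>
        have := congrArg Matrix.trace h0
        simp [htr1] at this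
        simpa using this.symm
      | succ k =>
        have := congrArg Matrix.trace (hs k)
        simp [htr1, hder] at this
        push_cast
        linear_combination -this
    have hu : IsUnit ((N : R) - k) := by
      have : ((N : R) - k) = algebraMap ℚ R (N - k) := by simp
      rw [this]
      refine IsUnit.map _ (IsUnit.mk0 _ ?_)
      rw [sub_ne_zero]; exact_mod_cast hk.symm
    exact hu.mul_left_eq_zero.mp key
  have hp : M.charpoly = X ^ N := by
    have hm := M.charpoly_monic
    have hn := M.charpoly_natDegree_eq_dim
    rw [Fintype.card_fin] at hn
    ext k
    rw [coeff_X_pow]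
    split_ifs with h
    · have := hm.coeff_natDegree
      rw [hn] at this
      rw [h, this]
    · exact hz k h
  have := M.aeval_self_charpoly
  rw [hp] at this
  simpa using this

lemma al_central {R V : Type*} [CommRing R] [AddCommGroup V] [Module R V] (v w : V) :
    ExteriorAlgebra.ι R v * ExteriorAlgebra.ι R w ∈ Subalgebra.center R (ExteriorAlgebra R V) := by
  rw [Subalgebra.mem_center_iff]
  intro b
  have sw : ∀ x y : V, ExteriorAlgebra.ι R x * ExteriorAlgebra.ι R y = - (ExteriorAlgebra.ι R y * ExteriorAlgebra.ι R x) :=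
    fun x y => eq_neg_of_add_eq_zero_left (ExteriorAlgebra.ι_add_mul_swap x y)
  induction b using ExteriorAlgebra.induction with
  | algebraMap r => exact Algebra.commutes r _
  | ι x => rw [← mul_assoc, sw x v, neg_mul, mul_assoc, sw x w, mul_neg, neg_neg, mul_assoc]
  | mul a b ha hb => rw [mul_assoc, hb, ← mul_assoc, ha, mul_assoc]
  | add a b ha hb => rw [add_mul, mul_add, ha, hb]

lemma al_ext_pow {R V : Type*} [CommRing R] [Algebra ℚ R] [AddCommGroup V] [Module R V] {N : ℕ}
    (x : Matrix (Fin N) (Fin N) V) :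
    (x.map (ExteriorAlgebra.ι R)) ^ (2 * N) = 0 := by
  set Y := x.map (ExteriorAlgebra.ι R) with hY
  have hc : ∀ a b, (Y * Y) a b ∈ Subalgebra.center R (ExteriorAlgebra R V) := by
    intro a b
    rw [Matrix.mul_apply]
    exact Subalgebra.sum_mem _ fun c _ => al_central _ _
  let M : Matrix (Fin N) (Fin N) (Subalgebra.center R (ExteriorAlgebra R V)) := fun a b => ⟨_, hc a b⟩
  let φ : Subalgebra.center R (ExteriorAlgebra R V) →+* ExteriorAlgebra R V :=
    (Subalgebra.center R (ExteriorAlgebra R V)).val.toRingHom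
  have hφ : Function.Injective φ := Subtype.val_injective
  have hMY : φ.mapMatrix M = Y * Y := rfl
  letI : Algebra ℚ (Subalgebra.center R (ExteriorAlgebra R V)) :=
    ((algebraMap R (Subalgebra.center R (ExteriorAlgebra R V))).comp (algebraMap ℚ R)).toAlgebra
  have key : M ^ N = 0 := by
    apply al_newton
    intro k
    apply hφ
    rw [map_zero]
    have e1 : φ (M ^ (k+1)).trace = ((φ.mapMatrix (M ^ k)) * Y * Y).trace := by
      rw [mul_assoc, ← hMY, ← map_mul, ← pow_succ]
      exact AddMonoidHom.map_trace φ.toAddMonoidHom _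
    have e2 : (φ.mapMatrix (M ^ k)) * Y = Y * φ.mapMatrix (M ^ k) := by
      rw [map_pow, hMY]
      exact ((Commute.refl Y).mul_left (Commute.refl Y)).pow_left k
    have e3 : ((φ.mapMatrix (M ^ k)) * Y * Y).trace = -((φ.mapMatrix (M ^ k)) * Y * Y).trace := by
      conv_lhs => rw [e2]
      simp only [Matrix.trace, Matrix.diag_apply, Matrix.mul_apply, Finset.sum_mul]
      rw [← Finset.sum_neg_distrib]
      simp only [← Finset.sum_neg_distrib]
      -- lhs: ∑ i, ∑ j, ∑ l, Y i l * P l j * Y j i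
      have h3 : ∀ i j l, Y i l * φ.mapMatrix (M ^ k) l j * Y j i = -(φ.mapMatrix (M ^ k) l j * Y j i * Y i l) := by
        intro i j l
        have hcen : φ.mapMatrix (M ^ k) l j ∈ Subalgebra.center R (ExteriorAlgebra R V) := ((M^k) l j).2
        rw [Subalgebra.mem_center_iff] at hcen
        rw [hcen, mul_assoc, mul_assoc, ← mul_neg]
        congr 1
        exact eq_neg_of_add_eq_zero_left (ExteriorAlgebra.ι_add_mul_swap _ _)
      simp only [h3]
      rw [Finset.sum_congr rfl fun i _ => Finset.sum_comm, Finset.sum_comm]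
    rw [e1]
    set t := ((φ.mapMatrix (M ^ k)) * Y * Y).trace
    have h2 : (2 : R) • t = 0 := by rw [two_smul]; nth_rewrite 1 [e3]; simp
    have hu : IsUnit (2 : R) := by
      have : (2 : R) = algebraMap ℚ R 2 := (map_ofNat _ 2).symm
      rw [this]; exact IsUnit.map _ (IsUnit.mk0 _ two_ne_zero)
    exact hu.smul_eq_zero.mp h2
  rw [pow_mul, pow_two, ← hMY, ← map_pow, key, map_zero]

lemma al_expand {R : Type*} [CommRing R] {N n : ℕ} (X : Fin n → Matrix (Fin N) (Fin N) R) (m : ℕ)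
    (f : Fin m → Fin n) (e : Fin n → (Fin n → R)) :
    (List.ofFn fun i => (X (f i)).map fun r => r • ExteriorAlgebra.ι R (e (f i))).prod
      = ((List.ofFn fun i => X (f i)).prod).map fun r => r • ExteriorAlgebra.ιMulti R m (fun i => e (f i)) := by
  induction m with
  | zero => ext a b; simp [Matrix.one_apply]
  | succ m ih =>
    rw [List.ofFn_succ, List.prod_cons, ih, List.ofFn_succ, List.prod_cons]
    ext a b
    simp only [Matrix.mul_apply, Matrix.map_apply, Finset.sum_smul, ExteriorAlgebra.ιMulti_succ_apply]
    refine Finset.sum_congr rfl fun c _ => ?_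
    rw [smul_mul_smul_comm]
    rfl

lemma al_rat {R : Type*} [CommRing R] [Algebra ℚ R] (N : ℕ)
    (X : Fin (2 * N) → Matrix (Fin N) (Fin N) R) :
    ∑ σ : Equiv.Perm (Fin (2 * N)),
      ((Equiv.Perm.sign σ : ℤ) • (List.ofFn fun i => X (σ i)).prod) = 0 := by
  let e : Fin (2*N) → (Fin (2*N) → R) := fun i => Pi.single i 1
  let L : ExteriorAlgebra R (Fin (2*N) → R) →ₗ[R] R :=
    ExteriorAlgebra.liftAlternating (fun i => if h : i = 2 * N then h ▸ (Matrix.detRowAlternating) else 0)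
  have hL : ∀ v, L (ExteriorAlgebra.ιMulti R (2*N) v) = Matrix.detRowAlternating v := by
    intro v
    simp [L, ExteriorAlgebra.liftAlternating_apply_ιMulti]
  have h0 := al_ext_pow (R := R) (x := fun a b => fun i => X i a b)
  have hY : (Matrix.map (fun a b => fun i => X i a b) (ExteriorAlgebra.ι R) : Matrix (Fin N) (Fin N) _)
      = ∑ i, (X i).map fun r => r • ExteriorAlgebra.ι R (e i) := by
    ext a b
    rw [Matrix.sum_apply]
    simp only [Matrix.map_apply, ← map_smul, ← map_sum]
    refine congrArg (ExteriorAlgebra.ι R) ?_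
    ext i
    simp [e, Finset.sum_apply, Pi.single_apply]
  rw [hY] at h0
  have h1 := (MultilinearMap.mkPiAlgebraFin R (2*N) (Matrix (Fin N) (Fin N) (ExteriorAlgebra R (Fin (2*N) → R)))).map_sum
    (fun _ i => (X i).map fun r => r • ExteriorAlgebra.ι R (e i))
  simp only [MultilinearMap.mkPiAlgebraFin_apply, List.ofFn_const, List.prod_replicate] at h1
  rw [h0] at h1
  simp only [al_expand] at h1
  ext a b
  have h2 := congrArg L (congrFun (congrFun h1 a) b)
  rw [Matrix.sum_apply, map_sum] at h2
  simp only [Matrix.map_apply, map_smul, hL, Matrix.zero_apply, map_zero] at h2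
  rw [Matrix.zero_apply, h2, Matrix.sum_apply]
  refine Finset.sum_of_injOn (fun σ : Equiv.Perm (Fin (2*N)) => (σ : Fin (2*N) → Fin (2*N))) ?_ (by simp) ?_ ?_
  · exact fun σ _ τ _ h => DFunLike.coe_injective h
  · intro f _ hf
    have : ¬ Function.Injective (fun i => e (f i)) := by
      intro hi
      apply hf
      have hfi : Function.Injective f := fun i j h => hi (by simp only [h])
      exact ⟨Equiv.ofBijective f (Finite.injective_iff_bijective.mp hfi), by simp, rfl⟩
    rw [AlternatingMap.map_eq_zero_of_not_injective _ _ this, smul_zero]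
  · intro σ _
    have := (Matrix.detRowAlternating (R := R)).map_perm e σ
    have h1 : Matrix.detRowAlternating (R := R) e = 1 := by
      have : e = (1 : Matrix (Fin (2*N)) (Fin (2*N)) R) := by
        ext i j; simp [e, Pi.single_apply, Matrix.one_apply, eq_comm]
      rw [this]; exact Matrix.det_one
    rw [h1] at this
    change _ = _ • Matrix.detRowAlternating (e ∘ σ)
    rw [this]
    rcases Int.units_eq_one_or (Equiv.Perm.sign σ) with h | h <;> simp [h]

lemma al_map {R S : Type*} [CommRing R] [CommRing S] (f : R →+* S) (N : ℕ)
    (X : Fin (2 * N) → Matrix (Fin N) (Fin N) R) :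
    f.mapMatrix (∑ σ : Equiv.Perm (Fin (2 * N)),
      ((Equiv.Perm.sign σ : ℤ) • (List.ofFn fun i => X (σ i)).prod)) =
    ∑ σ : Equiv.Perm (Fin (2 * N)),
      ((Equiv.Perm.sign σ : ℤ) • (List.ofFn fun i => f.mapMatrix (X (σ i))).prod) := by
  rw [map_sum]
  refine Finset.sum_congr rfl fun σ _ => ?_
  rw [map_zsmul, map_list_prod, List.map_ofFn]
  rfl

/-- **The Amitsur–Levitzki identity.** For any commutative ring `A`, any `N ≥ 1`, and any
`2N` matrices `X 1, …, X (2N)` of size `N × N` with entries in `A`, the standard polynomial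
of degree `2N` vanishes on them:
`Σ_{σ ∈ S_{2N}} sgn(σ) · X (σ 1) ⋯ X (σ (2N)) = 0`. -/
theorem amitsur_levitzki (A : Type*) [CommRing A] (N : ℕ) (hN : 1 ≤ N)
    (X : Fin (2 * N) → Matrix (Fin N) (Fin N) A) :
    ∑ σ : Equiv.Perm (Fin (2 * N)),
      ((Equiv.Perm.sign σ : ℤ) • (List.ofFn fun i => X (σ i)).prod) = 0 := by
  let G : Fin (2 * N) → Matrix (Fin N) (Fin N) (MvPolynomial (Fin (2*N) × Fin N × Fin N) ℤ) :=
    fun i a b => MvPolynomial.X (i, a, b)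
  let g : MvPolynomial (Fin (2*N) × Fin N × Fin N) ℤ →+* A :=
    MvPolynomial.eval₂Hom (Int.castRingHom A) (fun p => X p.1 p.2.1 p.2.2)
  let q : MvPolynomial (Fin (2*N) × Fin N × Fin N) ℤ →+* MvPolynomial (Fin (2*N) × Fin N × Fin N) ℚ :=
    MvPolynomial.map (Int.castRingHom ℚ)
  have hq : Function.Injective q := MvPolynomial.map_injective _ Int.cast_injective
  have hG : ∑ σ : Equiv.Perm (Fin (2 * N)),
      ((Equiv.Perm.sign σ : ℤ) • (List.ofFn fun i => G (σ i)).prod) = 0 := by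
    have hqm : Function.Injective (q.mapMatrix (m := Fin N)) := Matrix.map_injective hq
    apply hqm
    rw [al_map, map_zero]
    exact al_rat N fun i => q.mapMatrix (G i)
  have hX : ∀ i, g.mapMatrix (G i) = X i := by
    intro i
    ext a b
    change MvPolynomial.eval₂Hom _ _ (MvPolynomial.X (i, a, b)) = _
    simp
  have := al_map g N G
  rw [hG, map_zero] at this
  simp only [hX] at this
  exact this.symm
end

section
/- (G. Wilson: connectedness of the Calogero–Moser space.) For every n ≥ 1, the set {(X, Y) ∈ Mat_n(ℂ) × Mat_n(ℂ) : rank(XY − YX + I) = 1} is a nonempty connected subset of Mat_n(ℂ) × Mat_n(ℂ) (with its standard topology). Equivalently, the Calogero–Moser space C_n — the quotient of this set by simultaneous conjugation by GL_n(ℂ) — is connected. -/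
open Matrix Polynomial Topology

abbrev CMQ (ι : Type) := Matrix ι ι ℂ × Matrix ι ι ℂ × (ι → ℂ) × (ι → ℂ)

def CMS (ι : Type) [Fintype ι] [DecidableEq ι] : Set (CMQ ι) :=
  {q | q.1 * q.2.1 - q.2.1 * q.1 + 1 = vecMulVec q.2.2.1 q.2.2.2}

def CMDiag {ι : Type} [Fintype ι] [DecidableEq ι] (X : Matrix ι ι ℂ) : Prop :=
  ∃ (g h : Matrix ι ι ℂ) (x : ι → ℂ), g * h = 1 ∧ h * g = 1 ∧ Function.Injective x ∧
    X = g * diagonal x * h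

def CMR (ι : Type) [Fintype ι] [DecidableEq ι] : Set (CMQ ι) :=
  {q | q ∈ CMS ι ∧ CMDiag q.1}

section
variable {ι κ : Type} [Fintype ι] [DecidableEq ι] [Fintype κ] [DecidableEq κ]

lemma cm_intertwine (X : Matrix ι ι ℂ) (A : Matrix κ κ ℂ) (P : Matrix ι κ ℂ)
    (h : X * P = P * A) (p : ℂ[X]) : aeval X p * P = P * aeval A p := by
  induction p using Polynomial.induction_on' with
  | add p q hp hq => simp [Matrix.add_mul, Matrix.mul_add, hp, hq]
  | monomial n a =>
    have : X ^ n * P = P * A ^ n := by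
      induction n with
      | zero => simp
      | succ n ih => rw [pow_succ, Matrix.mul_assoc, h, ← Matrix.mul_assoc, ih, Matrix.mul_assoc,
          ← pow_succ]
    simp [aeval_monomial, this, Algebra.algebraMap_eq_smul_one]

def cmK (A : Matrix ι ι ℂ) (D : Matrix κ κ ℂ) : Matrix (κ × ι) (κ × ι) ℂ :=
  Matrix.kronecker 1 A - Matrix.kronecker Dᵀ 1

lemma cmK_vec (A : Matrix ι ι ℂ) (D : Matrix κ κ ℂ) (C : Matrix ι κ ℂ) :
    cmK A D *ᵥ vec C = vec (A * C - C * D) := by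
  rw [cmK, Matrix.sub_mulVec, Matrix.kronecker, kronecker_mulVec_vec,
    kronecker_mulVec_vec]
  simp

lemma cmK_inj {A : Matrix ι ι ℂ} {D : Matrix κ κ ℂ} (h : (cmK A D).det ≠ 0)
    {C : Matrix ι κ ℂ} (hC : A * C = C * D) : C = 0 := by
  have h1 := cmK_vec A D C
  rw [hC, sub_self, vec_zero] at h1
  exact vec_eq_zero_iff.1 (Matrix.eq_zero_of_mulVec_eq_zero h h1)

lemma cmK_det {A : Matrix ι ι ℂ} {D : Matrix κ κ ℂ} {p r : ℂ[X]} (hpr : IsCoprime p r)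
    (hA : aeval A p = 0) (hD : aeval D r = 0) : (cmK A D).det ≠ 0 := by
  intro h0
  obtain ⟨v, hv, hv0⟩ := Matrix.exists_mulVec_eq_zero_iff.2 h0
  obtain ⟨C, rfl⟩ := vec_bijective.2 v
  rw [cmK_vec, vec_eq_zero_iff, sub_eq_zero] at hv0
  obtain ⟨a, b, hab⟩ := hpr
  have h1 := cm_intertwine A D C hv0 p
  rw [hA, Matrix.zero_mul] at h1
  have h2 : aeval D p * aeval D a = 1 := by
    have := congrArg (aeval D) hab
    rw [map_add, map_mul, map_mul, hD, mul_zero, add_zero, map_one] at this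
    rw [← map_mul, mul_comm, map_mul, this]
  apply hv
  rw [vec_eq_zero_iff]
  calc C = C * (aeval D p * aeval D a) := by rw [h2, Matrix.mul_one]
    _ = 0 := by rw [← Matrix.mul_assoc, ← h1, Matrix.zero_mul]

noncomputable def cmSol (A : Matrix ι ι ℂ) (D : Matrix κ κ ℂ) (R : Matrix ι κ ℂ) : Matrix ι κ ℂ :=
  Matrix.of fun i j => (((cmK A D).det)⁻¹ • ((cmK A D).adjugate *ᵥ vec R)) (j, i)

lemma cmSol_spec {A : Matrix ι ι ℂ} {D : Matrix κ κ ℂ} (h : (cmK A D).det ≠ 0)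
    (R : Matrix ι κ ℂ) : A * cmSol A D R - cmSol A D R * D = R := by
  rw [← vec_inj, ← cmK_vec]
  have : vec (cmSol A D R) = (((cmK A D).det)⁻¹ • ((cmK A D).adjugate *ᵥ vec R)) := rfl
  rw [this, Matrix.mulVec_smul, Matrix.mulVec_mulVec, Matrix.mul_adjugate, Matrix.smul_mulVec,
    smul_smul, inv_mul_cancel₀ h, Matrix.one_mulVec, one_smul]

lemma cmSol_uniq {A : Matrix ι ι ℂ} {D : Matrix κ κ ℂ} (h : (cmK A D).det ≠ 0)
    {R C : Matrix ι κ ℂ} (hC : A * C - C * D = R) : cmSol A D R = C := by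
  rw [← sub_eq_zero]
  apply cmK_inj h
  have := cmSol_spec h R
  rw [Matrix.mul_sub, Matrix.sub_mul, sub_eq_sub_iff_sub_eq_sub, this, hC]

lemma cmK_cont : Continuous fun q : Matrix ι ι ℂ × Matrix κ κ ℂ => cmK q.1 q.2 := by
  refine continuous_matrix fun i j => ?_
  simp only [cmK, Matrix.sub_apply, Matrix.kronecker, Matrix.kroneckerMap_apply, Matrix.transpose_apply]
  fun_prop

lemma cmSol_cont {A : Matrix ι ι ℂ} {D : Matrix κ κ ℂ} (h : (cmK A D).det ≠ 0)
    (R : Matrix ι κ ℂ) : ContinuousAt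
    (fun q : Matrix ι ι ℂ × Matrix κ κ ℂ × Matrix ι κ ℂ => cmSol q.1 q.2.1 q.2.2) (A, D, R) := by
  have hK : Continuous fun q : Matrix ι ι ℂ × Matrix κ κ ℂ × Matrix ι κ ℂ => cmK q.1 q.2.1 :=
    cmK_cont.comp (by fun_prop : Continuous fun q : Matrix ι ι ℂ × Matrix κ κ ℂ × Matrix ι κ ℂ =>
      (q.1, q.2.1))
  have hv : Continuous fun q : Matrix ι ι ℂ × Matrix κ κ ℂ × Matrix ι κ ℂ => vec q.2.2 := by
    refine continuous_pi fun i => ?_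
    simp only [vec]
    fun_prop
  have h1 := hK.matrix_adjugate.matrix_mulVec hv
  have h2 : ContinuousAt (fun q : Matrix ι ι ℂ × Matrix κ κ ℂ × Matrix ι κ ℂ =>
      ((cmK q.1 q.2.1).det)⁻¹) (A, D, R) := hK.matrix_det.continuousAt.inv₀ h
  have h3 := h2.smul h1.continuousAt
  refine continuousAt_pi.2 fun i => continuousAt_pi.2 fun j => ?_
  exact (continuousAt_pi.1 h3) (j, i)

lemma cm_fromBlocks_diag {A : Matrix ι ι ℂ} {D : Matrix κ κ ℂ} (hA : CMDiag A) (hD : CMDiag D)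
    (h : (cmK A D).det ≠ 0) : CMDiag (fromBlocks A 0 0 D) := by
  obtain ⟨g1, h1, x1, e1, e1', i1, rfl⟩ := hA
  obtain ⟨g2, h2, x2, e2, e2', i2, rfl⟩ := hD
  refine ⟨fromBlocks g1 0 0 g2, fromBlocks h1 0 0 h2, Sum.elim x1 x2, ?_, ?_, ?_, ?_⟩
  · simp [fromBlocks_multiply, e1, e2]
  · simp [fromBlocks_multiply, e1', e2']
  · refine i1.sumElim i2 fun i j hij => ?_
    have : g1 * single i j (1 : ℂ) * h2 = 0 := by
      apply cmK_inj h
      calc g1 * diagonal x1 * h1 * (g1 * single i j (1 : ℂ) * h2)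
          = g1 * diagonal x1 * (h1 * g1) * single i j (1 : ℂ) * h2 := by simp only [Matrix.mul_assoc]
        _ = g1 * (diagonal x1 * single i j (1 : ℂ)) * h2 := by rw [e1']; simp only [Matrix.mul_assoc, Matrix.mul_one]
        _ = g1 * (single i j (1 : ℂ) * diagonal x2) * h2 := by
            congr 2
            ext a b
            simp only [diagonal_mul, mul_diagonal, single_apply]
            split_ifs with hh
            · rw [← hh.1, ← hh.2, hij]; ring
            · simp
        _ = g1 * single i j (1 : ℂ) * (h2 * g2) * diagonal x2 * h2 := by rw [e2']; simp only [Matrix.mul_assoc, Matrix.mul_one]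
        _ = _ := by simp only [Matrix.mul_assoc]
    have h0 : single i j (1 : ℂ) = 0 := by
      calc single i j (1 : ℂ) = (h1 * g1) * single i j (1 : ℂ) * (h2 * g2) := by rw [e1', e2']; simp
        _ = h1 * (g1 * single i j (1 : ℂ) * h2) * g2 := by simp only [Matrix.mul_assoc]
        _ = 0 := by rw [this]; simp
    have := congrFun (congrFun h0 i) j
    simp at this
  · rw [← fromBlocks_diagonal, fromBlocks_multiply, fromBlocks_multiply]
    simp

lemma cm_block_iff (A B : Matrix ι ι ℂ) (C : Matrix ι κ ℂ) (E : Matrix κ ι ℂ) (D F : Matrix κ κ ℂ)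
    (v1 w1 : ι → ℂ) (v2 w2 : κ → ℂ) :
    ((fromBlocks A 0 0 D, fromBlocks B C E F, Sum.elim v1 v2, Sum.elim w1 w2) : CMQ (ι ⊕ κ))
      ∈ CMS (ι ⊕ κ) ↔ (A, B, v1, w1) ∈ CMS ι ∧ (D, F, v2, w2) ∈ CMS κ ∧
      A * C - C * D = vecMulVec v1 w2 ∧ D * E - E * A = vecMulVec v2 w1 := by
  simp only [CMS, Set.mem_ofPred_eq]
  have : vecMulVec (Sum.elim v1 v2) (Sum.elim w1 w2) = fromBlocks (vecMulVec v1 w1)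
      (vecMulVec v1 w2) (vecMulVec v2 w1) (vecMulVec v2 w2) := by
    ext (i | i) (j | j) <;> simp [vecMulVec_apply]
  rw [this, fromBlocks_multiply, fromBlocks_multiply, sub_eq_add_neg, fromBlocks_neg,
    fromBlocks_add, ← fromBlocks_one, fromBlocks_add, fromBlocks_inj]
  simp [← sub_eq_add_neg]
  tauto

lemma cm_block_closure {A B : Matrix ι ι ℂ} {C : Matrix ι κ ℂ} {E : Matrix κ ι ℂ}
    {D F : Matrix κ κ ℂ} {v1 w1 : ι → ℂ} {v2 w2 : κ → ℂ}
    (hq : ((fromBlocks A 0 0 D, fromBlocks B C E F, Sum.elim v1 v2, Sum.elim w1 w2) : CMQ (ι ⊕ κ))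
      ∈ CMS (ι ⊕ κ)) (h1 : (cmK A D).det ≠ 0) (h2 : (cmK D A).det ≠ 0)
    (hι : CMS ι ⊆ closure (CMR ι)) (hκ : CMS κ ⊆ closure (CMR κ)) :
    ((fromBlocks A 0 0 D, fromBlocks B C E F, Sum.elim v1 v2, Sum.elim w1 w2) : CMQ (ι ⊕ κ))
      ∈ closure (CMR (ι ⊕ κ)) := by
  obtain ⟨a1, a2, a3, a4⟩ := (cm_block_iff _ _ _ _ _ _ _ _ _ _).1 hq
  let Φ : CMQ ι × CMQ κ → CMQ (ι ⊕ κ) := fun q =>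
    (fromBlocks q.1.1 0 0 q.2.1, fromBlocks q.1.2.1
      (cmSol q.1.1 q.2.1 (vecMulVec q.1.2.2.1 q.2.2.2.2))
      (cmSol q.2.1 q.1.1 (vecMulVec q.2.2.2.1 q.1.2.2.2)) q.2.2.1,
      Sum.elim q.1.2.2.1 q.2.2.2.1, Sum.elim q.1.2.2.2 q.2.2.2.2)
  let q0 : CMQ ι × CMQ κ := ((A, B, v1, w1), (D, F, v2, w2))
  have hΦ0 : Φ q0 = (fromBlocks A 0 0 D, fromBlocks B C E F, Sum.elim v1 v2, Sum.elim w1 w2) := by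
    simp only [Φ, q0]
    rw [cmSol_uniq h1 a3, cmSol_uniq h2 a4]
  have hcl : q0 ∈ closure (CMR ι ×ˢ CMR κ) := by
    rw [closure_prod_eq]; exact ⟨hι a1, hκ a2⟩
  have hcont : ContinuousAt Φ q0 := by
    have c1 : ContinuousAt (fun q : CMQ ι × CMQ κ =>
        cmSol q.1.1 q.2.1 (vecMulVec q.1.2.2.1 q.2.2.2.2)) q0 :=
      ContinuousAt.comp (f := fun q : CMQ ι × CMQ κ => (q.1.1, q.2.1, vecMulVec q.1.2.2.1 q.2.2.2.2))
        (x := q0) (cmSol_cont h1 _)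
        (Continuous.continuousAt (by
          refine Continuous.prodMk (by fun_prop) (Continuous.prodMk (by fun_prop) ?_)
          exact Continuous.matrix_vecMulVec (by fun_prop) (by fun_prop)))
    have c2 : ContinuousAt (fun q : CMQ ι × CMQ κ =>
        cmSol q.2.1 q.1.1 (vecMulVec q.2.2.2.1 q.1.2.2.2)) q0 :=
      ContinuousAt.comp (f := fun q : CMQ ι × CMQ κ => (q.2.1, q.1.1, vecMulVec q.2.2.2.1 q.1.2.2.2))
        (x := q0) (cmSol_cont h2 _)
        (Continuous.continuousAt (by
          refine Continuous.prodMk (by fun_prop) (Continuous.prodMk (by fun_prop) ?_)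
          exact Continuous.matrix_vecMulVec (by fun_prop) (by fun_prop)))
    refine ContinuousAt.prodMk ?_ (ContinuousAt.prodMk ?_ (ContinuousAt.prodMk ?_ ?_))
    · exact (Continuous.matrix_fromBlocks (by fun_prop) continuous_const continuous_const
        (by fun_prop)).continuousAt
    · refine continuousAt_pi.2 fun i => continuousAt_pi.2 fun j => ?_
      rcases i with i | i <;> rcases j with j | j
      · simp only [fromBlocks_apply₁₁]; fun_prop
      · simp only [fromBlocks_apply₁₂]; exact continuousAt_pi.1 (continuousAt_pi.1 c1 i) j
      · simp only [fromBlocks_apply₂₁]; exact continuousAt_pi.1 (continuousAt_pi.1 c2 i) j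
      · simp only [fromBlocks_apply₂₂]; fun_prop
    · refine continuousAt_pi.2 fun i => ?_
      rcases i with i | i <;> simp only [Sum.elim_inl, Sum.elim_inr] <;> fun_prop
    · refine continuousAt_pi.2 fun i => ?_
      rcases i with i | i <;> simp only [Sum.elim_inl, Sum.elim_inr] <;> fun_prop
  have d1 : ∀ᶠ q : CMQ ι × CMQ κ in 𝓝 q0, (cmK q.1.1 q.2.1).det ≠ 0 :=
    ((cmK_cont.comp (by fun_prop : Continuous fun q : CMQ ι × CMQ κ =>
      (q.1.1, q.2.1))).matrix_det.continuousAt (x := q0)).eventually_ne h1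
  have d2 : ∀ᶠ q : CMQ ι × CMQ κ in 𝓝 q0, (cmK q.2.1 q.1.1).det ≠ 0 :=
    ((cmK_cont.comp (by fun_prop : Continuous fun q : CMQ ι × CMQ κ =>
      (q.2.1, q.1.1))).matrix_det.continuousAt (x := q0)).eventually_ne h2
  rw [← hΦ0]
  rw [mem_closure_iff_frequently] at hcl ⊢
  refine hcont.tendsto.frequently ((hcl.and_eventually (d1.and d2)).mono ?_)
  rintro ⟨⟨A', B', v1', w1'⟩, ⟨D', F', v2', w2'⟩⟩ ⟨⟨b1, b2⟩, b3, b4⟩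
  refine ⟨(cm_block_iff _ _ _ _ _ _ _ _ _ _).2 ⟨b1.1, b2.1, ?_, ?_⟩, ?_⟩
  · exact cmSol_spec b3 _
  · exact cmSol_spec b4 _
  · exact cm_fromBlocks_diag b1.2 b2.2 b3

lemma cm_conj {P : Matrix ι κ ℂ} {Q : Matrix κ ι ℂ} (hPQ : P * Q = 1) (hQP : Q * P = 1)
    {X Y : Matrix κ κ ℂ} {v w : κ → ℂ} (h : (X, Y, v, w) ∈ CMS κ) :
    (P * X * Q, P * Y * Q, P *ᵥ v, w ᵥ* Q) ∈ CMS ι := by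
  simp only [CMS, Set.mem_ofPred_eq] at h ⊢
  have e : ∀ U V : Matrix κ κ ℂ, P * U * Q * (P * V * Q) = P * (U * V) * Q := fun U V => by
    calc _ = P * U * (Q * P) * V * Q := by simp only [Matrix.mul_assoc]
      _ = _ := by rw [hQP]; simp only [Matrix.mul_assoc, Matrix.one_mul]
  rw [← vecMulVec_mul, ← mul_vecMulVec, ← h, e, e]
  simp only [Matrix.mul_add, Matrix.add_mul, Matrix.mul_sub, Matrix.sub_mul, Matrix.mul_one, hPQ]

lemma cm_conj_diag (e : ι ≃ κ) {P : Matrix ι κ ℂ} {Q : Matrix κ ι ℂ} (hPQ : P * Q = 1)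
    (hQP : Q * P = 1) {X : Matrix κ κ ℂ} (h : CMDiag X) : CMDiag (P * X * Q) := by
  obtain ⟨g, h, x, h1, h2, h3, rfl⟩ := h
  refine ⟨(P * g).submatrix id e, (h * Q).submatrix e id, x ∘ e, ?_, ?_, h3.comp e.injective, ?_⟩
  · rw [Matrix.submatrix_mul_equiv]
    have : P * g * (h * Q) = 1 := by
      calc _ = P * (g * h) * Q := by simp only [Matrix.mul_assoc]
        _ = 1 := by rw [h1, Matrix.mul_one, hPQ]
    rw [this]; simp
  · rw [← Matrix.submatrix_mul _ _ _ _ _ Function.bijective_id]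
    have : h * Q * (P * g) = 1 := by
      calc _ = h * (Q * P) * g := by simp only [Matrix.mul_assoc]
        _ = 1 := by rw [hQP, Matrix.mul_one, h2]
    rw [this]; simp
  · rw [← Matrix.submatrix_diagonal_equiv, Matrix.submatrix_mul_equiv, Matrix.submatrix_mul_equiv]
    simp [Matrix.mul_assoc]

lemma cm_conj_closure (e : ι ≃ κ) {P : Matrix ι κ ℂ} {Q : Matrix κ ι ℂ} (hPQ : P * Q = 1)
    (hQP : Q * P = 1) {X Y : Matrix κ κ ℂ} {v w : κ → ℂ}
    (h : (X, Y, v, w) ∈ closure (CMR κ)) :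
    (P * X * Q, P * Y * Q, P *ᵥ v, w ᵥ* Q) ∈ closure (CMR ι) := by
  let Φ : CMQ κ → CMQ ι := fun q => (P * q.1 * Q, P * q.2.1 * Q, P *ᵥ q.2.2.1, q.2.2.2 ᵥ* Q)
  have hΦ : Continuous Φ := by
    refine Continuous.prodMk ?_ (Continuous.prodMk ?_ (Continuous.prodMk ?_ ?_))
    · exact (continuous_const.matrix_mul continuous_fst).matrix_mul continuous_const
    · exact (continuous_const.matrix_mul (by fun_prop)).matrix_mul continuous_const
    · exact continuous_const.matrix_mulVec (by fun_prop)
    · exact Continuous.matrix_vecMul (by fun_prop) continuous_const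
  have hm : Set.MapsTo Φ (CMR κ) (CMR ι) := fun q hq =>
    ⟨cm_conj hPQ hQP hq.1, cm_conj_diag e hPQ hQP hq.2⟩
  have hres : Φ (X, Y, v, w) ∈ closure (CMR ι) := map_mem_closure hΦ h hm
  exact hres

end

section
variable {ι : Type} [Fintype ι] [DecidableEq ι]

lemma cm_block_form {X : Matrix ι ι ℂ} {p r : ℂ[X]} (hpr : IsCoprime p r)
    (h0 : aeval X (p * r) = 0) (hp : aeval X p ≠ 0) (hr : aeval X r ≠ 0) :
    ∃ (a b : ℕ) (P : Matrix ι (Fin a ⊕ Fin b) ℂ) (Q : Matrix (Fin a ⊕ Fin b) ι ℂ)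
      (A : Matrix (Fin a) (Fin a) ℂ) (D : Matrix (Fin b) (Fin b) ℂ),
      P * Q = 1 ∧ Q * P = 1 ∧ Q * X * P = fromBlocks A 0 0 D ∧ a < Fintype.card ι ∧
      b < Fintype.card ι ∧ aeval A p = 0 ∧ aeval D r = 0 ∧ Nonempty (ι ≃ Fin a ⊕ Fin b) := by
  let f : Module.End ℂ (ι → ℂ) := Matrix.toLinAlgEquiv' X
  have hf : ∀ q : ℂ[X], aeval f q = Matrix.toLinAlgEquiv' (aeval X q) := fun q => by
    simp only [f]
    exact Polynomial.aeval_algHom_apply (Matrix.toLinAlgEquiv' (R := ℂ) (n := ι)).toAlgHom X q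
  have hker : ∀ q : ℂ[X], ∀ v, v ∈ LinearMap.ker (aeval f q) ↔ aeval X q *ᵥ v = 0 := fun q v => by
    rw [LinearMap.mem_ker, hf, Matrix.toLinAlgEquiv'_apply]
  let U := LinearMap.ker (aeval f p)
  let W := LinearMap.ker (aeval f r)
  have hUW : IsCompl U W := by
    refine ⟨Polynomial.disjoint_ker_aeval_of_isCoprime f hpr, ?_⟩
    rw [codisjoint_iff]
    have := Polynomial.sup_ker_aeval_eq_ker_aeval_mul_of_coprime f hpr
    rw [this, hf, h0]
    simp
  have hlt : ∀ q : ℂ[X], aeval X q ≠ 0 →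
      Module.finrank ℂ (LinearMap.ker (aeval f q)) < Fintype.card ι := fun q hq => by
    have : LinearMap.ker (aeval f q) ≠ ⊤ := by
      intro h
      rw [LinearMap.ker_eq_top, hf] at h
      exact hq (by simpa using h)
    have := Submodule.finrank_lt (lt_top_iff_ne_top.2 this).ne
    simpa using this
  let bU := Module.finBasis ℂ U
  let bW := Module.finBasis ℂ W
  let bb := (bU.prod bW).map (Submodule.prodEquivOfIsCompl U W hUW)
  let P := (Pi.basisFun ℂ ι).toMatrix bb
  let Q := bb.toMatrix (Pi.basisFun ℂ ι)
  have hPQ : P * Q = 1 := Module.Basis.toMatrix_mul_toMatrix_flip _ _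
  have hQP : Q * P = 1 := Module.Basis.toMatrix_mul_toMatrix_flip _ _
  have hPU : ∀ i, P.col (Sum.inl i) ∈ U := fun i => by
    have : P.col (Sum.inl i) = bU i := by
      ext j
      simp [P, Module.Basis.toMatrix_apply, bb, Matrix.col]
    rw [this]; exact (bU i).2
  have hPW : ∀ i, P.col (Sum.inr i) ∈ W := fun i => by
    have : P.col (Sum.inr i) = bW i := by
      ext j
      simp [P, Module.Basis.toMatrix_apply, bb, Matrix.col]
    rw [this]; exact (bW i).2
  let P1 : Matrix ι _ ℂ := P.toCols₁
  let P2 : Matrix ι _ ℂ := P.toCols₂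
  let Q1 : Matrix _ ι ℂ := Q.toRows₁
  let Q2 : Matrix _ ι ℂ := Q.toRows₂
  have eP : P = fromCols P1 P2 := (fromCols_toCols P).symm
  have eQ : Q = fromRows Q1 Q2 := (fromRows_toRows Q).symm
  have h1 : aeval X p * P1 = 0 := by
    ext i j
    exact congrFun ((hker p _).1 (hPU j)) i
  have h2 : aeval X r * P2 = 0 := by
    ext i j
    exact congrFun ((hker r _).1 (hPW j)) i
  have hsum : P1 * Q1 + P2 * Q2 = 1 := by rw [← hPQ, eP, eQ, fromCols_mul_fromRows]
  rw [eP, eQ, fromRows_mul_fromCols, ← fromBlocks_one, fromBlocks_inj] at hQP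
  obtain ⟨q11, q12, q21, q22⟩ := hQP
  have hcomm : ∀ q : ℂ[X], aeval X q * X = X * aeval X q := fun q => by
    have : aeval X (q * Polynomial.X) = aeval X (Polynomial.X * q) := by rw [mul_comm]
    simpa using this
  obtain ⟨s, t, hst⟩ := hpr
  have hst' : aeval X s * aeval X p + aeval X t * aeval X r = 1 := by
    rw [← map_mul, ← map_mul, ← map_add, hst, map_one]
  have key : ∀ {κ : Type} [Fintype κ] (M : Matrix ι κ ℂ), aeval X p * M = 0 → aeval X r * M = 0 →
      M = 0 := fun M h h' => by
    calc M = (aeval X s * aeval X p + aeval X t * aeval X r) * M := by rw [hst', Matrix.one_mul]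
      _ = 0 := by rw [Matrix.add_mul, Matrix.mul_assoc, Matrix.mul_assoc, h, h']; simp
  have hM1 : X * P1 = P1 * (Q1 * X * P1) := by
    rw [← sub_eq_zero]
    apply key
    · rw [Matrix.mul_sub, ← Matrix.mul_assoc, hcomm, Matrix.mul_assoc, h1, ← Matrix.mul_assoc, h1]
      simp
    · have : X * P1 - P1 * (Q1 * X * P1) = P2 * (Q2 * (X * P1)) := by
        calc _ = (P1 * Q1 + P2 * Q2) * (X * P1) - P1 * (Q1 * X * P1) := by rw [hsum, Matrix.one_mul]
          _ = _ := by simp only [Matrix.add_mul, Matrix.mul_assoc]; abel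
      rw [this, ← Matrix.mul_assoc, h2, Matrix.zero_mul]
  have hM2 : X * P2 = P2 * (Q2 * X * P2) := by
    rw [← sub_eq_zero]
    apply key
    · have : X * P2 - P2 * (Q2 * X * P2) = P1 * (Q1 * (X * P2)) := by
        calc _ = (P1 * Q1 + P2 * Q2) * (X * P2) - P2 * (Q2 * X * P2) := by rw [hsum, Matrix.one_mul]
          _ = _ := by simp only [Matrix.add_mul, Matrix.mul_assoc]; abel
      rw [this, ← Matrix.mul_assoc, h1, Matrix.zero_mul]
    · rw [Matrix.mul_sub, ← Matrix.mul_assoc, hcomm, Matrix.mul_assoc, h2, ← Matrix.mul_assoc, h2]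
      simp
  refine ⟨_, _, P, Q, Q1 * X * P1, Q2 * X * P2, hPQ, ?_, ?_, hlt p hp, hlt r hr, ?_, ?_, ?_⟩
  · exact Module.Basis.toMatrix_mul_toMatrix_flip _ _
  · rw [eP, eQ, fromRows_mul, fromRows_mul_fromCols, fromBlocks_inj]
    refine ⟨rfl, ?_, ?_, rfl⟩
    · rw [Matrix.mul_assoc, hM2, ← Matrix.mul_assoc, q12, Matrix.zero_mul]
    · rw [Matrix.mul_assoc, hM1, ← Matrix.mul_assoc, q21, Matrix.zero_mul]
  · have := cm_intertwine _ _ _ hM1 p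
    rw [h1] at this
    rw [← Matrix.one_mul (aeval _ p), ← q11, Matrix.mul_assoc, ← this, Matrix.mul_zero]
  · have := cm_intertwine _ _ _ hM2 r
    rw [h2] at this
    rw [← Matrix.one_mul (aeval _ r), ← q22, Matrix.mul_assoc, ← this, Matrix.mul_zero]
  · exact ⟨(Pi.basisFun ℂ ι).indexEquiv bb⟩

lemma cm_two_eig (ih : ∀ a < Fintype.card ι, CMS (Fin a) ⊆ closure (CMR (Fin a)))
    {X Y : Matrix ι ι ℂ} {v w : ι → ℂ} (hq : (X, Y, v, w) ∈ CMS ι)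
    {p r : ℂ[X]} (hpr : IsCoprime p r)
    (h0 : aeval X (p * r) = 0) (hp : aeval X p ≠ 0) (hr : aeval X r ≠ 0) :
    (X, Y, v, w) ∈ closure (CMR ι) := by
  obtain ⟨a, b, P, Q, A, D, hPQ, hQP, hX, ha, hb, hA, hD, ⟨e⟩⟩ := cm_block_form hpr h0 hp hr
  have h1 : (Q * X * P, Q * Y * P, Q *ᵥ v, w ᵥ* P) ∈ CMS (Fin a ⊕ Fin b) := cm_conj hQP hPQ hq
  have h2 : (Q * X * P, Q * Y * P, Q *ᵥ v, w ᵥ* P) ∈ closure (CMR (Fin a ⊕ Fin b)) := by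
    rw [hX, ← fromBlocks_toBlocks (Q * Y * P), ← Sum.elim_comp_inl_inr (Q *ᵥ v),
      ← Sum.elim_comp_inl_inr (w ᵥ* P)] at h1 ⊢
    exact cm_block_closure h1 (cmK_det hpr hA hD) (cmK_det hpr.symm hD hA) (ih a ha) (ih b hb)
  have h3 := cm_conj_closure e hPQ hQP h2
  have e1 : ∀ Z : Matrix ι ι ℂ, P * (Q * Z * P) * Q = Z := fun Z => by
    calc _ = (P * Q) * Z * (P * Q) := by simp only [Matrix.mul_assoc]
      _ = Z := by rw [hPQ]; simp
  rw [e1, e1, Matrix.mulVec_mulVec, Matrix.vecMul_vecMul, hPQ, Matrix.one_mulVec,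
    Matrix.vecMul_one] at h3
  exact h3

lemma cm_nilp_or (X : Matrix ι ι ℂ) [Nonempty ι] :
    (∃ c : ℂ, IsNilpotent (X - c • 1)) ∨ ∃ p r : ℂ[X], IsCoprime p r ∧ aeval X (p * r) = 0 ∧
      aeval X p ≠ 0 ∧ aeval X r ≠ 0 := by
  have hint : IsIntegral ℂ X := Algebra.IsIntegral.isIntegral X
  have hm0 := minpoly.ne_zero hint
  obtain ⟨c, hc⟩ := IsAlgClosed.exists_root (minpoly ℂ X) (minpoly.degree_pos hint).ne'
  obtain ⟨r, hr, hrd⟩ := exists_eq_pow_rootMultiplicity_mul_and_not_dvd (minpoly ℂ X) hm0 c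
  set k := rootMultiplicity c (minpoly ℂ X) with hk
  have hk0 : 0 < k := (rootMultiplicity_pos hm0).2 hc
  have hcop : IsCoprime ((Polynomial.X - C c) ^ k) r :=
    (((irreducible_X_sub_C c).coprime_iff_not_dvd).2 hrd).pow_left
  have h0 : aeval X ((Polynomial.X - C c) ^ k * r) = 0 := by rw [← hr]; exact minpoly.aeval ℂ X
  by_cases hp : aeval X ((Polynomial.X - C c) ^ k) = 0
  · left
    refine ⟨c, k, ?_⟩
    simpa [Algebra.algebraMap_eq_smul_one] using hp
  · right
    refine ⟨_, r, hcop, h0, hp, fun h => ?_⟩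
    have hd := minpoly.dvd ℂ X h
    have hc2 : (Polynomial.X - C c) ∣ minpoly ℂ X := dvd_iff_isRoot.2 hc
    exact hrd (hc2.trans hd)

lemma cm_poly_zero {P : ℂ[X]} (h : ∀ᶠ t : ℂ in 𝓝 0, P.eval t = 0) : P = 0 := by
  apply eq_zero_of_infinite_isRoot
  exact infinite_of_mem_nhds (0 : ℂ) h

lemma cm_trace_pow {M : Matrix ι ι ℂ} [Nonempty ι] (ht : M.trace = 0) {c : ℂ}
    (h : IsNilpotent (M - c • 1)) (k : ℕ) (hk : k ≠ 0) : (M ^ k).trace = 0 := by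
  have h1 := (Matrix.isNilpotent_trace_of_isNilpotent h).eq_zero
  rw [Matrix.trace_sub, ht, Matrix.trace_smul, Matrix.trace_one] at h1
  have hc : c = 0 := by simpa using h1
  rw [hc, zero_smul, sub_zero] at h
  exact (Matrix.isNilpotent_trace_of_isNilpotent (h.pow_of_pos hk)).eq_zero

lemma cm_tr2 {X Y : Matrix ι ι ℂ} {v w : ι → ℂ} (hq : (X, Y, v, w) ∈ CMS ι) :
    2 * (X * Y * X * Y).trace - 2 * (X * X * Y * Y).trace =
      (Fintype.card ι : ℂ) ^ 2 - Fintype.card ι := by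
  have h : X * Y - Y * X + 1 = vecMulVec v w := hq
  have h1 : X * Y - Y * X = vecMulVec v w - 1 := by rw [← h]; abel
  have ht : w ⬝ᵥ v = Fintype.card ι := by
    have := congrArg Matrix.trace h
    rw [Matrix.trace_add, Matrix.trace_sub, Matrix.trace_mul_comm X Y, Matrix.trace_one,
      Matrix.trace_vecMulVec, dotProduct_comm] at this
    rw [← this]; ring
  have h2 : ((X * Y - Y * X) * (X * Y - Y * X)).trace =
      (Fintype.card ι : ℂ) ^ 2 - Fintype.card ι := by
    rw [h1, Matrix.sub_mul, Matrix.mul_sub, Matrix.vecMulVec_mul_vecMulVec]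
    simp only [Matrix.trace_sub, Matrix.mul_one, Matrix.one_mul, Matrix.trace_one,
      Matrix.trace_vecMulVec, dotProduct_smul, ht, dotProduct_comm v w, smul_eq_mul]
    ring
  rw [← h2]
  have e1 : (Y * X * Y * X).trace = (X * Y * X * Y).trace := by
    rw [Matrix.mul_assoc, Matrix.mul_assoc, Matrix.trace_mul_comm]; simp only [Matrix.mul_assoc]
  have e2 : (X * Y * Y * X).trace = (X * X * Y * Y).trace := by
    rw [Matrix.trace_mul_comm]; simp only [Matrix.mul_assoc]
  have e3 : (Y * X * X * Y).trace = (X * X * Y * Y).trace := by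
    rw [Matrix.mul_assoc, Matrix.mul_assoc, Matrix.trace_mul_comm]; simp only [Matrix.mul_assoc]
  simp only [Matrix.sub_mul, Matrix.mul_sub, Matrix.trace_sub, ← Matrix.mul_assoc, e1, e2, e3]
  ring

end

section
variable {ι : Type} [Fintype ι] [DecidableEq ι]

lemma cm_shift {X Y : Matrix ι ι ℂ} {v w : ι → ℂ} (hq : (X, Y, v, w) ∈ CMS ι)
    {Z : Matrix ι ι ℂ} (hZ : Z * Y = Y * Z) (t : ℂ) : (X + t • Z, Y, v, w) ∈ CMS ι := by
  have h : X * Y - Y * X + 1 = vecMulVec v w := hq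
  change (X + t • Z) * Y - Y * (X + t • Z) + 1 = vecMulVec v w
  rw [← h, Matrix.add_mul, Matrix.mul_add, Matrix.smul_mul, Matrix.mul_smul, hZ]
  abel

lemma cm_event (ih : ∀ a < Fintype.card ι, CMS (Fin a) ⊆ closure (CMR (Fin a))) [Nonempty ι]
    {X Y : Matrix ι ι ℂ} {v w : ι → ℂ} (hq : (X, Y, v, w) ∈ CMS ι)
    (hn : (X, Y, v, w) ∉ closure (CMR ι)) {c : ℂ} (hc : IsNilpotent (X - c • 1))
    {Z : Matrix ι ι ℂ} (hZ : Z * Y = Y * Z) (hZt : Z.trace = 0) (k : ℕ) (hk : k ≠ 0) :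
    ∀ᶠ t : ℂ in 𝓝 0, (((X - c • 1) + t • Z) ^ k).trace = 0 := by
  have hcont : Continuous fun t : ℂ => ((X + t • Z, Y, v, w) : CMQ ι) := by fun_prop
  have hopen : IsOpen (closure (CMR ι))ᶜ := isClosed_closure.isOpen_compl
  have hev : ∀ᶠ t : ℂ in 𝓝 0, ((X + t • Z, Y, v, w) : CMQ ι) ∈ (closure (CMR ι))ᶜ :=
    hcont.continuousAt.eventually (hopen.mem_nhds (by simpa using hn))
  refine hev.mono fun t ht => ?_
  rcases cm_nilp_or (X + t • Z) with ⟨c', hc'⟩ | ⟨p, r, h1, h2, h3, h4⟩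
  · refine cm_trace_pow (c := c' - c) ?_ ?_ k hk
    · rw [Matrix.trace_add, (Matrix.isNilpotent_trace_of_isNilpotent hc).eq_zero,
        Matrix.trace_smul, hZt]
      simp
    · convert hc' using 1
      rw [sub_smul]; abel
  · exact absurd (cm_two_eig ih (cm_shift hq hZ t) h1 h2 h3 h4) ht

lemma cm_coeff3 {X Z : Matrix ι ι ℂ} (h : ∀ᶠ t : ℂ in 𝓝 0, ((X + t • Z) ^ 3).trace = 0) :
    (X * X * Z).trace = 0 := by
  have h0 := cm_poly_zero (P := C (X * X * X).trace + C (3 * (X * X * Z).trace) * Polynomial.X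
    + C (3 * (X * Z * Z).trace) * Polynomial.X ^ 2 + C (Z * Z * Z).trace * Polynomial.X ^ 3)
    (h.mono fun t ht => by
      rw [← ht]
      have e1 : (X * Z * X).trace = (X * X * Z).trace := by
        rw [Matrix.trace_mul_comm, ← Matrix.mul_assoc]
      have e2 : (Z * X * X).trace = (X * X * Z).trace := by
        rw [Matrix.mul_assoc, Matrix.trace_mul_comm]
      have e3 : (Z * X * Z).trace = (X * Z * Z).trace := by
        rw [Matrix.mul_assoc, Matrix.trace_mul_comm]
      have e4 : (Z * Z * X).trace = (X * Z * Z).trace := by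
        rw [Matrix.trace_mul_comm, ← Matrix.mul_assoc]
      simp only [pow_succ, pow_zero, one_mul, Matrix.add_mul, Matrix.mul_add, Matrix.smul_mul,
        Matrix.mul_smul, Matrix.trace_add, Matrix.trace_smul, e1, e2, e3, e4, smul_eq_mul, smul_add,
        eval_add, eval_mul, eval_C, eval_X]
      ring)
  have := congrArg (fun P => coeff P 1) h0
  simp only [coeff_add, coeff_C_mul, coeff_X_pow, coeff_C, coeff_X, coeff_zero] at this
  norm_num at this
  exact this

lemma cm_coeff4 {X Z : Matrix ι ι ℂ} (h : ∀ᶠ t : ℂ in 𝓝 0, ((X + t • Z) ^ 4).trace = 0) :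
    4 * (X * X * Z * Z).trace + 2 * (X * Z * X * Z).trace = 0 := by
  set A := X * X with hA
  set B := X * Z + Z * X with hB
  set D := Z * Z with hD
  have hsq : ∀ t : ℂ, (X + t • Z) ^ 4 = (A + t • B + (t ^ 2) • D) * (A + t • B + (t ^ 2) • D) := by
    intro t
    have : (X + t • Z) * (X + t • Z) = A + t • B + (t ^ 2) • D := by
      simp only [hA, hB, hD, Matrix.add_mul, Matrix.mul_add, Matrix.smul_mul, Matrix.mul_smul,
        smul_add, smul_smul, pow_two]
      abel
    rw [← this]
    noncomm_ring
  have h0 := cm_poly_zero (P := C (A * A).trace + C (2 * (A * B).trace) * Polynomial.X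
    + C (2 * (A * D).trace + (B * B).trace) * Polynomial.X ^ 2
    + C (2 * (B * D).trace) * Polynomial.X ^ 3 + C (D * D).trace * Polynomial.X ^ 4)
    (h.mono fun t ht => by
      rw [← ht, hsq]
      simp only [Matrix.add_mul, Matrix.mul_add, Matrix.smul_mul,
        Matrix.mul_smul, Matrix.trace_add, Matrix.trace_smul, Matrix.trace_mul_comm B A,
        Matrix.trace_mul_comm D A, Matrix.trace_mul_comm D B, smul_eq_mul,
        eval_add, eval_mul, eval_C, eval_X, eval_pow]
      ring)
  have := congrArg (fun P => coeff P 2) h0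
  simp only [coeff_add, coeff_C_mul, coeff_X_pow, coeff_C, coeff_X, coeff_zero] at this
  norm_num at this
  rw [← this]
  have e1 : (Z * X * Z * X).trace = (X * Z * X * Z).trace := by
    rw [Matrix.mul_assoc, Matrix.mul_assoc, Matrix.trace_mul_comm]; simp only [Matrix.mul_assoc]
  have e2 : (X * Z * Z * X).trace = (X * X * Z * Z).trace := by
    rw [Matrix.trace_mul_comm]; simp only [Matrix.mul_assoc]
  have e3 : (Z * X * X * Z).trace = (X * X * Z * Z).trace := by
    rw [Matrix.mul_assoc, Matrix.mul_assoc, Matrix.trace_mul_comm]; simp only [Matrix.mul_assoc]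
  simp only [hA, hB, hD, Matrix.add_mul, Matrix.mul_add, Matrix.trace_add, ← Matrix.mul_assoc,
    e1, e2, e3]
  ring

lemma cm_nilp_case (ih : ∀ a < Fintype.card ι, CMS (Fin a) ⊆ closure (CMR (Fin a)))
    (hcard : 2 ≤ Fintype.card ι)
    {X Y : Matrix ι ι ℂ} {v w : ι → ℂ} (hq : (X, Y, v, w) ∈ CMS ι)
    {c : ℂ} (hc : IsNilpotent (X - c • 1)) : (X, Y, v, w) ∈ closure (CMR ι) := by
  by_contra hn
  have : Nonempty ι := Fintype.card_pos_iff.1 (by omega)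
  have hN : (Fintype.card ι : ℂ) ≠ 0 := by
    have : Fintype.card ι ≠ 0 := by omega
    exact_mod_cast this
  set X0 := X - c • (1 : Matrix ι ι ℂ) with hX0
  let c1 : ℂ := Y.trace / Fintype.card ι
  let Z1 : Matrix ι ι ℂ := Y - c1 • 1
  let c2 : ℂ := (Z1 * Z1).trace / Fintype.card ι
  let Z2 : Matrix ι ι ℂ := Z1 * Z1 - c2 • 1
  have k1 : Z1 * Y = Y * Z1 := by simp [Z1, Matrix.sub_mul, Matrix.mul_sub]
  have k2 : Z2 * Y = Y * Z2 := by
    simp only [Z2, Matrix.sub_mul, Matrix.mul_sub, Matrix.mul_assoc, k1]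
    rw [← Matrix.mul_assoc, k1]
    simp [Matrix.mul_assoc]
  have t1 : Z1.trace = 0 := by simp [Z1, c1, Matrix.trace_sub, Matrix.trace_smul, hN]
  have t2 : Z2.trace = 0 := by simp [Z2, c2, Matrix.trace_sub, Matrix.trace_smul, hN]
  have r1 := cm_coeff4 (cm_event ih hq hn hc k1 t1 4 (by norm_num))
  have r2 := cm_coeff3 (cm_event ih hq hn hc k2 t2 3 (by norm_num))
  have r3 : (X0 * X0).trace = 0 := by
    rw [← pow_two]
    exact (Matrix.isNilpotent_trace_of_isNilpotent (hc.pow_of_pos (by norm_num))).eq_zero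
  have r4 : (X0 * X0 * Z1 * Z1).trace = 0 := by
    rw [← hX0] at r2
    clear_value X0
    simp only [Z2, Matrix.mul_sub, Matrix.trace_sub, Matrix.mul_smul, Matrix.mul_one,
      Matrix.trace_smul] at r2
    rw [r3, smul_zero, sub_zero, ← Matrix.mul_assoc] at r2
    exact r2
  have hq' : (X0, Z1, v, w) ∈ CMS ι := by
    have h : X * Y - Y * X + 1 = vecMulVec v w := hq
    change X0 * Z1 - Z1 * X0 + 1 = vecMulVec v w
    rw [← h]
    simp only [hX0, Z1, Matrix.sub_mul, Matrix.mul_sub, Matrix.smul_mul, Matrix.mul_smul,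
      Matrix.one_mul, Matrix.mul_one, smul_sub, smul_smul, mul_comm c c1]
    abel
  have r5 := cm_tr2 hq'
  rw [← hX0, r4] at r1
  rw [r4] at r5
  have r6 : (X0 * Z1 * X0 * Z1).trace = 0 := by simpa using r1
  rw [r6] at r5
  have r7 : (Fintype.card ι : ℂ) * ((Fintype.card ι : ℂ) - 1) = 0 := by
    linear_combination -r5
  rcases mul_eq_zero.1 r7 with h | h
  · exact hN h
  · have : (Fintype.card ι : ℂ) = 1 := by linear_combination h
    have : Fintype.card ι = 1 := by exact_mod_cast this
    omega

end

lemma cm_dense (n : ℕ) : CMS (Fin n) ⊆ closure (CMR (Fin n)) := by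
  induction n using Nat.strong_induction_on with
  | _ n ih =>
    rintro ⟨X, Y, v, w⟩ hq
    have ih' : ∀ a < Fintype.card (Fin n), CMS (Fin a) ⊆ closure (CMR (Fin a)) := by
      simpa using ih
    by_cases hn : 2 ≤ n
    · have : Nonempty (Fin n) := ⟨⟨0, by omega⟩⟩
      rcases cm_nilp_or X with ⟨c', hc'⟩ | ⟨p, r, h1, h2, h3, h4⟩
      · exact cm_nilp_case ih' (by simpa using hn) hq hc'
      · exact cm_two_eig ih' hq h1 h2 h3 h4
    · apply subset_closure
      have hs : Subsingleton (Fin n) := by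
        rw [Fin.subsingleton_iff_le_one]; omega
      refine ⟨hq, 1, 1, fun i => X i i, by simp, by simp, Function.injective_of_subsingleton _, ?_⟩
      ext i j
      rw [Subsingleton.elim j i]
      simp

section
variable {ι : Type} [Fintype ι] [DecidableEq ι]

def cmOm (ι : Type) [Fintype ι] [DecidableEq ι] : Set (Matrix ι ι ℂ × (ι → ℂ) × (ι → ℂ)) :=
  {q | q.1.det ≠ 0 ∧ Function.Injective q.2.1}

lemma cmOm_preconn : IsPreconnected (cmOm ι) := by
  refine isPreconnected_of_forall_pair ?_
  rintro ⟨g0, x0, d0⟩ ⟨hg0, hx0⟩ ⟨g1, x1, d1⟩ ⟨hg1, hx1⟩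
  let ℓ : ℂ → Matrix ι ι ℂ × (ι → ℂ) × (ι → ℂ) := fun t =>
    (g0 + t • (g1 - g0), x0 + t • (x1 - x0), d0 + t • (d1 - d0))
  have hℓ : Continuous ℓ := by fun_prop
  let F : ℂ[X] := (Matrix.of fun i j => C (g0 i j) + Polynomial.X * C (g1 i j - g0 i j)).det *
    ∏ i, ∏ j ∈ Finset.univ.erase i,
      (C (x0 i - x0 j) + Polynomial.X * C ((x1 i - x0 i) - (x1 j - x0 j)))
  have hF : ∀ t, F.eval t ≠ 0 ↔ ℓ t ∈ cmOm ι := by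
    intro t
    have e1 : ((Matrix.of fun i j => C (g0 i j) + Polynomial.X * C (g1 i j - g0 i j)).det).eval t
        = (g0 + t • (g1 - g0)).det := by
      rw [← coe_evalRingHom, RingHom.map_det]
      congr 1
      ext i j
      simp
    simp only [F, eval_mul, e1, eval_prod, mul_ne_zero_iff, Finset.prod_ne_zero_iff, cmOm, ℓ,
      Set.mem_ofPred_eq]
    refine and_congr Iff.rfl ?_
    constructor
    · intro h i j hij
      by_contra hne
      apply h i (Finset.mem_univ _) j (by simp [Ne.symm hne])
      simp at hij ⊢
      linear_combination hij
    · intro h i _ j hj hh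
      apply Finset.ne_of_mem_erase hj
      apply h
      simp at hh ⊢
      linear_combination -hh
  have l0 : ℓ 0 = (g0, x0, d0) := by simp [ℓ]
  have l1 : ℓ 1 = (g1, x1, d1) := by simp [ℓ]
  have hF0 : F.eval 0 ≠ 0 := by rw [hF, l0]; exact ⟨hg0, hx0⟩
  have hF1 : F.eval 1 ≠ 0 := by rw [hF, l1]; exact ⟨hg1, hx1⟩
  have hFne : F ≠ 0 := by rintro h; simp [h] at hF0
  have hfin : {t : ℂ | F.IsRoot t}.Countable :=
    (Polynomial.finite_setOfPred_isRoot hFne).countable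
  have hpc := (hfin.isPathConnected_compl_of_one_lt_rank
    (by rw [Complex.rank_real_complex]; norm_num)).isConnected.isPreconnected
  refine ⟨ℓ '' {t : ℂ | F.IsRoot t}ᶜ, ?_, ⟨0, hF0, l0⟩, ⟨1, hF1, l1⟩, hpc.image _ hℓ.continuousOn⟩
  rintro _ ⟨t, ht, rfl⟩
  exact (hF t).1 ht

noncomputable def cmY (x d : ι → ℂ) : Matrix ι ι ℂ :=
  Matrix.of fun i j => if i = j then d i else (x i - x j)⁻¹

noncomputable def cmPsi (q : Matrix ι ι ℂ × (ι → ℂ) × (ι → ℂ)) : CMQ ι :=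
  (q.1 * diagonal q.2.1 * (q.1.det⁻¹ • q.1.adjugate),
   q.1 * cmY q.2.1 q.2.2 * (q.1.det⁻¹ • q.1.adjugate),
   q.1 *ᵥ (fun _ => 1), (fun _ => 1) ᵥ* (q.1.det⁻¹ • q.1.adjugate))

lemma cmPsi_cont : ContinuousOn (cmPsi (ι := ι)) (cmOm ι) := by
  rintro ⟨g, x, d⟩ ⟨hg, hx⟩
  apply ContinuousAt.continuousWithinAt
  have c1 : ContinuousAt (fun q : Matrix ι ι ℂ × (ι → ℂ) × (ι → ℂ) =>
      (q.1.det⁻¹ • q.1.adjugate)) (g, x, d) := by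
    have a1 : Continuous (fun q : Matrix ι ι ℂ × (ι → ℂ) × (ι → ℂ) => q.1.adjugate) :=
      Continuous.matrix_adjugate continuous_fst
    have a2 : Continuous (fun q : Matrix ι ι ℂ × (ι → ℂ) × (ι → ℂ) => q.1.det) :=
      Continuous.matrix_det continuous_fst
    have a3 : ContinuousAt (fun q : Matrix ι ι ℂ × (ι → ℂ) × (ι → ℂ) => q.1.det⁻¹) (g, x, d) :=
      a2.continuousAt.inv₀ hg
    exact a3.smul a1.continuousAt
  have c2 : ContinuousAt (fun q : Matrix ι ι ℂ × (ι → ℂ) × (ι → ℂ) => cmY q.2.1 q.2.2)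
      (g, x, d) := by
    refine continuousAt_pi.2 fun i => continuousAt_pi.2 fun j => ?_
    simp only [cmY, Matrix.of_apply]
    by_cases h : i = j
    · simp only [h, if_true]; fun_prop
    · simp only [h, if_false]
      refine ContinuousAt.inv₀ (by fun_prop) ?_
      simpa [sub_eq_zero] using fun hh => h (hx hh)
  have cm : Continuous fun q : Matrix ι ι ℂ × Matrix ι ι ℂ => q.1 * q.2 :=
    continuous_fst.matrix_mul continuous_snd
  have cf : ContinuousAt (fun q : Matrix ι ι ℂ × (ι → ℂ) × (ι → ℂ) => q.1) (g, x, d) :=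
    continuous_fst.continuousAt
  have cd : ContinuousAt (fun q : Matrix ι ι ℂ × (ι → ℂ) × (ι → ℂ) => diagonal q.2.1) (g, x, d) :=
    (Continuous.matrix_diagonal (by fun_prop)).continuousAt
  have cmul : ∀ {f f' : Matrix ι ι ℂ × (ι → ℂ) × (ι → ℂ) → Matrix ι ι ℂ},
      ContinuousAt f (g, x, d) → ContinuousAt f' (g, x, d) →
      ContinuousAt (fun q => f q * f' q) (g, x, d) := fun h h' =>
    cm.continuousAt.comp (h.prodMk h')
  refine ContinuousAt.prodMk (cmul (cmul cf cd) c1) (ContinuousAt.prodMk (cmul (cmul cf c2) c1)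
    (ContinuousAt.prodMk ?_ ?_))
  · exact (continuous_fst.matrix_mulVec continuous_const).continuousAt
  · exact (Continuous.matrix_vecMul continuous_const continuous_id).continuousAt.comp c1

lemma cm_inv {g h : Matrix ι ι ℂ} (hgh : g * h = 1) : g.det⁻¹ • g.adjugate = h := by
  have := Matrix.inv_eq_right_inv hgh
  rw [Matrix.inv_def, Ring.inverse_eq_inv'] at this
  exact this

lemma cmPsi_image : cmPsi '' (cmOm ι) = CMR ι := by
  apply Set.Subset.antisymm
  · rintro _ ⟨⟨g, x, d⟩, ⟨hg, hx⟩, rfl⟩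
    have hg' : g * (g.det⁻¹ • g.adjugate) = 1 := by
      rw [Matrix.mul_smul, Matrix.mul_adjugate, smul_smul, inv_mul_cancel₀ hg, one_smul]
    have hg'' : (g.det⁻¹ • g.adjugate) * g = 1 := by
      rw [Matrix.smul_mul, Matrix.adjugate_mul, smul_smul, inv_mul_cancel₀ hg, one_smul]
    refine ⟨cm_conj (X := diagonal x) (Y := cmY x d) hg' hg'' ?_, g, _, x, hg', hg'', hx, rfl⟩
    change diagonal x * cmY x d - cmY x d * diagonal x + 1 = vecMulVec (fun _ => 1) (fun _ => 1)
    ext i j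
    simp only [Matrix.add_apply, Matrix.sub_apply, diagonal_mul, mul_diagonal, cmY, Matrix.of_apply,
      vecMulVec_apply, Matrix.one_apply]
    by_cases h : i = j
    · subst h; simp; ring
    · have : x i - x j ≠ 0 := sub_ne_zero.2 fun hh => h (hx hh)
      simp only [h, if_false]
      field_simp
      ring
  · rintro ⟨X, Y, v, w⟩ ⟨hq, g, h, x, hgh, hhg, hx, hX⟩
    have hq1 := cm_conj hhg hgh hq
    have e0 : h * X * g = diagonal x := by
      change X = _ at hX
      rw [hX]
      calc _ = (h * g) * diagonal x * (h * g) := by simp only [Matrix.mul_assoc]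
        _ = _ := by rw [hhg]; simp
    rw [e0] at hq1
    have hX' : X = g * diagonal x * h := hX
    set Y1 := h * Y * g with hY1
    set v1 := h *ᵥ v with hv1
    set w1 := w ᵥ* g with hw1
    have hrel : ∀ i j, (x i - x j) * Y1 i j + (1 : Matrix ι ι ℂ) i j = v1 i * w1 j := fun i j => by
      have h1 : diagonal x * Y1 - Y1 * diagonal x + 1 = vecMulVec v1 w1 := hq1
      have := congrFun (congrFun h1 i) j
      simp only [Matrix.add_apply, Matrix.sub_apply, diagonal_mul, mul_diagonal,
        vecMulVec_apply] at this
      rw [← this]; ring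
    have hvw : ∀ i, v1 i * w1 i = 1 := fun i => by rw [← hrel i i]; simp
    have hinv : (g * diagonal v1) * (diagonal w1 * h) = 1 := by
      calc _ = g * (diagonal v1 * diagonal w1) * h := by simp only [Matrix.mul_assoc]
        _ = 1 := by rw [diagonal_mul_diagonal]; simp [hvw, hgh]
    have hY0 : cmY x (fun i => Y1 i i) = diagonal w1 * Y1 * diagonal v1 := by
      ext i j
      simp only [cmY, Matrix.of_apply, diagonal_mul, mul_diagonal]
      by_cases hij : i = j
      · subst hij
        simp only [if_true]
        linear_combination (- Y1 i i) * hvw i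
      · simp only [hij, if_false]
        have h0 : x i - x j ≠ 0 := sub_ne_zero.2 fun hh => hij (hx hh)
        have h1 := hrel i j
        simp only [Matrix.one_apply, hij, if_false, add_zero] at h1
        apply inv_eq_of_mul_eq_one_right
        linear_combination (w1 i * v1 j) * h1 + (v1 j * w1 j) * hvw i + hvw j
    refine ⟨(g * diagonal v1, x, fun i => Y1 i i), ⟨?_, hx⟩, ?_⟩
    · intro hdet
      have := congrArg Matrix.det hinv
      rw [Matrix.det_mul, hdet] at this
      simp at this
    · simp only [cmPsi, cm_inv hinv]
      have hd1 : diagonal v1 * diagonal w1 = (1 : Matrix ι ι ℂ) := by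
        rw [diagonal_mul_diagonal]; simp [hvw]
      refine Prod.ext ?_ (Prod.ext ?_ (Prod.ext ?_ ?_))
      · change g * diagonal v1 * diagonal x * (diagonal w1 * h) = X
        rw [hX']
        calc _ = g * (diagonal v1 * diagonal x * diagonal w1) * h := by simp only [Matrix.mul_assoc]
          _ = g * diagonal x * h := by
            congr 2
            rw [diagonal_mul_diagonal, diagonal_mul_diagonal]
            congr 1
            ext i
            linear_combination x i * hvw i
      · change g * diagonal v1 * cmY x (fun i => Y1 i i) * (diagonal w1 * h) = Y
        rw [hY0]
        calc _ = g * (diagonal v1 * diagonal w1) * Y1 * (diagonal v1 * diagonal w1) * h := by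
              simp only [Matrix.mul_assoc]
          _ = (g * h) * Y * (g * h) := by
              rw [hd1, hY1]; simp only [Matrix.mul_assoc, Matrix.one_mul]
          _ = Y := by rw [hgh]; simp
      · change (g * diagonal v1) *ᵥ (fun _ => 1) = v
        have : diagonal v1 *ᵥ (fun _ => (1 : ℂ)) = v1 := by
          ext i; simp [mulVec_diagonal]
        rw [← Matrix.mulVec_mulVec, this, hv1, Matrix.mulVec_mulVec, hgh, Matrix.one_mulVec]
      · change (fun _ => 1) ᵥ* (diagonal w1 * h) = w
        have : (fun _ => (1 : ℂ)) ᵥ* diagonal w1 = w1 := by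
          ext i; simp [vecMul_diagonal]
        rw [← Matrix.vecMul_vecMul, this, hw1, Matrix.vecMul_vecMul, hgh, Matrix.vecMul_one]

end

lemma cm_conn (n : ℕ) : IsConnected (CMS (Fin n)) := by
  have h1 : IsConnected (CMR (Fin n)) := by
    rw [← cmPsi_image]
    refine IsConnected.image ⟨?_, cmOm_preconn⟩ _ cmPsi_cont
    refine ⟨(1, fun i => (i : ℕ), 0), by simp, fun i j h => ?_⟩
    exact Fin.ext (by simpa using h)
  exact h1.subset_closure (fun q hq => hq.1) (cm_dense n)

lemma cm_rank_one {ι : Type} [Fintype ι] [DecidableEq ι] {M : Matrix ι ι ℂ} (h : M.rank = 1) :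
    ∃ v w, M = vecMulVec v w := by
  obtain ⟨v, hv⟩ := finrank_le_one_iff.1 (show Module.finrank ℂ (LinearMap.range M.mulVecLin) ≤ 1
    from h.le)
  choose c hc using fun j : ι => hv ⟨M *ᵥ Pi.single j 1, ⟨Pi.single j 1, rfl⟩⟩
  refine ⟨v, c, ?_⟩
  ext i j
  have := congrFun (congrArg Subtype.val (hc j)) i
  simp [vecMulVec_apply] at this ⊢
  rw [← this, mul_comm]

/-- **G. Wilson: connectedness of the Calogero–Moser space.** For every `n ≥ 1`, the set of
pairs of `n × n` complex matrices `(X, Y)` with `rank(XY − YX + I) = 1` is nonempty and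
connected (in the standard topology on `Mat_n(ℂ) × Mat_n(ℂ)`).  Equivalently, the
Calogero–Moser space `C_n`, the quotient of this set by simultaneous conjugation, is
connected. -/
theorem calogero_moser_connected (n : ℕ) (hn : 1 ≤ n) :
    IsConnected {p : Matrix (Fin n) (Fin n) ℂ × Matrix (Fin n) (Fin n) ℂ |
      Matrix.rank (p.1 * p.2 - p.2 * p.1 + 1) = 1} := by
  have h := (cm_conn n).image (fun q : CMQ (Fin n) => (q.1, q.2.1)) (by fun_prop)
  convert h using 1
  ext ⟨X, Y⟩
  constructor
  · intro hr
    obtain ⟨v, w, hvw⟩ := cm_rank_one hr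
    exact ⟨(X, Y, v, w), hvw, rfl⟩
  · rintro ⟨⟨X', Y', v, w⟩, hq, he⟩
    obtain ⟨rfl, rfl⟩ := Prod.mk.inj he
    have hq' : X' * Y' - Y' * X' + 1 = vecMulVec v w := hq
    change Matrix.rank (X' * Y' - Y' * X' + 1) = 1
    refine le_antisymm ?_ ?_
    · rw [hq']; exact Matrix.rank_vecMulVec_le _ _
    · rw [Nat.one_le_iff_ne_zero]
      intro h0
      have hz : X' * Y' - Y' * X' + 1 = 0 := by
        have := LinearMap.range_eq_bot.1 (Submodule.finrank_eq_zero.1 h0)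
        exact Matrix.toLin'.map_eq_zero_iff.1 this
      have ht := congrArg Matrix.trace hz
      rw [Matrix.trace_add, Matrix.trace_sub, Matrix.trace_mul_comm X' Y', Matrix.trace_one] at ht
      simp at ht
      omega
end
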